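/- arXiv:1411.3517 — 4 statements merged into one kernel-verified Lean document; each statement's English description precedes it below -/
import Mathlib

section
/- There exists a universal constant C > 0 such that for every μ ∈ (0,1), setting δ := μ^C and k := ⌈C·log(1/μ)⌉, the following holds for every R ≥ 1: for all functions A, B : F₃^R → [0,1], if E[A] > μ, E[B] > μ, and E[A(f)·B(f')] ≤ δ — where f is uniform on F₃^R and, independently for each coordinate i, f'_i is uniform on F₃ ∖ {f_i} — then there exists x ∈ {1,…,R} such that Inf_x^{≤k}(A) ≥ δ and Inf_x^{≤k}(B) ≥ δ. -/
open scoped BigOperators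

abbrev F3 := ZMod 3

noncomputable def ω : ℂ := Complex.exp (2 * (Real.pi : ℂ) * Complex.I / 3)

/-- The character `χ_α(f) = ω^{Σ_i α_i f_i}` on `F₃^R`. -/
noncomputable def chiV {R : ℕ} (α f : Fin R → F3) : ℂ := ω ^ (∑ i, α i * f i).val

/-- Support size `|α|`. -/
def suppV {R : ℕ} (α : Fin R → F3) : ℕ := (Finset.univ.filter fun i => α i ≠ 0).card

/-- Fourier coefficient `Â(α) = E_f[A(f)·conj(χ_α(f))]`. -/
noncomputable def fourierV {R : ℕ} (A : (Fin R → F3) → ℂ) (α : Fin R → F3) : ℂ :=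
  (∑ f, A f * (starRingEnd ℂ) (chiV α f)) / (3 : ℂ) ^ R

/-- Expectation over the uniform distribution on `F₃^R`. -/
noncomputable def expV {R : ℕ} (A : (Fin R → F3) → ℝ) : ℝ := (∑ f, A f) / 3 ^ R

/-- Degree-`k` influence `Inf_x^{≤k}(A)`. -/
noncomputable def infV {R : ℕ} (k : ℕ) (A : (Fin R → F3) → ℝ) (x : Fin R) : ℝ :=
  ∑ α ∈ Finset.univ.filter (fun α : Fin R → F3 => α x ≠ 0 ∧ suppV α ≤ k),
    ‖fourierV (fun f => (A f : ℂ)) α‖ ^ 2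

/-! Correlating `A` with a uniform vector that differs in every coordinate amounts to correlating
it with the noise operator with parameter `-1 / (q - 1)`, where `q` is the size of the alphabet.
If no coordinate is influential for both `A` and `B`, split the coordinates into a set `F` of small
influence for `A` and its complement, of small influence for `B`, and factor the parameter as
`(9 / 10) ^ 2 * ρ` with `0 ≤ ρ`, the sign being shared out: it flips the coordinates in `F` of `A`
and those outside `F` of `B`, each after smoothing by `9 / 10`. Flipping the sign of the
low-influence coordinates one at a time moves the smoothed function little in expectation (Lindeberg
replacement with the Bonami inequality), so that it stays close in `L²` to functions with values in
`[0, 1]` and the same mean. Reverse hypercontractivity for the positive parameter `ρ` then bounds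
the correlation from below by a power of `μ`. -/

namespace MajorityStablest

noncomputable section

open Finset

section EfronStein

variable {ι α : Type*} [Fintype ι] [DecidableEq ι] [Fintype α]

theorem expect_pi_prod (g : ι → α → ℝ) : 𝔼 x : ι → α, ∏ i, g i (x i) = ∏ i, 𝔼 v, g i v := by
  simp only [Fintype.expect_eq_sum_div_card, prod_div_distrib, prod_univ_sum,
    Fintype.piFinset_univ, prod_const, Fintype.card_fun, Nat.cast_pow, Finset.card_univ]

variable [DecidableEq α]

/-- The kernel, with respect to the uniform measure, of the projection of functions on the
alphabet `α` onto the functions of mean zero. -/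
def centeredKernel (u v : α) : ℝ := if u = v then (Fintype.card α : ℝ) - 1 else -1

theorem centeredKernel_comm (u v : α) : centeredKernel u v = centeredKernel v u := by
  simp only [centeredKernel, eq_comm]

theorem neg_one_le_centeredKernel (u v : α) : -1 ≤ centeredKernel u v := by
  unfold centeredKernel
  split_ifs
  · linarith [(Fintype.card α).cast_nonneg (α := ℝ)]
  · exact le_rfl

theorem centeredKernel_le [Nonempty α] (u v : α) : centeredKernel u v ≤ Fintype.card α - 1 := by
  unfold centeredKernel
  split_ifs
  · exact le_rfl
  · linarith [(Fintype.card α).cast_nonneg (α := ℝ)]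

section Nonempty

variable [Nonempty α]

theorem expect_centeredKernel_mul (u : α) (f : α → ℝ) :
    𝔼 v, centeredKernel u v * f v = f u - 𝔼 v, f v := by
  have hker : ∀ v, centeredKernel u v * f v
      = (if u = v then (Fintype.card α : ℝ) * f v else 0) - f v := fun v ↦ by
    unfold centeredKernel; split_ifs <;> ring
  have hcard : (Fintype.card α : ℝ) ≠ 0 := Nat.cast_ne_zero.2 Fintype.card_ne_zero
  simp only [hker, expect_sub_distrib]
  simp only [Fintype.expect_eq_sum_div_card, sum_ite_eq, mem_univ, if_true]
  rw [mul_div_cancel_left₀ _ hcard]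

theorem expect_centeredKernel (u : α) : 𝔼 v, centeredKernel u v = 0 := by
  simpa using expect_centeredKernel_mul u fun _ ↦ 1

theorem expect_centeredKernel_mul_centeredKernel (u w : α) :
    𝔼 v, centeredKernel u v * centeredKernel v w = centeredKernel u w := by
  simp only [expect_centeredKernel_mul, centeredKernel_comm _ w, expect_centeredKernel, sub_zero]

end Nonempty

/-- The projection onto the `S`-component of the Efron–Stein decomposition of functions on the
product space `ι → α`: the functions of the coordinates in `S` that average to zero over each of
them. -/
def efronStein (S : Finset ι) : Module.End ℝ ((ι → α) → ℝ) where
  toFun f x := 𝔼 y, (∏ i ∈ S, centeredKernel (x i) (y i)) * f y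
  map_add' f g := by ext x; simp only [Pi.add_apply, mul_add, expect_add_distrib]
  map_smul' c f := by
    ext x; simp only [Pi.smul_apply, smul_eq_mul, RingHom.id_apply, mul_expect, mul_left_comm]

theorem efronStein_apply (S : Finset ι) (f : (ι → α) → ℝ) (x : ι → α) :
    efronStein S f x = 𝔼 y, (∏ i ∈ S, centeredKernel (x i) (y i)) * f y := rfl

theorem efronStein_empty (f : (ι → α) → ℝ) (x : ι → α) : efronStein ∅ f x = 𝔼 y, f y := by
  simp only [efronStein_apply, prod_empty, one_mul]

theorem expect_mul_efronStein (S : Finset ι) (f g : (ι → α) → ℝ) :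
    𝔼 x, f x * efronStein S g x = 𝔼 x, efronStein S f x * g x := by
  simp only [efronStein_apply, mul_expect, expect_mul]
  rw [expect_comm]
  refine expect_congr rfl fun x _ ↦ expect_congr rfl fun y _ ↦ ?_
  simp only [centeredKernel_comm (y _)]
  ring

theorem dependsOn_efronStein (S : Finset ι) (f : (ι → α) → ℝ) :
    DependsOn (efronStein S f) (S : Set ι) := fun x y hxy ↦ by
  simp only [efronStein_apply]
  refine expect_congr rfl fun z _ ↦ ?_
  rw [prod_congr rfl fun i hi ↦ by rw [hxy i (mem_coe.2 hi)]]

/-- The squared `L²` norm of the `S`-component of `f`. -/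
def weight (S : Finset ι) (f : (ι → α) → ℝ) : ℝ := 𝔼 x, efronStein S f x ^ 2

theorem weight_nonneg (S : Finset ι) (f : (ι → α) → ℝ) : 0 ≤ weight S f :=
  expect_nonneg fun _ _ ↦ sq_nonneg _

/-- The Efron–Stein multiplier with symbol `m`, acting on the `S`-component of the Efron–Stein
decomposition as multiplication by `m S`. -/
def multiplier (m : Finset ι → ℝ) : Module.End ℝ ((ι → α) → ℝ) := ∑ S, m S • efronStein S

theorem multiplier_apply (m : Finset ι → ℝ) (f : (ι → α) → ℝ) (x : ι → α) :
    multiplier m f x = ∑ S, m S * efronStein S f x := by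
  simp [multiplier]

theorem multiplier_prod_apply (c : ι → ℝ) (f : (ι → α) → ℝ) (x : ι → α) :
    multiplier (fun S ↦ ∏ i ∈ S, c i) f x
      = 𝔼 y, (∏ i, (1 + c i * centeredKernel (x i) (y i))) * f y := by
  simp only [multiplier_apply, efronStein_apply, mul_expect, prod_one_add, prod_mul_distrib,
    sum_mul, powerset_univ, mul_assoc, expect_sum_comm]

theorem multiplier_sub (m l : Finset ι → ℝ) (f : (ι → α) → ℝ) :
    multiplier (fun S ↦ m S - l S) f = multiplier m f - multiplier l f := by
  ext x
  simp only [Pi.sub_apply, multiplier_apply, sub_mul, sum_sub_distrib]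

theorem multiplier_const_mul (c : ℝ) (m : Finset ι → ℝ) (f : (ι → α) → ℝ) :
    multiplier (fun S ↦ c * m S) f = c • multiplier m f := by
  ext x
  simp only [Pi.smul_apply, smul_eq_mul, multiplier_apply, mul_sum, mul_assoc]

theorem expect_mul_multiplier (m : Finset ι → ℝ) (f g : (ι → α) → ℝ) :
    𝔼 x, f x * multiplier m g x = 𝔼 x, multiplier m f x * g x := by
  simp only [multiplier_apply, mul_sum, sum_mul, expect_sum_comm, mul_left_comm (f _), mul_assoc,
    ← mul_expect, expect_mul_efronStein]

variable [Nonempty α]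

theorem expect_prod_centeredKernel_mul (S T : Finset ι) (x z : ι → α) :
    𝔼 y : ι → α, (∏ i ∈ S, centeredKernel (x i) (y i)) * ∏ i ∈ T, centeredKernel (y i) (z i)
      = if S = T then ∏ i ∈ S, centeredKernel (x i) (z i) else 0 := by
  let g (i : ι) (v : α) : ℝ := (if i ∈ S then centeredKernel (x i) v else 1) *
    (if i ∈ T then centeredKernel v (z i) else 1)
  have hg : ∀ i, 𝔼 v, g i v
      = if (i ∈ S ↔ i ∈ T) then (if i ∈ S then centeredKernel (x i) (z i) else 1) else 0 :=
    fun i ↦ by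
      have hzero : 𝔼 v, centeredKernel v (z i) = 0 := by
        simp only [centeredKernel_comm _ (z i), expect_centeredKernel]
      by_cases hS : i ∈ S <;> by_cases hT : i ∈ T <;>
        simp [g, hS, hT, expect_centeredKernel_mul_centeredKernel, expect_centeredKernel, hzero]
  calc _ = 𝔼 y : ι → α, ∏ i, g i (y i) := by
        simp only [g, prod_mul_distrib, Fintype.prod_ite_mem]
    _ = ∏ i, 𝔼 v, g i v := expect_pi_prod g
    _ = _ := by
        simp only [hg, prod_ite_zero, Finset.ext_iff, mem_univ, true_imp_iff, Fintype.prod_ite_mem]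

theorem efronStein_efronStein (S T : Finset ι) (f : (ι → α) → ℝ) :
    efronStein S (efronStein T f) = if S = T then efronStein S f else 0 := by
  ext x
  simp only [efronStein_apply, mul_expect]
  rw [expect_comm]
  simp only [← mul_assoc, ← expect_mul, expect_prod_centeredKernel_mul]
  split_ifs with h
  · rfl
  · simp

theorem efronStein_multiplier (S : Finset ι) (m : Finset ι → ℝ) (f : (ι → α) → ℝ) :
    efronStein S (multiplier m f) = m S • efronStein S f := by
  simp [multiplier, efronStein_efronStein]

theorem multiplier_multiplier (m l : Finset ι → ℝ) (f : (ι → α) → ℝ) :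
    multiplier m (multiplier l f) = multiplier (fun S ↦ m S * l S) f := by
  ext x
  simp only [multiplier_apply m, efronStein_multiplier, Pi.smul_apply, smul_eq_mul,
    multiplier_apply (fun S ↦ m S * l S), mul_assoc]

theorem multiplier_one : multiplier (α := α) (fun _ : Finset ι ↦ 1) = 1 := by
  refine LinearMap.ext fun f ↦ funext fun x ↦ ?_
  have hone : ∀ u v : α, 1 + 1 * centeredKernel u v = if u = v then (Fintype.card α : ℝ) else 0 :=
    fun u v ↦ by unfold centeredKernel; split_ifs <;> ring
  have hker : ∀ y : ι → α, ∏ i, (1 + 1 * centeredKernel (x i) (y i))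
      = if x = y then (Fintype.card (ι → α) : ℝ) else 0 := fun y ↦ by
    simp only [hone, prod_ite_zero, funext_iff, mem_univ, true_imp_iff, prod_const,
      Finset.card_univ, Fintype.card_fun, Nat.cast_pow]
  have hprod := multiplier_prod_apply (fun _ ↦ 1) f x
  simp only [prod_const_one, hker, ite_mul, zero_mul] at hprod
  rw [hprod, Fintype.expect_eq_sum_div_card, sum_ite_eq, if_pos (mem_univ x),
    mul_div_cancel_left₀ _ (Nat.cast_ne_zero.2 Fintype.card_ne_zero), Module.End.one_apply]

theorem sum_efronStein (f : (ι → α) → ℝ) : ∑ S, efronStein S f = f := by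
  simpa [multiplier] using LinearMap.congr_fun multiplier_one f

theorem expect_multiplier (m : Finset ι → ℝ) (f : (ι → α) → ℝ) :
    𝔼 x, multiplier m f x = m ∅ * 𝔼 x, f x := by
  have x : ι → α := Classical.arbitrary _
  rw [← efronStein_empty _ x, ← efronStein_empty _ x, efronStein_multiplier, Pi.smul_apply,
    smul_eq_mul]

theorem weight_multiplier (S : Finset ι) (m : Finset ι → ℝ) (f : (ι → α) → ℝ) :
    weight S (multiplier m f) = m S ^ 2 * weight S f := by
  simp only [weight, efronStein_multiplier, Pi.smul_apply, smul_eq_mul, mul_pow, mul_expect]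

theorem expect_mul_efronStein_self (S : Finset ι) (f : (ι → α) → ℝ) :
    𝔼 x, f x * efronStein S f x = weight S f := by
  have hidem : efronStein S (efronStein S f) = efronStein S f := by
    rw [efronStein_efronStein, if_pos rfl]
  calc 𝔼 x, f x * efronStein S f x = 𝔼 x, f x * efronStein S (efronStein S f) x := by rw [hidem]
    _ = weight S f := by simp only [expect_mul_efronStein, weight, sq]

theorem expect_sq_eq_sum_weight (f : (ι → α) → ℝ) : 𝔼 x, f x ^ 2 = ∑ S, weight S f := by
  have hsum : ∀ x, ∑ S, efronStein S f x = f x := fun x ↦ by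
    rw [← Finset.sum_apply, sum_efronStein]
  simp only [← expect_mul_efronStein_self, ← expect_sum_comm, ← mul_sum, hsum, sq]

theorem expect_multiplier_sq (m : Finset ι → ℝ) (f : (ι → α) → ℝ) :
    𝔼 x, multiplier m f x ^ 2 = ∑ S, m S ^ 2 * weight S f := by
  simp only [expect_sq_eq_sum_weight, weight_multiplier]

theorem expect_multiplier_sq_le {m : Finset ι → ℝ} {c : ℝ} (hm : ∀ S, m S ^ 2 ≤ c)
    (f : (ι → α) → ℝ) : 𝔼 x, multiplier m f x ^ 2 ≤ c * 𝔼 x, f x ^ 2 := by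
  rw [expect_multiplier_sq, expect_sq_eq_sum_weight, mul_sum]
  exact sum_le_sum fun S _ ↦ mul_le_mul_of_nonneg_right (hm S) (weight_nonneg S f)

end EfronStein

section CoordAvg

variable {ι α : Type*} [DecidableEq ι]

theorem dependsOn_comp_update {f : (ι → α) → ℝ} {S : Set ι} (hf : DependsOn f S) (i : ι) (v : α) :
    DependsOn (fun x ↦ f (Function.update x i v)) (S \ {i}) := fun x y hxy ↦ by
  refine hf fun j hj ↦ ?_
  obtain rfl | hji := eq_or_ne j i
  · simp only [Function.update_self]
  · simpa only [Function.update_of_ne hji] using hxy j ⟨hj, hji⟩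

theorem apply_update_of_dependsOn {f : (ι → α) → ℝ} {S : Set ι} {i : ι} (hf : DependsOn f S)
    (hi : i ∉ S) (x : ι → α) (v : α) : f (Function.update x i v) = f x :=
  hf fun _ hj ↦ Function.update_of_ne (ne_of_mem_of_not_mem hj hi) v x

variable [Fintype α]

/-- Averaging over the `i`-th coordinate. -/
def coordAvg (i : ι) : Module.End ℝ ((ι → α) → ℝ) where
  toFun f x := 𝔼 v, f (Function.update x i v)
  map_add' f g := by ext x; simp only [Pi.add_apply, expect_add_distrib]
  map_smul' c f := by ext x; simp only [Pi.smul_apply, smul_eq_mul, RingHom.id_apply, mul_expect]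

theorem coordAvg_apply (i : ι) (f : (ι → α) → ℝ) (x : ι → α) :
    coordAvg i f x = 𝔼 v, f (Function.update x i v) := rfl

theorem coordAvg_update (i : ι) (f : (ι → α) → ℝ) (x : ι → α) (v : α) :
    coordAvg i f (Function.update x i v) = coordAvg i f x := by
  simp only [coordAvg_apply, Function.update_idem]

theorem dependsOn_coordAvg {f : (ι → α) → ℝ} {S : Set ι} (hf : DependsOn f S) (i : ι) :
    DependsOn (coordAvg i f) (S \ {i}) := fun _ _ hxy ↦
  expect_congr rfl fun v _ ↦ dependsOn_comp_update hf i v hxy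

variable [Nonempty α]

theorem coordAvg_eq_self {f : (ι → α) → ℝ} {S : Set ι} {i : ι} (hf : DependsOn f S)
    (hi : i ∉ S) : coordAvg i f = f := by
  ext x
  simp only [coordAvg_apply, apply_update_of_dependsOn hf hi, Fintype.expect_const]

end CoordAvg

section Influence

variable {ι α : Type*} [Fintype ι] [DecidableEq ι] [Fintype α] [DecidableEq α]

/-- The degree-`k` influence of the coordinate `i` on `f`. -/
def influence (k : ℕ) (f : (ι → α) → ℝ) (i : ι) : ℝ := ∑ S with i ∈ S ∧ #S ≤ k, weight S f

theorem influence_nonneg (k : ℕ) (f : (ι → α) → ℝ) (i : ι) : 0 ≤ influence k f i :=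
  sum_nonneg fun S _ ↦ weight_nonneg S f

theorem influence_mono {k l : ℕ} (hkl : k ≤ l) (f : (ι → α) → ℝ) (i : ι) :
    influence k f i ≤ influence l f i :=
  sum_le_sum_of_subset_of_nonneg
    (monotone_filter_right _ fun _ _ hS ↦ ⟨hS.1, hS.2.trans hkl⟩) fun S _ _ ↦ weight_nonneg S f

variable [Nonempty α]

theorem coordAvg_efronStein (i : ι) (S : Finset ι) (f : (ι → α) → ℝ) :
    coordAvg i (efronStein S f) = if i ∈ S then 0 else efronStein S f := by
  split_ifs with hi
  · ext x
    have hfactor : ∀ (v : α) (y : ι → α), ∏ j ∈ S, centeredKernel (Function.update x i v j) (y j)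
        = centeredKernel (y i) v * ∏ j ∈ S.erase i, centeredKernel (x j) (y j) := fun v y ↦ by
      rw [← mul_prod_erase S _ hi, Function.update_self, centeredKernel_comm]
      congr 1
      exact prod_congr rfl fun j hj ↦ by rw [Function.update_of_ne (ne_of_mem_erase hj)]
    simp only [coordAvg_apply, efronStein_apply, hfactor]
    rw [expect_comm]
    simp only [← expect_mul, expect_centeredKernel, zero_mul, expect_const_zero, Pi.zero_apply]
  · exact coordAvg_eq_self (dependsOn_efronStein S f) (by simpa using hi)

theorem coordAvg_eq_multiplier (i : ι) (f : (ι → α) → ℝ) :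
    coordAvg i f = multiplier (fun S ↦ if i ∈ S then 0 else 1) f := by
  conv_lhs => rw [← sum_efronStein f]
  ext x
  simp only [map_sum, coordAvg_efronStein, Finset.sum_apply, multiplier_apply]
  exact sum_congr rfl fun S _ ↦ by split_ifs <;> simp

theorem sub_coordAvg_eq_multiplier (i : ι) (f : (ι → α) → ℝ) :
    f - coordAvg i f = multiplier (fun S ↦ if i ∈ S then 1 else 0) f := by
  have hone : f = multiplier (fun _ ↦ 1) f := by rw [multiplier_one, Module.End.one_apply]
  conv_lhs => rw [coordAvg_eq_multiplier, hone]
  rw [multiplier_multiplier, ← multiplier_sub]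
  congr 2
  ext S
  split_ifs <;> norm_num

omit [DecidableEq α] in
theorem expect_coordAvg (i : ι) (f : (ι → α) → ℝ) : 𝔼 x, coordAvg i f x = 𝔼 x, f x := by
  classical
  simp only [coordAvg_eq_multiplier, expect_multiplier, notMem_empty, if_false, one_mul]

omit [DecidableEq α] in
theorem expect_mul_coordAvg {φ : (ι → α) → ℝ} {i : ι}
    (hφ : ∀ x v, φ (Function.update x i v) = φ x) (f : (ι → α) → ℝ) :
    𝔼 x, φ x * coordAvg i f x = 𝔼 x, φ x * f x := by
  rw [← expect_coordAvg i fun x ↦ φ x * f x]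
  simp only [coordAvg_apply, hφ, mul_expect]

theorem sum_influence_le (k : ℕ) (f : (ι → α) → ℝ) :
    ∑ i, influence k f i ≤ k * 𝔼 x, f x ^ 2 := by
  have hswap : ∑ i, influence k f i = ∑ S : Finset ι with #S ≤ k, #S * weight S f := by
    simp only [influence, sum_filter, ite_and]
    rw [sum_comm]
    refine sum_congr rfl fun S _ ↦ ?_
    rw [← sum_filter]
    simp
  rw [hswap, expect_sq_eq_sum_weight, mul_sum]
  calc _ ≤ ∑ S : Finset ι with #S ≤ k, (k : ℝ) * weight S f := sum_le_sum fun S hS ↦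
        mul_le_mul_of_nonneg_right (Nat.cast_le.2 (mem_filter.1 hS).2) (weight_nonneg S f)
    _ ≤ _ := sum_le_sum_of_subset_of_nonneg (filter_subset _ _) fun S _ _ ↦
        mul_nonneg k.cast_nonneg (weight_nonneg S f)

theorem influence_multiplier_le {m : Finset ι → ℝ} (hm : ∀ S, m S ^ 2 ≤ 1) (k : ℕ)
    (f : (ι → α) → ℝ) (i : ι) : influence k (multiplier m f) i ≤ influence k f i :=
  sum_le_sum fun S _ ↦ by
    rw [weight_multiplier]
    exact mul_le_of_le_one_left (weight_nonneg S f) (hm S)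

theorem expect_sq_sub_coordAvg {k : ℕ} {f : (ι → α) → ℝ}
    (hf : ∀ S, k < #S → efronStein S f = 0) (i : ι) :
    𝔼 x, (f x - coordAvg i f x) ^ 2 = influence k f i := by
  simp only [← Pi.sub_apply f, sub_coordAvg_eq_multiplier, expect_multiplier_sq, influence,
    sum_filter]
  refine sum_congr rfl fun S _ ↦ ?_
  by_cases hi : i ∈ S <;> by_cases hk : #S ≤ k <;> simp [hi, hk]
  simp [weight, hf S (not_le.1 hk)]

end Influence

section Bonami

section Slices

variable {Ω α : Type*} [Fintype Ω] [Fintype α] [Nonempty α]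

theorem expect_add_sq (a : ℝ) {b : α → ℝ} (hb : 𝔼 v, b v = 0) :
    𝔼 v, (a + b v) ^ 2 = a ^ 2 + 𝔼 v, b v ^ 2 := by
  simp only [add_sq, expect_add_distrib, Fintype.expect_const, ← mul_expect, hb, mul_zero, add_zero]

theorem expect_add_pow_four_le (a : ℝ) {b : α → ℝ} (hb : 𝔼 v, b v = 0) :
    𝔼 v, (a + b v) ^ 4 ≤ a ^ 4 + 8 * a ^ 2 * 𝔼 v, b v ^ 2 + 3 * 𝔼 v, b v ^ 4 := by
  have hpoint : ∀ v, (a + b v) ^ 4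
      ≤ a ^ 4 + 4 * a ^ 3 * b v + 8 * a ^ 2 * b v ^ 2 + 3 * b v ^ 4 := fun v ↦ by
    nlinarith [sq_nonneg (a * b v - b v ^ 2)]
  calc 𝔼 v, (a + b v) ^ 4
      ≤ 𝔼 v, (a ^ 4 + 4 * a ^ 3 * b v + 8 * a ^ 2 * b v ^ 2 + 3 * b v ^ 4) :=
        expect_le_expect fun v _ ↦ hpoint v
    _ = _ := by
        simp only [expect_add_distrib, Fintype.expect_const, ← mul_expect, hb, mul_zero, add_zero]

theorem expect_sq_le_card_mul_sq_expect {y : α → ℝ} (hy : ∀ v, 0 ≤ y v) :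
    𝔼 v, y v ^ 2 ≤ Fintype.card α * (𝔼 v, y v) ^ 2 := by
  have : (0 : ℝ) < Fintype.card α := Nat.cast_pos.2 Fintype.card_pos
  simp only [Fintype.expect_eq_sum_div_card]
  calc (∑ v, y v ^ 2) / Fintype.card α ≤ (∑ v, y v) ^ 2 / Fintype.card α := by
        gcongr
        exact sum_sq_le_sq_sum_of_nonneg fun v _ ↦ hy v
    _ = _ := by field_simp

omit [Nonempty α] in
theorem expect_sq_mul_expect_sq_le {a : Ω → ℝ} {b : α → Ω → ℝ} {L M : ℝ} (hL : 0 ≤ L)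
    (hM : 0 ≤ M) (ha : 𝔼 x, a x ^ 4 ≤ M ^ 2)
    (hb : ∀ v, 𝔼 x, b v x ^ 4 ≤ (L * 𝔼 x, b v x ^ 2) ^ 2) :
    𝔼 x, a x ^ 2 * 𝔼 v, b v x ^ 2 ≤ M * (L * 𝔼 v, 𝔼 x, b v x ^ 2) := by
  have hslice : ∀ v, 𝔼 x, a x ^ 2 * b v x ^ 2 ≤ M * (L * 𝔼 x, b v x ^ 2) := fun v ↦ by
    have : 0 ≤ 𝔼 x, b v x ^ 2 := expect_nonneg fun x _ ↦ sq_nonneg _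
    refine le_of_sq_le_sq ?_ (by positivity)
    calc (𝔼 x, a x ^ 2 * b v x ^ 2) ^ 2
        ≤ (𝔼 x, (a x ^ 2) ^ 2) * 𝔼 x, (b v x ^ 2) ^ 2 := expect_mul_sq_le_sq_mul_sq _ _ _
      _ = (𝔼 x, a x ^ 4) * 𝔼 x, b v x ^ 4 := by simp only [← pow_mul]
      _ ≤ M ^ 2 * (L * 𝔼 x, b v x ^ 2) ^ 2 :=
        mul_le_mul ha (hb v) (expect_nonneg fun x _ ↦ by positivity) (sq_nonneg _)
      _ = _ := by ring
  calc 𝔼 x, a x ^ 2 * 𝔼 v, b v x ^ 2 = 𝔼 v, 𝔼 x, a x ^ 2 * b v x ^ 2 := by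
        simp only [mul_expect]
        rw [expect_comm]
    _ ≤ 𝔼 v, M * (L * 𝔼 x, b v x ^ 2) := expect_le_expect fun v _ ↦ hslice v
    _ = _ := by rw [← mul_expect, ← mul_expect]

theorem expect_pow_four_le_card_mul_sq {b : α → Ω → ℝ} {L : ℝ}
    (hb : ∀ v, 𝔼 x, b v x ^ 4 ≤ (L * 𝔼 x, b v x ^ 2) ^ 2) :
    𝔼 x, 𝔼 v, b v x ^ 4 ≤ L ^ 2 * (Fintype.card α * (𝔼 v, 𝔼 x, b v x ^ 2) ^ 2) :=
  calc 𝔼 x, 𝔼 v, b v x ^ 4 = 𝔼 v, 𝔼 x, b v x ^ 4 := expect_comm _ _ _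
    _ ≤ 𝔼 v, (L * 𝔼 x, b v x ^ 2) ^ 2 := expect_le_expect fun v _ ↦ hb v
    _ = L ^ 2 * 𝔼 v, (𝔼 x, b v x ^ 2) ^ 2 := by simp only [mul_pow, ← mul_expect]
    _ ≤ _ := by
      gcongr
      exact expect_sq_le_card_mul_sq_expect fun v ↦ expect_nonneg fun x _ ↦ sq_nonneg _

theorem expect_pow_four_le_of_slices {a : Ω → ℝ} {b : α → Ω → ℝ} {L : ℝ} (hL : 0 ≤ L)
    (hmean : ∀ x, 𝔼 v, b v x = 0)
    (ha : 𝔼 x, a x ^ 4 ≤ (4 * Fintype.card α * L * 𝔼 x, a x ^ 2) ^ 2)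
    (hb : ∀ v, 𝔼 x, b v x ^ 4 ≤ (L * 𝔼 x, b v x ^ 2) ^ 2) :
    𝔼 x, 𝔼 v, (a x + b v x) ^ 4
      ≤ (4 * Fintype.card α * L * 𝔼 x, 𝔼 v, (a x + b v x) ^ 2) ^ 2 := by
  have hX : 0 ≤ 𝔼 x, a x ^ 2 := expect_nonneg fun x _ ↦ sq_nonneg _
  have hY : 0 ≤ 𝔼 v, 𝔼 x, b v x ^ 2 := expect_nonneg fun v _ ↦ expect_nonneg fun x _ ↦ sq_nonneg _
  have hq : (1 : ℝ) ≤ Fintype.card α := Nat.one_le_cast.2 Fintype.card_pos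
  have hcross := expect_sq_mul_expect_sq_le hL (by positivity) ha hb
  have hfourth := expect_pow_four_le_card_mul_sq hb
  have hsq : 𝔼 x, 𝔼 v, (a x + b v x) ^ 2 = 𝔼 x, a x ^ 2 + 𝔼 v, 𝔼 x, b v x ^ 2 := by
    simp only [expect_add_sq _ (hmean _), expect_add_distrib]
    rw [expect_comm]
  rw [hsq]
  set q : ℝ := (Fintype.card α : ℝ)
  set X := 𝔼 x, a x ^ 2
  set Y := 𝔼 v, 𝔼 x, b v x ^ 2
  calc 𝔼 x, 𝔼 v, (a x + b v x) ^ 4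
      ≤ 𝔼 x, (a x ^ 4 + 8 * a x ^ 2 * (𝔼 v, b v x ^ 2) + 3 * 𝔼 v, b v x ^ 4) :=
        expect_le_expect fun x _ ↦ expect_add_pow_four_le _ (hmean x)
    _ = (𝔼 x, a x ^ 4) + 8 * (𝔼 x, a x ^ 2 * 𝔼 v, b v x ^ 2) + 3 * 𝔼 x, 𝔼 v, b v x ^ 4 := by
        simp only [expect_add_distrib, ← mul_expect, mul_assoc]
    _ ≤ (4 * q * L * X) ^ 2 + 8 * (4 * q * L * X * (L * Y)) + 3 * (L ^ 2 * (q * Y ^ 2)) := by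
        gcongr
    _ ≤ (4 * q * L * (X + Y)) ^ 2 := by
        have hq2 : q ≤ q ^ 2 := by nlinarith
        have h1 : L ^ 2 * (X * Y) * q ≤ L ^ 2 * (X * Y) * q ^ 2 := by gcongr
        have h2 : L ^ 2 * Y ^ 2 * q ≤ L ^ 2 * Y ^ 2 * q ^ 2 := by gcongr
        have h3 : 0 ≤ L ^ 2 * Y ^ 2 * q ^ 2 := by positivity
        linarith

end Slices

variable {ι α : Type*}

/-- The functions of degree at most `k`: the span of the functions depending on at most `k`
coordinates. -/
def lowDegree (ι α : Type*) (k : ℕ) : Submodule ℝ ((ι → α) → ℝ) :=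
  Submodule.span ℝ {f | ∃ S : Finset ι, #S ≤ k ∧ DependsOn f (S : Set ι)}

theorem mem_lowDegree_of_dependsOn {f : (ι → α) → ℝ} {S : Finset ι} {k : ℕ} (hS : #S ≤ k)
    (hf : DependsOn f (S : Set ι)) : f ∈ lowDegree ι α k :=
  Submodule.subset_span ⟨S, hS, hf⟩

theorem eq_of_mem_lowDegree_zero {f : (ι → α) → ℝ} (hf : f ∈ lowDegree ι α 0) (x y : ι → α) :
    f x = f y := by
  let eval (z : ι → α) : ((ι → α) → ℝ) →ₗ[ℝ] ℝ := LinearMap.proj z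
  have hle : lowDegree ι α 0 ≤ LinearMap.eqLocus (eval x) (eval y) :=
    Submodule.span_le.2 fun g ⟨S, hS, hg⟩ ↦ by
      obtain rfl := card_eq_zero.1 (Nat.le_zero.1 hS)
      exact DependsOn.empty (by simpa using hg) x y
  exact hle hf

variable [DecidableEq ι] [Fintype α]

theorem coordAvg_mem_lowDegree {f : (ι → α) → ℝ} {k : ℕ} (hf : f ∈ lowDegree ι α k) (i : ι) :
    coordAvg i f ∈ lowDegree ι α k := by
  have hle : lowDegree ι α k ≤ (lowDegree ι α k).comap (coordAvg i) :=
    Submodule.span_le.2 fun g ⟨S, hS, hg⟩ ↦ mem_lowDegree_of_dependsOn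
      hS ((dependsOn_coordAvg hg i).mono Set.sdiff_subset)
  exact hle hf

variable [Nonempty α]

theorem sub_coordAvg_update_mem_lowDegree {f : (ι → α) → ℝ} {k : ℕ}
    (hf : f ∈ lowDegree ι α (k + 1)) (i : ι) (v : α) :
    (fun x ↦ (f - coordAvg i f) (Function.update x i v)) ∈ lowDegree ι α k := by
  let restrict : Module.End ℝ ((ι → α) → ℝ) := LinearMap.funLeft ℝ ℝ (Function.update · i v)
  have hle : lowDegree ι α (k + 1) ≤ (lowDegree ι α k).comap (restrict ∘ₗ (1 - coordAvg i)) := by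
    refine Submodule.span_le.2 fun g ⟨S, hS, hg⟩ ↦ ?_
    change restrict (g - coordAvg i g) ∈ lowDegree ι α k
    by_cases hi : i ∈ S
    · have hdep : DependsOn (restrict (g - coordAvg i g)) (S.erase i : Set ι) := fun x y hxy ↦ by
        rw [coe_erase] at hxy
        simp only [restrict, LinearMap.funLeft_apply, Pi.sub_apply, coordAvg_update,
          dependsOn_comp_update hg i v hxy, dependsOn_coordAvg hg i hxy]
      exact mem_lowDegree_of_dependsOn (by rw [card_erase_of_mem hi]; omega) hdep
    · rw [coordAvg_eq_self hg (mod_cast hi), sub_self, map_zero]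
      exact zero_mem _
  exact hle hf

variable [Fintype ι]

theorem expect_pow_four_le_of_dependsOn (J : Finset ι) :
    ∀ {k : ℕ} {f : (ι → α) → ℝ}, f ∈ lowDegree ι α k → DependsOn f (J : Set ι) →
      𝔼 x, f x ^ 4 ≤ ((4 * Fintype.card α) ^ k * 𝔼 x, f x ^ 2) ^ 2 := by
  have hq : (1 : ℝ) ≤ Fintype.card α := Nat.one_le_cast.2 Fintype.card_pos
  have hconst : ∀ {k : ℕ} {f : (ι → α) → ℝ}, (∀ x y, f x = f y) →
      𝔼 x, f x ^ 4 ≤ ((4 * Fintype.card α) ^ k * 𝔼 x, f x ^ 2) ^ 2 := fun {k} f hf ↦ by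
    have x₀ : ι → α := Classical.arbitrary _
    have hone : (1 : ℝ) ≤ ((4 * Fintype.card α) ^ k) ^ 2 :=
      one_le_pow₀ (one_le_pow₀ (by linarith))
    simp only [fun x ↦ hf x x₀, Fintype.expect_const, mul_pow _ (f x₀ ^ 2), ← pow_mul (f x₀)]
    exact le_mul_of_one_le_left (by positivity) hone
  induction J using Finset.induction_on with
  | empty => exact fun _ hf ↦ hconst (DependsOn.empty (by simpa using hf))
  | insert i J _ ih =>
    rintro (_ | k) f hdeg hf
    · exact hconst (eq_of_mem_lowDegree_zero hdeg)
    · have hJ : ((insert i J : Finset ι) : Set ι) \ {i} ⊆ J := by simp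
      have ha := (dependsOn_coordAvg hf i).mono hJ
      have hb : ∀ v, DependsOn (fun x ↦ (f - coordAvg i f) (Function.update x i v)) (J : Set ι) :=
        fun v x y hxy ↦ by
          simp only [Pi.sub_apply, coordAvg_update, ha hxy,
            (dependsOn_comp_update hf i v).mono hJ hxy]
      have hslices := expect_pow_four_le_of_slices (L := (4 * (Fintype.card α : ℝ)) ^ k)
        (a := coordAvg i f) (b := fun v x ↦ (f - coordAvg i f) (Function.update x i v))
        (by positivity)
        (fun x ↦ by
          simp only [Pi.sub_apply, coordAvg_update, expect_sub_distrib, Fintype.expect_const]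
          exact sub_self _)
        (by rw [← pow_succ']; exact ih (coordAvg_mem_lowDegree hdeg i) ha)
        fun v ↦ ih (sub_coordAvg_update_mem_lowDegree hdeg i v) (hb v)
      have hupdate : ∀ n : ℕ, 𝔼 x, 𝔼 v, (f (Function.update x i v)) ^ n = 𝔼 x, f x ^ n :=
        fun n ↦ expect_coordAvg i fun x ↦ f x ^ n
      simpa only [Pi.sub_apply, coordAvg_update, add_sub_cancel, hupdate, ← pow_succ'] using hslices

theorem expect_pow_four_le {k : ℕ} {f : (ι → α) → ℝ} (hf : f ∈ lowDegree ι α k) :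
    𝔼 x, f x ^ 4 ≤ ((4 * Fintype.card α) ^ k * 𝔼 x, f x ^ 2) ^ 2 :=
  expect_pow_four_le_of_dependsOn univ hf (by simpa using dependsOn_univ f)

theorem expect_abs_pow_three_le {k : ℕ} {f : (ι → α) → ℝ} (hf : f ∈ lowDegree ι α k) {d : ℝ}
    (hd : 0 ≤ d) (hfd : 𝔼 x, f x ^ 2 ≤ d ^ 2) :
    𝔼 x, |f x| ^ 3 ≤ (4 * Fintype.card α) ^ k * d * 𝔼 x, f x ^ 2 := by
  have hE : 0 ≤ 𝔼 x, f x ^ 2 := expect_nonneg fun x _ ↦ sq_nonneg _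
  refine le_of_sq_le_sq ?_ (mul_nonneg (by positivity) hE)
  calc (𝔼 x, |f x| ^ 3) ^ 2 = (𝔼 x, |f x| * f x ^ 2) ^ 2 := by simp only [pow_succ' _ 2, sq_abs]
    _ ≤ (𝔼 x, |f x| ^ 2) * 𝔼 x, (f x ^ 2) ^ 2 := expect_mul_sq_le_sq_mul_sq _ _ _
    _ = (𝔼 x, f x ^ 2) * 𝔼 x, f x ^ 4 := by simp only [sq_abs, ← pow_mul]
    _ ≤ d ^ 2 * ((4 * Fintype.card α) ^ k * 𝔼 x, f x ^ 2) ^ 2 :=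
      mul_le_mul hfd (expect_pow_four_le hf) (expect_nonneg fun x _ ↦ by positivity) (sq_nonneg d)
    _ = _ := by ring

theorem mem_lowDegree_of_efronStein_eq_zero [DecidableEq α] {k : ℕ} {f : (ι → α) → ℝ}
    (hf : ∀ S, k < #S → efronStein S f = 0) : f ∈ lowDegree ι α k := by
  rw [← sum_efronStein f]
  refine sum_mem fun S _ ↦ ?_
  obtain hS | hS := le_or_gt #S k
  · exact mem_lowDegree_of_dependsOn hS (dependsOn_efronStein S f)
  · rw [hf S hS]
    exact zero_mem _

end Bonami

section Penalty

theorem abs_central_diff_posPart_cube_le (g h : ℝ) :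
    |(g + h)⁺ ^ 3 - (g - h)⁺ ^ 3 - 6 * g⁺ ^ 2 * h| ≤ 2 * |h| ^ 3 := by
  wlog hh : 0 ≤ h generalizing h
  · have hneg := this (-h) (by linarith)
    rw [abs_neg, ← sub_eq_add_neg, sub_neg_eq_add, ← abs_neg] at hneg
    convert hneg using 2
    ring
  rw [abs_of_nonneg hh, abs_le]
  have h3 : 0 ≤ h ^ 3 := by positivity
  obtain h1 | h1 := le_total 0 (g - h)
  · rw [posPart_eq_self.2 h1, posPart_eq_self.2 (by linarith : 0 ≤ g),
      posPart_eq_self.2 (by linarith : 0 ≤ g + h)]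
    constructor <;> linarith
  rw [posPart_eq_zero.2 h1]
  obtain h2 | h2 := le_total (g + h) 0
  · rw [posPart_eq_zero.2 h2, posPart_eq_zero.2 (by linarith : g ≤ 0)]
    constructor <;> linarith
  rw [posPart_eq_self.2 h2]
  have hcube : 0 ≤ (g + h) ^ 3 := by positivity
  obtain h4 | h4 := le_total g 0
  · rw [posPart_eq_zero.2 h4]
    have : (g + h) ^ 3 ≤ h ^ 3 := by gcongr; linarith
    constructor <;> linarith
  · rw [posPart_eq_self.2 h4]
    have h0 : 0 ≤ (h - g) ^ 3 := pow_nonneg (by linarith) 3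
    have h5 : (h - g) ^ 3 ≤ h ^ 3 := by gcongr <;> linarith
    constructor <;> linarith

/-- A twice differentiable substitute for `u⁺ ^ 2` with Lipschitz second derivative: it is cubic on
`[0, 1]` and quadratic beyond. -/
def softSq (u : ℝ) : ℝ := (u⁺ ^ 3 - (u - 1)⁺ ^ 3) / 3

theorem softSq_of_nonpos {u : ℝ} (hu : u ≤ 0) : softSq u = 0 := by
  rw [softSq, posPart_eq_zero.2 hu, posPart_eq_zero.2 (by linarith)]
  norm_num

theorem softSq_of_mem_Icc {u : ℝ} (hu : u ∈ Set.Icc 0 1) : softSq u = u ^ 3 / 3 := by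
  rw [softSq, posPart_eq_self.2 hu.1, posPart_eq_zero.2 (by linarith [hu.2])]
  norm_num

theorem softSq_of_one_le {u : ℝ} (hu : 1 ≤ u) : softSq u = u ^ 2 - u + 1 / 3 := by
  rw [softSq, posPart_eq_self.2 (by linarith), posPart_eq_self.2 (by linarith)]
  ring

theorem softSq_le (u : ℝ) : softSq u ≤ u⁺ ^ 2 := by
  obtain h0 | h0 := le_total u 0
  · rw [softSq_of_nonpos h0]
    positivity
  rw [posPart_eq_self.2 h0]
  obtain h1 | h1 := le_total u 1
  · rw [softSq_of_mem_Icc ⟨h0, h1⟩]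
    nlinarith [sq_nonneg u]
  · rw [softSq_of_one_le h1]
    linarith

theorem posPart_sq_le {η : ℝ} (hη : 0 < η) (hη1 : η ≤ 1) (u : ℝ) :
    u⁺ ^ 2 ≤ η ^ 2 + 3 / η * softSq u := by
  suffices h : η * u⁺ ^ 2 ≤ η ^ 3 + 3 * softSq u by
    calc u⁺ ^ 2 = (η * u⁺ ^ 2) / η := by field_simp
      _ ≤ (η ^ 3 + 3 * softSq u) / η := by gcongr
      _ = _ := by field_simp
  have hη3 : 0 < η ^ 3 := by positivity
  obtain h0 | h0 := le_total u 0
  · rw [softSq_of_nonpos h0, posPart_eq_zero.2 h0]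
    linarith
  rw [posPart_eq_self.2 h0]
  obtain h1 | h1 := le_total u 1
  · rw [softSq_of_mem_Icc ⟨h0, h1⟩]
    obtain h2 | h2 := le_total u η
    · have : η * u ^ 2 ≤ η * η ^ 2 := by gcongr
      nlinarith [pow_nonneg h0 3]
    · have : η * u ^ 2 ≤ u * u ^ 2 := by gcongr
      linarith
  · rw [softSq_of_one_le h1]
    have : η * u ^ 2 ≤ 1 * u ^ 2 := by gcongr
    nlinarith

/-- The point of `[0, 1]` nearest to `t`. -/
def clip (t : ℝ) : ℝ := Set.projIcc 0 1 zero_le_one t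

theorem clip_mem_Icc (t : ℝ) : clip t ∈ Set.Icc 0 1 := (Set.projIcc 0 1 zero_le_one t).2

theorem sub_clip_sq (t : ℝ) : (t - clip t) ^ 2 = (t - 1)⁺ ^ 2 + (-t)⁺ ^ 2 := by
  obtain h0 | h0 := le_total t 0
  · rw [clip, Set.projIcc_of_le_left _ h0, posPart_eq_zero.2 (by linarith : t - 1 ≤ 0),
      posPart_eq_self.2 (by linarith : 0 ≤ -t)]
    ring
  rw [posPart_eq_zero.2 (by linarith : -t ≤ 0)]
  obtain h1 | h1 := le_total t 1
  · rw [clip, Set.projIcc_of_mem _ ⟨h0, h1⟩, posPart_eq_zero.2 (by linarith)]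
    ring
  · rw [clip, Set.projIcc_of_right_le _ h1, posPart_eq_self.2 (by linarith)]
    ring

theorem sub_clip_sq_le (t : ℝ) {c : ℝ} (hc : c ∈ Set.Icc 0 1) :
    (t - clip t) ^ 2 ≤ (t - c) ^ 2 := by
  obtain ⟨hc0, hc1⟩ := hc
  obtain h0 | h0 := le_total t 0
  · rw [clip, Set.projIcc_of_le_left _ h0]
    nlinarith
  obtain h1 | h1 := le_total t 1
  · rw [clip, Set.projIcc_of_mem _ ⟨h0, h1⟩]
    nlinarith [sq_nonneg (t - c)]
  · rw [clip, Set.projIcc_of_right_le _ h1]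
    nlinarith

/-- A smooth substitute for the squared distance of `t` to `[0, 1]`. -/
def penalty (t : ℝ) : ℝ := softSq (t - 1) + softSq (-t)

theorem penalty_le_sub_sq (t : ℝ) {c : ℝ} (hc : c ∈ Set.Icc 0 1) : penalty t ≤ (t - c) ^ 2 :=
  calc penalty t ≤ (t - 1)⁺ ^ 2 + (-t)⁺ ^ 2 := add_le_add (softSq_le _) (softSq_le _)
    _ = (t - clip t) ^ 2 := (sub_clip_sq t).symm
    _ ≤ (t - c) ^ 2 := sub_clip_sq_le t hc

theorem sub_clip_sq_le_penalty {η : ℝ} (hη : 0 < η) (hη1 : η ≤ 1) (t : ℝ) :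
    (t - clip t) ^ 2 ≤ 2 * η ^ 2 + 3 / η * penalty t := by
  rw [sub_clip_sq, penalty]
  linarith [posPart_sq_le hη hη1 (t - 1), posPart_sq_le hη hη1 (-t)]

/-- The derivative of `penalty`, multiplied by `2`. -/
def twoPenaltyDeriv (t : ℝ) : ℝ :=
  2 * ((t - 1)⁺ ^ 2 - (t - 1 - 1)⁺ ^ 2 - (-t)⁺ ^ 2 + (-t - 1)⁺ ^ 2)

theorem penalty_sub_le (g h : ℝ) :
    penalty (g - h) ≤ penalty (g + h) - twoPenaltyDeriv g * h + 3 * |h| ^ 3 := by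
  have h1 := (abs_le.1 (abs_central_diff_posPart_cube_le (g - 1) h)).1
  have h2 := (abs_le.1 (abs_central_diff_posPart_cube_le (g - 1 - 1) h)).2
  have h3 := (abs_le.1 (abs_central_diff_posPart_cube_le (-g) (-h))).1
  have h4 := (abs_le.1 (abs_central_diff_posPart_cube_le (-g - 1) (-h))).2
  have h5 : 0 ≤ |h| ^ 3 := by positivity
  rw [abs_neg] at h3 h4
  rw [penalty, penalty, softSq, softSq, softSq, softSq, twoPenaltyDeriv]
  ring_nf at h1 h2 h3 h4 ⊢
  linarith

end Penalty

section Noise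

variable {ι α : Type*} [Fintype ι] [DecidableEq ι] [Fintype α] [DecidableEq α]

/-- The noise operator of parameter `s`, which multiplies level `j` of the Efron–Stein decomposition
by `s ^ j`; negative parameters are allowed. -/
def noise (s : ℝ) : Module.End ℝ ((ι → α) → ℝ) := multiplier fun S ↦ s ^ #S

theorem noise_apply (s : ℝ) (f : (ι → α) → ℝ) (x : ι → α) :
    noise s f x = 𝔼 y, (∏ i, (1 + s * centeredKernel (x i) (y i))) * f y := by
  rw [noise, ← multiplier_prod_apply]
  simp only [prod_const]

theorem expect_mul_noise (s : ℝ) (f g : (ι → α) → ℝ) :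
    𝔼 x, f x * noise s g x = 𝔼 x, 𝔼 y, (∏ i, (1 + s * centeredKernel (x i) (y i))) * f x * g y := by
  simp only [noise_apply, mul_expect, mul_left_comm (f _), mul_assoc]

variable [Nonempty α]

theorem expect_noise (s : ℝ) (f : (ι → α) → ℝ) : 𝔼 x, noise s f x = 𝔼 x, f x := by
  rw [noise, expect_multiplier, card_empty, pow_zero, one_mul]

theorem one_add_mul_centeredKernel_nonneg {s : ℝ} (hs : s ≤ 1)
    (hs' : 0 ≤ 1 + s * (Fintype.card α - 1)) (u v : α) : 0 ≤ 1 + s * centeredKernel u v := by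
  obtain h | h := le_total 0 s
  · nlinarith [neg_one_le_centeredKernel u v]
  · nlinarith [centeredKernel_le u v]

theorem noise_mem_Icc {s : ℝ} (hs : s ≤ 1) (hs' : 0 ≤ 1 + s * (Fintype.card α - 1))
    {f : (ι → α) → ℝ} (hf : ∀ x, f x ∈ Set.Icc 0 1) (x : ι → α) : noise s f x ∈ Set.Icc 0 1 := by
  have hker : ∀ y : ι → α, 0 ≤ ∏ i, (1 + s * centeredKernel (x i) (y i)) := fun y ↦
    prod_nonneg fun i _ ↦ one_add_mul_centeredKernel_nonneg hs hs' _ _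
  have hmass : 𝔼 y : ι → α, ∏ i, (1 + s * centeredKernel (x i) (y i)) = 1 := by
    rw [expect_pi_prod fun i v ↦ 1 + s * centeredKernel (x i) v]
    simp only [expect_add_distrib, Fintype.expect_const, ← mul_expect, expect_centeredKernel,
      mul_zero, add_zero, prod_const_one]
  rw [noise_apply]
  exact ⟨expect_nonneg fun y _ ↦ mul_nonneg (hker y) (hf y).1,
    (expect_le_expect fun y _ ↦ mul_le_of_le_one_right (hker y) (hf y).2).trans_eq hmass⟩

theorem expect_add_expect_sub_one_le {s : ℝ} (hs : s ≤ 1) (hs' : 0 ≤ 1 + s * (Fintype.card α - 1))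
    {A B : (ι → α) → ℝ} (hA : ∀ x, A x ≤ 1) (hB : ∀ x, B x ∈ Set.Icc 0 1) :
    (𝔼 x, A x) + (𝔼 x, B x) - 1 ≤ 𝔼 x, A x * noise s B x := by
  calc (𝔼 x, A x) + (𝔼 x, B x) - 1 = 𝔼 x, (A x + noise s B x - 1) := by
        rw [expect_sub_distrib, expect_add_distrib, expect_noise, Fintype.expect_const]
    _ ≤ _ := expect_le_expect fun x _ ↦ by nlinarith [hA x, (noise_mem_Icc hs hs' hB x).2]

end Noise

section Lindeberg

variable {ι α : Type*} [Fintype ι] [DecidableEq ι] [Fintype α] [DecidableEq α]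

/-- The part of a function on the levels at most `k` of its Efron–Stein decomposition. -/
def lowDegreePart (k : ℕ) : Module.End ℝ ((ι → α) → ℝ) := multiplier fun S ↦ if #S ≤ k then 1 else 0

/-- The operator which changes, for each coordinate in `F`, the sign of the part of a function that
averages to zero over that coordinate. -/
def signFlip (F : Finset ι) : Module.End ℝ ((ι → α) → ℝ) := multiplier fun S ↦ (-1) ^ #(S ∩ F)

variable [Nonempty α]

theorem efronStein_lowDegreePart {k : ℕ} {S : Finset ι} (hS : k < #S) (f : (ι → α) → ℝ) :
    efronStein S (lowDegreePart k f) = 0 := by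
  rw [lowDegreePart, efronStein_multiplier, if_neg hS.not_ge, zero_smul]

theorem signFlip_empty (f : (ι → α) → ℝ) : signFlip ∅ f = f := by
  simp only [signFlip, inter_empty, card_empty, pow_zero, multiplier_one, Module.End.one_apply]

theorem signFlip_insert {F : Finset ι} {i : ι} (hi : i ∉ F) (f : (ι → α) → ℝ) :
    signFlip (insert i F) f = (2 : ℝ) • coordAvg i (signFlip F f) - signFlip F f := by
  simp only [signFlip, coordAvg_eq_multiplier, multiplier_multiplier, ← multiplier_const_mul,
    ← multiplier_sub]
  congr 2
  ext S
  by_cases hS : i ∈ S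
  · rw [inter_insert_of_mem hS, card_insert_of_notMem fun h ↦ hi (mem_inter.1 h).2, if_pos hS]
    ring
  · rw [inter_insert_of_notMem hS, if_neg hS]
    ring

theorem expect_penalty_reflect_le {k : ℕ} {f : (ι → α) → ℝ}
    (hf : ∀ S, k < #S → efronStein S f = 0) {i : ι} {d : ℝ} (hd : 0 ≤ d)
    (hi : influence k f i ≤ d ^ 2) :
    𝔼 x, penalty (((2 : ℝ) • coordAvg i f - f) x)
      ≤ (𝔼 x, penalty (f x)) + 3 * ((4 * Fintype.card α) ^ k * d) * influence k f i := by
  set g := coordAvg i f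
  have hh : ∀ S, k < #S → efronStein S (f - g) = 0 := fun S hS ↦ by
    rw [sub_coordAvg_eq_multiplier, efronStein_multiplier, hf S hS, smul_zero]
  have hinf : 𝔼 x, (f - g) x ^ 2 = influence k f i := expect_sq_sub_coordAvg hf i
  have hthird : 𝔼 x, |(f - g) x| ^ 3 ≤ (4 * Fintype.card α) ^ k * d * influence k f i :=
    hinf ▸ expect_abs_pow_three_le (mem_lowDegree_of_efronStein_eq_zero hh) hd (hinf ▸ hi)
  have horth : 𝔼 x, twoPenaltyDeriv (g x) * (f - g) x = 0 := by
    simp only [Pi.sub_apply, mul_sub, expect_sub_distrib]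
    rw [expect_mul_coordAvg fun x v ↦ congrArg twoPenaltyDeriv (coordAvg_update i f x v), sub_self]
  calc 𝔼 x, penalty (((2 : ℝ) • g - f) x)
      = 𝔼 x, penalty (g x - (f - g) x) := by
        simp only [Pi.sub_apply, Pi.smul_apply, smul_eq_mul]
        exact expect_congr rfl fun x _ ↦ by ring_nf
    _ ≤ 𝔼 x, (penalty (g x + (f - g) x) - twoPenaltyDeriv (g x) * (f - g) x
          + 3 * |(f - g) x| ^ 3) := expect_le_expect fun x _ ↦ penalty_sub_le _ _
    _ = (𝔼 x, penalty (f x)) + 3 * 𝔼 x, |(f - g) x| ^ 3 := by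
        rw [expect_add_distrib, expect_sub_distrib, horth, sub_zero, ← mul_expect]
        simp only [Pi.sub_apply, add_sub_cancel]
    _ ≤ _ := by linarith

theorem expect_penalty_signFlip_le {k : ℕ} {f : (ι → α) → ℝ}
    (hf : ∀ S, k < #S → efronStein S f = 0) {d : ℝ} (hd : 0 ≤ d) (F : Finset ι)
    (hF : ∀ i ∈ F, influence k f i ≤ d ^ 2) :
    𝔼 x, penalty (signFlip F f x)
      ≤ (𝔼 x, penalty (f x)) + 3 * ((4 * Fintype.card α) ^ k * d) * ∑ i ∈ F, influence k f i := by
  induction F using Finset.induction_on with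
  | empty => simp only [signFlip_empty, sum_empty, mul_zero, add_zero, le_refl]
  | insert i F hiF ih =>
    have hflip : ∀ S, k < #S → efronStein S (signFlip F f) = 0 := fun S hS ↦ by
      rw [signFlip, efronStein_multiplier, hf S hS, smul_zero]
    have hinf : influence k (signFlip F f) i ≤ influence k f i :=
      influence_multiplier_le (fun S ↦ by rw [← pow_mul, pow_mul', neg_one_sq, one_pow]) k f i
    calc 𝔼 x, penalty (signFlip (insert i F) f x)
        ≤ (𝔼 x, penalty (signFlip F f x))
          + 3 * ((4 * Fintype.card α) ^ k * d) * influence k (signFlip F f) i := by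
          rw [signFlip_insert hiF]
          exact expect_penalty_reflect_le hflip hd (hinf.trans (hF i (mem_insert_self i F)))
      _ ≤ ((𝔼 x, penalty (f x)) + 3 * ((4 * Fintype.card α) ^ k * d) * ∑ j ∈ F, influence k f j)
          + 3 * ((4 * Fintype.card α) ^ k * d) * influence k f i := by
          gcongr
          exact ih fun j hj ↦ hF j (mem_insert_of_mem hj)
      _ = _ := by rw [sum_insert hiF]; ring

theorem expect_lowDegreePart_noise_sub_sq_le {s : ℝ} (hs : s ^ 2 ≤ 1) (k : ℕ) (f : (ι → α) → ℝ) :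
    𝔼 x, (lowDegreePart k (noise s f) x - noise s f x) ^ 2 ≤ (s ^ 2) ^ k * 𝔼 x, f x ^ 2 := by
  have htail : lowDegreePart k (noise s f) - noise s f
      = multiplier (fun S ↦ (if #S ≤ k then 1 else 0) * s ^ #S - s ^ #S) f := by
    rw [multiplier_sub, ← multiplier_multiplier]
    rfl
  have hsymbol : ∀ S : Finset ι, ((if #S ≤ k then 1 else 0) * s ^ #S - s ^ #S) ^ 2 ≤ (s ^ 2) ^ k :=
    fun S ↦ by
      split_ifs with hS
      · rw [one_mul, sub_self, zero_pow two_ne_zero]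
        exact pow_nonneg (sq_nonneg s) k
      · rw [zero_mul, zero_sub, neg_sq, ← pow_mul, mul_comm, pow_mul]
        exact pow_le_pow_of_le_one (sq_nonneg s) hs (not_le.1 hS).le
  calc _ = 𝔼 x, multiplier (fun S ↦ (if #S ≤ k then 1 else 0) * s ^ #S - s ^ #S) f x ^ 2 := by
        rw [← htail]
        rfl
    _ ≤ _ := expect_multiplier_sq_le hsymbol f

theorem influence_lowDegreePart_noise_le {s : ℝ} (hs : s ^ 2 ≤ 1) (k : ℕ) (f : (ι → α) → ℝ)
    (i : ι) : influence k (lowDegreePart k (noise s f)) i ≤ influence k f i := by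
  refine (influence_multiplier_le (fun S ↦ ?_) k _ i).trans
    (influence_multiplier_le (fun S ↦ ?_) k f i)
  · split_ifs <;> norm_num
  · rw [pow_right_comm]
    exact pow_le_one₀ (sq_nonneg s) hs

theorem expect_signFlip_sq_le (F : Finset ι) (f : (ι → α) → ℝ) :
    𝔼 x, signFlip F f x ^ 2 ≤ 𝔼 x, f x ^ 2 := by
  rw [← one_mul (𝔼 x, f x ^ 2)]
  exact expect_multiplier_sq_le (fun S ↦ by rw [← pow_mul, pow_mul', neg_one_sq, one_pow]) f

omit [DecidableEq α] in
theorem expect_sq_le_one {f : (ι → α) → ℝ} (hf : ∀ x, f x ∈ Set.Icc 0 1) : 𝔼 x, f x ^ 2 ≤ 1 :=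
  expect_le univ_nonempty fun x _ ↦ pow_le_one₀ (hf x).1 (hf x).2

variable {s : ℝ} {k : ℕ} {F : Finset ι} {A : (ι → α) → ℝ} {d η : ℝ}

theorem expect_penalty_signFlip_lowDegreePart_le (hs : s ∈ Set.Icc 0 1)
    (hA : ∀ x, A x ∈ Set.Icc 0 1) (hd : 0 ≤ d) (hF : ∀ i ∈ F, influence k A i ≤ d ^ 2) :
    𝔼 x, penalty (signFlip F (lowDegreePart k (noise s A)) x)
      ≤ (s ^ 2) ^ k + 3 * ((4 * Fintype.card α) ^ k * d) * k := by
  have hs2 : s ^ 2 ≤ 1 := pow_le_one₀ hs.1 hs.2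
  have hcard : (1 : ℝ) ≤ Fintype.card α := Nat.one_le_cast.2 Fintype.card_pos
  have hnoise := noise_mem_Icc hs.2 (by nlinarith [hs.1]) hA
  have hstart : 𝔼 x, penalty (lowDegreePart k (noise s A) x) ≤ (s ^ 2) ^ k :=
    calc _ ≤ 𝔼 x, (lowDegreePart k (noise s A) x - noise s A x) ^ 2 :=
          expect_le_expect fun x _ ↦ penalty_le_sub_sq _ (hnoise x)
      _ ≤ (s ^ 2) ^ k * 𝔼 x, A x ^ 2 := expect_lowDegreePart_noise_sub_sq_le hs2 k A
      _ ≤ (s ^ 2) ^ k := mul_le_of_le_one_right (by positivity) (expect_sq_le_one hA)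
  have htotal : ∑ i ∈ F, influence k (lowDegreePart k (noise s A)) i ≤ k :=
    calc _ ≤ ∑ i ∈ F, influence k A i :=
          sum_le_sum fun i _ ↦ influence_lowDegreePart_noise_le hs2 k A i
      _ ≤ ∑ i, influence k A i :=
          sum_le_univ_sum_of_nonneg fun i ↦ influence_nonneg k A i
      _ ≤ k * 𝔼 x, A x ^ 2 := sum_influence_le k A
      _ ≤ k := mul_le_of_le_one_right k.cast_nonneg (expect_sq_le_one hA)
  calc _ ≤ (𝔼 x, penalty (lowDegreePart k (noise s A) x)) + 3 * ((4 * Fintype.card α) ^ k * d) *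
          ∑ i ∈ F, influence k (lowDegreePart k (noise s A)) i :=
        expect_penalty_signFlip_le (fun S hS ↦ efronStein_lowDegreePart hS _) hd F fun i hi ↦
          (influence_lowDegreePart_noise_le hs2 k A i).trans (hF i hi)
    _ ≤ _ := by gcongr

theorem expect_signFlip_noise_sub_clip_sq_le (hs : s ∈ Set.Icc 0 1)
    (hA : ∀ x, A x ∈ Set.Icc 0 1) (hd : 0 ≤ d) (hF : ∀ i ∈ F, influence k A i ≤ d ^ 2)
    (hη : 0 < η) (hη1 : η ≤ 1)
    (hsmall : (s ^ 2) ^ k + 3 * ((4 * Fintype.card α) ^ k * d) * k ≤ η ^ 3) :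
    𝔼 x, (signFlip F (noise s A) x - clip (signFlip F (noise s A) x)) ^ 2 ≤ (4 * η) ^ 2 := by
  set u := signFlip F (noise s A)
  set v := signFlip F (lowDegreePart k (noise s A))
  have hclip : 𝔼 x, (v x - clip (v x)) ^ 2 ≤ 5 * η ^ 2 :=
    calc _ ≤ 𝔼 x, (2 * η ^ 2 + 3 / η * penalty (v x)) :=
          expect_le_expect fun x _ ↦ sub_clip_sq_le_penalty hη hη1 _
      _ = 2 * η ^ 2 + 3 / η * 𝔼 x, penalty (v x) := by
          rw [expect_add_distrib, Fintype.expect_const, mul_expect]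
      _ ≤ 2 * η ^ 2 + 3 / η * η ^ 3 := by
          gcongr
          exact (expect_penalty_signFlip_lowDegreePart_le hs hA hd hF).trans hsmall
      _ = 5 * η ^ 2 := by field_simp; ring
  have htail : 𝔼 x, (v x - u x) ^ 2 ≤ η ^ 2 :=
    calc _ = 𝔼 x, signFlip F (lowDegreePart k (noise s A) - noise s A) x ^ 2 := by
          rw [map_sub]
          rfl
      _ ≤ 𝔼 x, (lowDegreePart k (noise s A) - noise s A) x ^ 2 := expect_signFlip_sq_le F _
      _ ≤ (s ^ 2) ^ k * 𝔼 x, A x ^ 2 :=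
          expect_lowDegreePart_noise_sub_sq_le (pow_le_one₀ hs.1 hs.2) k A
      _ ≤ (s ^ 2) ^ k := mul_le_of_le_one_right (by positivity) (expect_sq_le_one hA)
      _ ≤ η ^ 3 := le_of_add_le_of_nonneg_left hsmall (by positivity)
      _ ≤ η ^ 2 := pow_le_pow_of_le_one hη.le hη1 (by norm_num)
  calc _ ≤ 𝔼 x, (2 * (v x - clip (v x)) ^ 2 + 2 * (v x - u x) ^ 2) :=
        expect_le_expect fun x _ ↦ (sub_clip_sq_le (u x) (clip_mem_Icc (v x))).trans (by
          nlinarith [sq_nonneg (v x - clip (v x) + (v x - u x))])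
    _ ≤ (4 * η) ^ 2 := by
        rw [expect_add_distrib, ← mul_expect, ← mul_expect]
        nlinarith [sq_nonneg η]

end Lindeberg

section ReverseHypercontractivity

section OnePoint

variable {α : Type*} [Fintype α] [Nonempty α] {a b : α → ℝ}

theorem one_add_five_mul_expect_sq_le (ha : ∀ v, 0 ≤ a v) (hmean : 𝔼 v, a v = 1) :
    1 + 5 * 𝔼 v, (a v - 1) ^ 2 ≤ 𝔼 v, a v ^ 6 := by
  have hpoint : ∀ t : ℝ, 0 ≤ t → 1 + 6 * (t - 1) + 5 * (t - 1) ^ 2 ≤ t ^ 6 := fun t ht ↦ by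
    have : 0 ≤ (t - 1) ^ 2 * (t ^ 4 + 2 * t ^ 3 + 3 * t ^ 2 + 4 * t) := by positivity
    linarith
  calc 1 + 5 * 𝔼 v, (a v - 1) ^ 2 = 𝔼 v, (1 + 6 * (a v - 1) + 5 * (a v - 1) ^ 2) := by
        simp only [expect_add_distrib, expect_sub_distrib, ← mul_expect, Fintype.expect_const,
          hmean, sub_self, mul_zero, add_zero]
    _ ≤ 𝔼 v, a v ^ 6 := expect_le_expect fun v _ ↦ hpoint _ (ha v)

theorem one_sub_three_mul_expect_sq_le (ha : ∀ v, 0 ≤ a v) (hb : ∀ v, 0 ≤ b v)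
    (ha1 : 𝔼 v, a v = 1) (hb1 : 𝔼 v, b v = 1) :
    1 - 3 * ((𝔼 v, (a v - 1) ^ 2) + 𝔼 v, (b v - 1) ^ 2) ≤ 𝔼 v, a v ^ 6 * b v ^ 6 := by
  have hpoint {s t : ℝ} (hs : 0 ≤ s) (ht : 0 ≤ t) :
      1 + 6 * (s - 1) + 6 * (t - 1) - 3 * (s - 1) ^ 2 - 3 * (t - 1) ^ 2 ≤ s ^ 6 * t ^ 6 :=
    calc _ ≤ 1 + ((6 : ℕ) : ℝ) * (s * t - 1) := by
          push_cast
          nlinarith [sq_nonneg ((s - 1) + (t - 1))]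
      _ ≤ (s * t) ^ 6 := one_add_mul_sub_le_pow (by nlinarith [mul_nonneg hs ht]) 6
      _ = s ^ 6 * t ^ 6 := mul_pow s t 6
  calc _ = 𝔼 v, (1 + 6 * (a v - 1) + 6 * (b v - 1) - 3 * (a v - 1) ^ 2 - 3 * (b v - 1) ^ 2) := by
        simp only [expect_add_distrib, expect_sub_distrib, ← mul_expect, Fintype.expect_const,
          ha1, hb1, sub_self, mul_zero, add_zero]
        ring
    _ ≤ _ := expect_le_expect fun v _ ↦ hpoint (ha v) (hb v)

variable {ρ : ℝ}

theorem one_le_expect_pow_six_mixture (hρ : 0 ≤ ρ) (hρ' : ρ ≤ 5 / 8) (ha : ∀ v, 0 ≤ a v)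
    (hb : ∀ v, 0 ≤ b v) (ha1 : 𝔼 v, a v = 1) (hb1 : 𝔼 v, b v = 1) :
    1 ≤ (1 - ρ) * ((𝔼 v, a v ^ 6) * 𝔼 v, b v ^ 6) + ρ * 𝔼 v, a v ^ 6 * b v ^ 6 := by
  set X := 𝔼 v, (a v - 1) ^ 2
  set Y := 𝔼 v, (b v - 1) ^ 2
  have hX : 0 ≤ X := expect_nonneg fun v _ ↦ sq_nonneg _
  have hY : 0 ≤ Y := expect_nonneg fun v _ ↦ sq_nonneg _
  have hρ1 : 0 ≤ 1 - ρ := by linarith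
  calc 1 ≤ (1 - ρ) * ((1 + 5 * X) * (1 + 5 * Y)) + ρ * (1 - 3 * (X + Y)) := by
        nlinarith [mul_nonneg hρ1 (mul_nonneg hX hY),
          mul_nonneg (sub_nonneg.2 hρ') (add_nonneg hX hY)]
    _ ≤ _ := by
        gcongr
        · exact one_add_five_mul_expect_sq_le ha ha1
        · exact one_add_five_mul_expect_sq_le hb hb1
        · exact one_sub_three_mul_expect_sq_le ha hb ha1 hb1

theorem expect_pow_six_mul_le_mixture (hρ : 0 ≤ ρ) (hρ' : ρ ≤ 5 / 8) (ha : ∀ v, 0 ≤ a v)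
    (hb : ∀ v, 0 ≤ b v) :
    (𝔼 v, a v) ^ 6 * (𝔼 v, b v) ^ 6
      ≤ (1 - ρ) * ((𝔼 v, a v ^ 6) * 𝔼 v, b v ^ 6) + ρ * 𝔼 v, a v ^ 6 * b v ^ 6 := by
  have hρ1 : 0 ≤ 1 - ρ := by linarith
  have hrhs : 0 ≤ (1 - ρ) * ((𝔼 v, a v ^ 6) * 𝔼 v, b v ^ 6) + ρ * 𝔼 v, a v ^ 6 * b v ^ 6 := by
    have hpow {c : α → ℝ} (hc : ∀ v, 0 ≤ c v) : 0 ≤ 𝔼 v, c v ^ 6 :=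
      expect_nonneg fun v _ ↦ pow_nonneg (hc v) 6
    have : 0 ≤ 𝔼 v, a v ^ 6 * b v ^ 6 :=
      expect_nonneg fun v _ ↦ mul_nonneg (pow_nonneg (ha v) 6) (pow_nonneg (hb v) 6)
    have := hpow ha
    have := hpow hb
    positivity
  obtain hmean | hmean := (expect_nonneg fun v _ ↦ ha v : 0 ≤ 𝔼 v, a v).eq_or_lt
  · simpa [← hmean] using hrhs
  obtain hmean' | hmean' := (expect_nonneg fun v _ ↦ hb v : 0 ≤ 𝔼 v, b v).eq_or_lt
  · simpa [← hmean'] using hrhs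
  have hnormalized := one_le_expect_pow_six_mixture hρ hρ'
    (fun v ↦ div_nonneg (ha v) hmean.le) (fun v ↦ div_nonneg (hb v) hmean'.le)
    (by rw [← expect_div, div_self hmean.ne']) (by rw [← expect_div, div_self hmean'.ne'])
  simp only [div_pow, div_mul_div_comm, ← expect_div] at hnormalized
  calc _ ≤ (𝔼 v, a v) ^ 6 * (𝔼 v, b v) ^ 6 * _ :=
        le_mul_of_one_le_right (by positivity) hnormalized
    _ = _ := by field_simp

variable [DecidableEq α]

theorem expect_pow_six_mul_le_kernel (hρ : 0 ≤ ρ) (hρ' : ρ ≤ 5 / 8) (ha : ∀ v, 0 ≤ a v)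
    (hb : ∀ v, 0 ≤ b v) :
    (𝔼 v, a v) ^ 6 * (𝔼 v, b v) ^ 6
      ≤ 𝔼 u, 𝔼 v, (1 + ρ * centeredKernel u v) * (a u ^ 6 * b v ^ 6) := by
  have hinner : ∀ u, 𝔼 v, (1 + ρ * centeredKernel u v) * (a u ^ 6 * b v ^ 6)
      = (1 - ρ) * (a u ^ 6 * 𝔼 v, b v ^ 6) + ρ * (a u ^ 6 * b u ^ 6) := fun u ↦ by
    simp only [add_mul, one_mul, mul_assoc, mul_left_comm (centeredKernel _ _), expect_add_distrib,
      ← mul_expect, expect_centeredKernel_mul]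
    ring
  simp only [hinner, expect_add_distrib, ← mul_expect, ← expect_mul]
  exact expect_pow_six_mul_le_mixture hρ hρ' ha hb

end OnePoint

variable {ι α : Type*} [Fintype ι] [DecidableEq ι] [Fintype α]

theorem expect_fin_succ {n : ℕ} (f : (Fin (n + 1) → α) → ℝ) :
    𝔼 x, f x = 𝔼 v, 𝔼 x : Fin n → α, f (Fin.cons v x) := by
  rw [← expect_product', univ_product_univ]
  exact (Fintype.expect_equiv (Fin.consEquiv fun _ ↦ α) _ _ fun _ ↦ rfl).symm

variable [DecidableEq α] [Nonempty α] {ρ : ℝ}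

theorem expect_pow_six_mul_le_fin (hρ : 0 ≤ ρ) (hρ' : ρ ≤ 5 / 8) :
    ∀ {n : ℕ} {A B : (Fin n → α) → ℝ}, (∀ x, 0 ≤ A x) → (∀ x, 0 ≤ B x) →
      (𝔼 x, A x) ^ 6 * (𝔼 x, B x) ^ 6
        ≤ 𝔼 x, 𝔼 y, (∏ i, (1 + ρ * centeredKernel (x i) (y i))) * (A x ^ 6 * B y ^ 6)
  | 0, A, B, _, _ => by simp
  | n + 1, A, B, hA, hB => by
    have hker : ∀ u v : α, 0 ≤ 1 + ρ * centeredKernel u v := fun u v ↦ by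
      nlinarith [neg_one_le_centeredKernel u v]
    calc (𝔼 x, A x) ^ 6 * (𝔼 x, B x) ^ 6
        ≤ 𝔼 u, 𝔼 v, (1 + ρ * centeredKernel u v) *
          ((𝔼 x : Fin n → α, A (Fin.cons u x)) ^ 6 * (𝔼 y : Fin n → α, B (Fin.cons v y)) ^ 6) := by
          rw [expect_fin_succ A, expect_fin_succ B]
          exact expect_pow_six_mul_le_kernel hρ hρ' (fun u ↦ expect_nonneg fun x _ ↦ hA _)
            fun v ↦ expect_nonneg fun y _ ↦ hB _
      _ ≤ 𝔼 u, 𝔼 v, (1 + ρ * centeredKernel u v) * 𝔼 x : Fin n → α, 𝔼 y : Fin n → α,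
          (∏ i, (1 + ρ * centeredKernel (x i) (y i)))
            * (A (Fin.cons u x) ^ 6 * B (Fin.cons v y) ^ 6) :=
          expect_le_expect fun u _ ↦ expect_le_expect fun v _ ↦ mul_le_mul_of_nonneg_left
            (expect_pow_six_mul_le_fin hρ hρ' (fun x ↦ hA _) fun y ↦ hB _) (hker u v)
      _ = _ := by
          simp only [expect_fin_succ (n := n), Fin.prod_univ_succ, Fin.cons_zero, Fin.cons_succ,
            mul_assoc, ← mul_expect]
          exact expect_congr rfl fun u _ ↦ by rw [expect_comm]; simp only [mul_expect]

theorem expect_pow_six_mul_le (hρ : 0 ≤ ρ) (hρ' : ρ ≤ 5 / 8) {A B : (ι → α) → ℝ}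
    (hA : ∀ x, 0 ≤ A x) (hB : ∀ x, 0 ≤ B x) :
    (𝔼 x, A x) ^ 6 * (𝔼 x, B x) ^ 6
      ≤ 𝔼 x, 𝔼 y, (∏ i, (1 + ρ * centeredKernel (x i) (y i))) * (A x ^ 6 * B y ^ 6) := by
  let e := Fintype.equivFin ι
  have hreindex (f : (ι → α) → ℝ) : 𝔼 x, f x = 𝔼 x, f (x ∘ e) :=
    Fintype.expect_equiv (e.arrowCongr (Equiv.refl α)) _ _ fun x ↦ by
      congr 1
      ext i
      simp
  simp only [hreindex]
  refine (expect_pow_six_mul_le_fin hρ hρ' (fun x ↦ hA _) fun x ↦ hB _).trans_eq ?_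
  refine expect_congr rfl fun x _ ↦ expect_congr rfl fun y _ ↦ ?_
  rw [← e.prod_comp]
  rfl

theorem expect_pow_six_mul_le_expect_mul_noise (hρ : 0 ≤ ρ) (hρ' : ρ ≤ 5 / 8)
    {A B : (ι → α) → ℝ} (hA : ∀ x, A x ∈ Set.Icc 0 1) (hB : ∀ x, B x ∈ Set.Icc 0 1) :
    (𝔼 x, A x) ^ 6 * (𝔼 x, B x) ^ 6 ≤ 𝔼 x, A x * noise ρ B x := by
  refine (expect_pow_six_mul_le hρ hρ' (fun x ↦ (hA x).1) fun x ↦ (hB x).1).trans ?_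
  rw [expect_mul_noise]
  refine expect_le_expect fun x _ ↦ expect_le_expect fun y _ ↦ ?_
  have hker : 0 ≤ ∏ i, (1 + ρ * centeredKernel (x i) (y i)) :=
    prod_nonneg fun i _ ↦ by nlinarith [neg_one_le_centeredKernel (x i) (y i)]
  have hpow {t : ℝ} (ht : t ∈ Set.Icc 0 1) : t ^ 6 ≤ t := pow_le_of_le_one ht.1 ht.2 (by norm_num)
  rw [mul_assoc]
  exact mul_le_mul_of_nonneg_left
    (mul_le_mul (hpow (hA x)) (hpow (hB y)) (pow_nonneg (hB y).1 6) (hA x).1) hker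

end ReverseHypercontractivity

section Correlation

variable {ι α : Type*} [Fintype ι] [DecidableEq ι] [Fintype α]

theorem abs_expect_mul_le {f g : (ι → α) → ℝ} {ε : ℝ} (hε : 0 ≤ ε) (hf : 𝔼 x, f x ^ 2 ≤ ε ^ 2)
    (hg : 𝔼 x, g x ^ 2 ≤ 1) : |𝔼 x, f x * g x| ≤ ε :=
  abs_le_of_sq_le_sq
    (calc (𝔼 x, f x * g x) ^ 2 ≤ (𝔼 x, f x ^ 2) * 𝔼 x, g x ^ 2 := expect_mul_sq_le_sq_mul_sq _ f g
      _ ≤ 𝔼 x, f x ^ 2 := mul_le_of_le_one_right (expect_nonneg fun _ _ ↦ sq_nonneg _) hg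
      _ ≤ ε ^ 2 := hf) hε

variable [Nonempty α]

theorem expect_sub_le {f g : (ι → α) → ℝ} {ε : ℝ} (hε : 0 ≤ ε)
    (hfg : 𝔼 x, (f x - g x) ^ 2 ≤ ε ^ 2) : (𝔼 x, f x) - ε ≤ 𝔼 x, g x := by
  have habs := abs_expect_mul_le (g := fun _ ↦ 1) hε hfg (by simp)
  simp only [mul_one, expect_sub_distrib] at habs
  linarith [(abs_le.1 habs).2]

variable [DecidableEq α]

theorem expect_noise_sq_le {s : ℝ} (hs : s ^ 2 ≤ 1) (f : (ι → α) → ℝ) :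
    𝔼 x, noise s f x ^ 2 ≤ 𝔼 x, f x ^ 2 := by
  rw [← one_mul (𝔼 x, f x ^ 2)]
  exact expect_multiplier_sq_le
    (fun S ↦ by rw [pow_right_comm]; exact pow_le_one₀ (sq_nonneg s) hs) f

theorem sub_pow_twelve_le_expect_mul_noise_add {ρ : ℝ} (hρ : 0 ≤ ρ) (hρ' : ρ ≤ 5 / 8)
    {u v : (ι → α) → ℝ} {ε μ : ℝ} (hε : 0 ≤ ε) (hεμ : ε ≤ μ)
    (hu : 𝔼 x, (u x - clip (u x)) ^ 2 ≤ ε ^ 2) (hv : 𝔼 x, (v x - clip (v x)) ^ 2 ≤ ε ^ 2)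
    (hv1 : 𝔼 x, v x ^ 2 ≤ 1) (hμu : μ ≤ 𝔼 x, u x) (hμv : μ ≤ 𝔼 x, v x) :
    (μ - ε) ^ 12 ≤ (𝔼 x, u x * noise ρ v x) + 2 * ε := by
  let u' : (ι → α) → ℝ := clip ∘ u
  let v' : (ι → α) → ℝ := clip ∘ v
  have hu' : ∀ x, u' x ∈ Set.Icc 0 1 := fun x ↦ clip_mem_Icc _
  have hv' : ∀ x, v' x ∈ Set.Icc 0 1 := fun x ↦ clip_mem_Icc _
  have hρ2 : ρ ^ 2 ≤ 1 := pow_le_one₀ hρ (by linarith)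
  have hleft : |𝔼 x, (u x - u' x) * noise ρ v x| ≤ ε :=
    abs_expect_mul_le hε hu ((expect_noise_sq_le hρ2 v).trans hv1)
  have hright : |𝔼 x, noise ρ (v - v') x * u' x| ≤ ε :=
    abs_expect_mul_le hε ((expect_noise_sq_le hρ2 _).trans hv) (expect_sq_le_one hu')
  have hsplit : 𝔼 x, u' x * noise ρ v' x = (𝔼 x, u x * noise ρ v x)
      - (𝔼 x, (u x - u' x) * noise ρ v x) - 𝔼 x, noise ρ (v - v') x * u' x := by
    simp only [← expect_sub_distrib, map_sub, Pi.sub_apply]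
    exact expect_congr rfl fun x _ ↦ by ring
  have : 0 ≤ μ - ε := sub_nonneg.2 hεμ
  calc (μ - ε) ^ 12 = (μ - ε) ^ 6 * (μ - ε) ^ 6 := by ring
    _ ≤ (𝔼 x, u' x) ^ 6 * (𝔼 x, v' x) ^ 6 := by
        gcongr
        · exact (sub_le_sub_right hμu ε).trans (expect_sub_le hε hu)
        · exact (sub_le_sub_right hμv ε).trans (expect_sub_le hε hv)
    _ ≤ 𝔼 x, u' x * noise ρ v' x := expect_pow_six_mul_le_expect_mul_noise hρ hρ' hu' hv'
    _ ≤ _ := by linarith [(abs_le.1 hleft).1, (abs_le.1 hright).1]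

theorem expect_signFlip (F : Finset ι) (f : (ι → α) → ℝ) :
    𝔼 x, signFlip F f x = 𝔼 x, f x := by
  rw [signFlip, expect_multiplier, empty_inter, card_empty, pow_zero, one_mul]

theorem expect_mul_noise_neg (s ρ : ℝ) (F : Finset ι) (f g : (ι → α) → ℝ) :
    𝔼 x, f x * noise (-(s ^ 2 * ρ)) g x
      = 𝔼 x, signFlip F (noise s f) x * noise ρ (signFlip Fᶜ (noise s g)) x := by
  simp only [signFlip, noise, multiplier_multiplier]
  rw [← expect_mul_multiplier, multiplier_multiplier]
  congr! 4
  ext S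
  have hcard : #(S ∩ F) + #(S ∩ Fᶜ) = #S := by
    rw [← sdiff_eq_inter_compl, card_inter_add_card_sdiff]
  rw [neg_pow, mul_pow, ← hcard]
  ring

theorem sub_pow_twelve_le_expect_mul_noise_neg_add {s ρ : ℝ} (hs : s ∈ Set.Icc 0 1) (hρ : 0 ≤ ρ)
    (hρ' : ρ ≤ 5 / 8) {k : ℕ} {A B : (ι → α) → ℝ} (hA : ∀ x, A x ∈ Set.Icc 0 1)
    (hB : ∀ x, B x ∈ Set.Icc 0 1) {d η μ : ℝ} (hd : 0 ≤ d)
    (hlow : ∀ i, influence k A i ≤ d ^ 2 ∨ influence k B i ≤ d ^ 2) (hη : 0 < η) (hη1 : η ≤ 1)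
    (hsmall : (s ^ 2) ^ k + 3 * ((4 * Fintype.card α) ^ k * d) * k ≤ η ^ 3) (hημ : 4 * η ≤ μ)
    (hμA : μ ≤ 𝔼 x, A x) (hμB : μ ≤ 𝔼 x, B x) :
    (μ - 4 * η) ^ 12 ≤ (𝔼 x, A x * noise (-(s ^ 2 * ρ)) B x) + 2 * (4 * η) := by
  let F : Finset ι := {i | influence k A i ≤ d ^ 2}
  have hF : ∀ i ∈ F, influence k A i ≤ d ^ 2 := fun i hi ↦ (mem_filter.1 hi).2
  have hFc : ∀ i ∈ Fᶜ, influence k B i ≤ d ^ 2 := fun i hi ↦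
    (hlow i).resolve_left fun hAi ↦ mem_compl.1 hi (mem_filter.2 ⟨mem_univ i, hAi⟩)
  rw [expect_mul_noise_neg s ρ F]
  refine sub_pow_twelve_le_expect_mul_noise_add hρ hρ' (by positivity) hημ
    (expect_signFlip_noise_sub_clip_sq_le hs hA hd hF hη hη1 hsmall)
    (expect_signFlip_noise_sub_clip_sq_le hs hB hd hFc hη hη1 hsmall) ?_ ?_ ?_
  · exact (expect_signFlip_sq_le _ _).trans
      ((expect_noise_sq_le (pow_le_one₀ hs.1 hs.2) B).trans (expect_sq_le_one hB))
  · rwa [expect_signFlip, expect_noise]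
  · rwa [expect_signFlip, expect_noise]

end Correlation

section Parameters

variable {μ : ℝ}

theorem sq_pow_le_pow_of_log_le (hμ : 0 < μ) (hμ1 : μ ≤ 1) {k : ℕ}
    (hk : 750 * -Real.log μ ≤ k) : ((9 / 10 : ℝ) ^ 2) ^ k ≤ μ ^ 140 := by
  calc ((9 / 10 : ℝ) ^ 2) ^ k ≤ Real.exp (-(19 / 100)) ^ k := by
        refine pow_le_pow_left₀ (by positivity) ?_ k
        linarith [Real.add_one_le_exp (-(19 / 100))]
    _ = Real.exp (k * -(19 / 100)) := (Real.exp_nat_mul _ k).symm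
    _ ≤ Real.exp ((140 : ℕ) * Real.log μ) := by
        refine Real.exp_le_exp.2 ?_
        push_cast
        linarith [Real.log_nonpos hμ.le hμ1]
    _ = μ ^ 140 := by rw [Real.exp_nat_mul, Real.exp_log hμ]

theorem pow_mul_pow_mul_le_pow (hμ : 0 < μ) (hμ1 : μ ≤ 1) {q : ℕ} (hq : 1 ≤ q) {k : ℕ}
    (hk : k ≤ 753 * -Real.log μ) : (4 * (q : ℝ)) ^ k * μ ^ (7000 * q) * k ≤ μ ^ 900 := by
  have hlog : q * Real.log μ ≤ Real.log μ :=
    mul_le_of_one_le_left (Real.log_nonpos hμ.le hμ1) (Nat.one_le_cast.2 hq)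
  calc (4 * (q : ℝ)) ^ k * μ ^ (7000 * q) * k ≤ (4 * (q : ℝ)) ^ k * μ ^ (7000 * q) * 2 ^ k := by
        gcongr
        exact_mod_cast Nat.lt_two_pow_self.le
    _ = (8 * (q : ℝ)) ^ k * μ ^ (7000 * q) := by
        rw [mul_right_comm, ← mul_pow]
        ring
    _ ≤ Real.exp (8 * q) ^ k * μ ^ (7000 * q) := by
        gcongr
        linarith [Real.add_one_le_exp (8 * (q : ℝ))]
    _ = Real.exp (k * (8 * q) + (7000 * q : ℕ) * Real.log μ) := by
        rw [Real.exp_add, Real.exp_nat_mul, Real.exp_nat_mul, Real.exp_log hμ]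
    _ ≤ Real.exp ((900 : ℕ) * Real.log μ) := by
        gcongr
        push_cast
        nlinarith [mul_le_mul_of_nonneg_right hk (Nat.cast_nonneg (α := ℝ) (8 * q)),
          Real.log_nonpos hμ.le hμ1]
    _ = μ ^ 900 := by rw [Real.exp_nat_mul, Real.exp_log hμ]

theorem noise_tail_add_invariance_error_le (hμ : 0 < μ) (hμ' : μ < 3 / 5) {q : ℕ} (hq : 1 ≤ q) :
    ((9 / 10 : ℝ) ^ 2) ^ ⌈750 * Real.log (1 / μ)⌉₊ + 3 * ((4 * (q : ℝ)) ^ ⌈750 * Real.log (1 / μ)⌉₊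
      * μ ^ (7000 * q)) * ⌈750 * Real.log (1 / μ)⌉₊ ≤ (μ ^ 45) ^ 3 := by
  rw [one_div, Real.log_inv]
  set k := ⌈750 * -Real.log μ⌉₊
  have hμ1 : μ ≤ 1 := by linarith
  have hlog : 2 / 5 ≤ -Real.log μ := by linarith [Real.log_le_sub_one_of_pos hμ]
  have hk : 750 * -Real.log μ ≤ k := Nat.le_ceil _
  have hk' : (k : ℝ) ≤ 753 * -Real.log μ := by
    linarith [Nat.ceil_lt_add_one (by linarith : 0 ≤ 750 * -Real.log μ)]
  have hμ5 : 4 * μ ^ 5 ≤ 1 :=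
    calc 4 * μ ^ 5 ≤ 4 * (3 / 5) ^ 5 := by gcongr
      _ ≤ 1 := by norm_num
  calc _ ≤ μ ^ 140 + 3 * μ ^ 900 := by
        linarith [sq_pow_le_pow_of_log_le hμ hμ1 hk, pow_mul_pow_mul_le_pow hμ hμ1 hq hk']
    _ ≤ μ ^ 140 + 3 * μ ^ 140 := by
        gcongr _ + 3 * ?_
        exact pow_le_pow_of_le_one hμ.le hμ1 (by norm_num)
    _ = 4 * μ ^ 5 * μ ^ 135 := by ring
    _ ≤ μ ^ 135 := mul_le_of_le_one_left (by positivity) hμ5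
    _ = (μ ^ 45) ^ 3 := pow_mul μ 45 3

theorem pow_lt_sub_pow_twelve_sub (hμ : 0 < μ) (hμ' : μ < 3 / 5) :
    μ ^ 45 < (μ - 4 * μ ^ 45) ^ 12 - 2 * (4 * μ ^ 45) := by
  have hμ1 : μ ≤ 1 := by linarith
  have hμ2 : μ ^ 2 ≤ 9 / 25 := by nlinarith
  have hμ44 : μ ^ 44 ≤ μ ^ 4 := pow_le_pow_of_le_one hμ.le hμ1 (by norm_num)
  have hcube : μ ^ 3 ≤ μ - 4 * μ ^ 45 :=
    calc μ ^ 3 = μ * μ ^ 2 := by ring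
      _ ≤ μ * (1 - 4 * μ ^ 44) := by
          gcongr
          nlinarith
      _ = μ - 4 * μ ^ 45 := by ring
  have hμ9 : 9 * μ ^ 9 < 1 :=
    calc 9 * μ ^ 9 < 9 * (3 / 5) ^ 9 := by gcongr
      _ < 1 := by norm_num
  have hμ36 : 9 * μ ^ 45 < (μ ^ 3) ^ 12 :=
    calc 9 * μ ^ 45 = 9 * μ ^ 9 * (μ ^ 3) ^ 12 := by ring
      _ < (μ ^ 3) ^ 12 := mul_lt_of_lt_one_left (by positivity) hμ9
  have : (μ ^ 3) ^ 12 ≤ (μ - 4 * μ ^ 45) ^ 12 := by gcongr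
  linarith

end Parameters

section Disagreement

variable {ι α : Type*} [Fintype ι] [DecidableEq ι] [Fintype α] [DecidableEq α]

theorem expect_expect_ne_eq_expect_mul_noise (hα : 1 < Fintype.card α) (A B : (ι → α) → ℝ) :
    𝔼 x, 𝔼 y with ∀ i, y i ≠ x i, A x * B y
      = 𝔼 x, A x * noise (-(1 / ((Fintype.card α : ℝ) - 1))) B x := by
  have : Nonempty α := Fintype.card_pos_iff.1 (by omega)
  have hq : (0 : ℝ) < Fintype.card α - 1 := sub_pos.2 (Nat.one_lt_cast.2 hα)
  have : (Fintype.card α : ℝ) ≠ 0 := Nat.cast_ne_zero.2 Fintype.card_ne_zero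
  have hker : ∀ u v : α, 1 + -(1 / ((Fintype.card α : ℝ) - 1)) * centeredKernel u v
      = if v ≠ u then (Fintype.card α : ℝ) / (Fintype.card α - 1) else 0 := fun u v ↦ by
    simp only [centeredKernel, ne_eq, eq_comm (a := v), ite_not]
    split_ifs <;> field_simp <;> ring
  have hcard : ∀ x : ι → α, (#{y : ι → α | ∀ i, y i ≠ x i} : ℝ)
      = ((Fintype.card α : ℝ) - 1) ^ Fintype.card ι := fun x ↦ by
    have hpi : ({y : ι → α | ∀ i, y i ≠ x i} : Finset _) = Fintype.piFinset fun i ↦ {x i}ᶜ := by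
      ext y
      simp
    rw [hpi, Fintype.card_piFinset]
    simp [card_compl, Nat.cast_sub hα.le]
  rw [expect_mul_noise]
  refine expect_congr rfl fun x _ ↦ ?_
  simp only [hker, prod_ite_zero, mem_univ, true_imp_iff, prod_const, ite_mul, zero_mul]
  rw [expect_eq_sum_div_card, hcard, Fintype.expect_eq_sum_div_card, ← sum_filter]
  simp only [← mul_sum, mul_assoc, Fintype.card_fun, Nat.cast_pow, div_pow, Finset.card_univ]
  field_simp

variable {μ : ℝ} {A B : (ι → α) → ℝ}

theorem pow_four_lt_expect_mul_noise [Nonempty α] {s : ℝ} (hs : s ≤ 1)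
    (hs' : 0 ≤ 1 + s * (Fintype.card α - 1)) (hμ : 3 / 5 ≤ μ) (hμ1 : μ < 1)
    (hA : ∀ x, A x ≤ 1) (hB : ∀ x, B x ∈ Set.Icc 0 1) (hμA : μ < 𝔼 x, A x)
    (hμB : μ < 𝔼 x, B x) : μ ^ 4 < 𝔼 x, A x * noise s B x := by
  have hfactor : 0 < μ ^ 3 + μ ^ 2 + μ - 1 := by nlinarith [pow_pos (by linarith : 0 < μ) 3]
  calc μ ^ 4 < 2 * μ - 1 := by nlinarith [mul_pos (sub_pos.2 hμ1) hfactor]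
    _ ≤ (𝔼 x, A x) + (𝔼 x, B x) - 1 := by linarith
    _ ≤ _ := expect_add_expect_sub_one_le hs hs' hA hB

theorem pow_lt_expect_mul_noise_neg (hα : 3 ≤ Fintype.card α) (hμ : 0 < μ) (hμ' : μ < 3 / 5)
    (hA : ∀ x, A x ∈ Set.Icc 0 1) (hB : ∀ x, B x ∈ Set.Icc 0 1) (hμA : μ < 𝔼 x, A x)
    (hμB : μ < 𝔼 x, B x)
    (hlow : ∀ i, influence ⌈750 * Real.log (1 / μ)⌉₊ A i ≤ μ ^ (14000 * Fintype.card α) ∨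
      influence ⌈750 * Real.log (1 / μ)⌉₊ B i ≤ μ ^ (14000 * Fintype.card α)) :
    μ ^ 45 < 𝔼 x, A x * noise (-(1 / ((Fintype.card α : ℝ) - 1))) B x := by
  have : Nonempty α := Fintype.card_pos_iff.1 (by omega)
  have hq : (2 : ℝ) ≤ Fintype.card α - 1 := by
    have : (3 : ℝ) ≤ Fintype.card α := Nat.ofNat_le_cast.2 hα
    linarith
  have hμ1 : μ ≤ 1 := by linarith
  have hgap := pow_lt_sub_pow_twelve_sub hμ hμ'
  have hημ : 4 * μ ^ 45 ≤ μ :=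
    calc 4 * μ ^ 45 ≤ 4 * μ ^ 4 := by
          gcongr 4 * ?_
          exact pow_le_pow_of_le_one hμ.le hμ1 (by norm_num)
      _ = 4 * μ ^ 3 * μ := by ring
      _ ≤ 4 * (3 / 5) ^ 3 * μ := by gcongr
      _ ≤ μ := by linarith
  have hsq : μ ^ (14000 * Fintype.card α) = (μ ^ (7000 * Fintype.card α)) ^ 2 := by
    rw [← pow_mul]
    congr 1
    ring
  have hparam : 1 / ((Fintype.card α : ℝ) - 1)
      = (9 / 10) ^ 2 * (100 / 81 * (1 / ((Fintype.card α : ℝ) - 1))) := by ring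
  have hρ : 1 / ((Fintype.card α : ℝ) - 1) ≤ 1 / 2 := one_div_le_one_div_of_le two_pos hq
  rw [hparam]
  have hcore := sub_pow_twelve_le_expect_mul_noise_neg_add (s := 9 / 10)
    (ρ := 100 / 81 * (1 / ((Fintype.card α : ℝ) - 1)))
    ⟨by norm_num, by norm_num⟩ (by positivity) (by linarith) hA hB (by positivity)
    (hsq ▸ hlow) (by positivity) (pow_le_one₀ hμ.le hμ1)
    (noise_tail_add_invariance_error_le hμ hμ' (by omega)) hημ hμA.le hμB.le
  linarith

theorem exists_pow_le_influence (hα : 3 ≤ Fintype.card α) (hμ : 0 < μ) (hμ1 : μ < 1)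
    (hA : ∀ x, A x ∈ Set.Icc 0 1) (hB : ∀ x, B x ∈ Set.Icc 0 1) (hμA : μ < 𝔼 x, A x)
    (hμB : μ < 𝔼 x, B x)
    (hAB : 𝔼 x, 𝔼 y with ∀ i, y i ≠ x i, A x * B y ≤ μ ^ (14000 * Fintype.card α)) :
    ∃ i, μ ^ (14000 * Fintype.card α) ≤ influence ⌈750 * Real.log (1 / μ)⌉₊ A i ∧
      μ ^ (14000 * Fintype.card α) ≤ influence ⌈750 * Real.log (1 / μ)⌉₊ B i := by
  rw [expect_expect_ne_eq_expect_mul_noise (by omega)] at hAB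
  by_contra! hlow
  refine hAB.not_gt ?_
  rcases lt_or_ge μ (3 / 5) with hμ' | hμ'
  · exact (pow_le_pow_of_le_one hμ.le hμ1.le (by omega)).trans_lt
      (pow_lt_expect_mul_noise_neg hα hμ hμ' hA hB hμA hμB fun i ↦
        (le_or_gt _ _).imp_right fun hAi ↦ (hlow i hAi.le).le)
  · have : Nonempty α := Fintype.card_pos_iff.1 (by omega)
    have hq : (0 : ℝ) < Fintype.card α - 1 := sub_pos.2 (Nat.one_lt_cast.2 (by omega))
    exact (pow_le_pow_of_le_one hμ.le hμ1.le (by omega)).trans_lt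
      (pow_four_lt_expect_mul_noise ((neg_nonpos.2 (by positivity)).trans zero_le_one)
        (by field_simp; simp) hμ' hμ1 (fun x ↦ (hA x).2) hB hμA hμB)

end Disagreement

section Fourier

variable {ι K : Type*} [Fintype ι] [DecidableEq ι] [CommRing K] [Fintype K] {ψ : AddChar K ℂ}

/-- The Fourier coefficient at the frequency `a` of a function on `ι → K`, with respect to the
characters `x ↦ ψ (a ⬝ᵥ x)`. -/
def fourierCoeff (ψ : AddChar K ℂ) (f : (ι → K) → ℝ) (a : ι → K) : ℂ := 𝔼 x, f x * ψ (-(a ⬝ᵥ x))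

theorem norm_fourierCoeff_sq (f : (ι → K) → ℝ) (a : ι → K) :
    (‖fourierCoeff ψ f a‖ ^ 2 : ℂ) = 𝔼 x, 𝔼 y, f x * f y * ψ (a ⬝ᵥ (x - y)) := by
  rw [← Complex.conj_mul', fourierCoeff, map_expect, expect_mul_expect]
  refine expect_congr rfl fun x _ ↦ expect_congr rfl fun y _ ↦ ?_
  rw [map_mul, Complex.conj_ofReal, ← AddChar.map_neg_eq_conj, neg_neg, dotProduct_sub,
    sub_eq_add_neg, AddChar.map_add_eq_mul]
  ring

variable [DecidableEq K]

theorem sum_ne_zero_mulShift (hψ : ψ.IsPrimitive) (u v : K) :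
    ∑ a with a ≠ 0, ψ (a * (u - v)) = centeredKernel u v := by
  have hsum : ∑ a with a ≠ 0, ψ (a * (u - v)) = (∑ a, ψ (a * (u - v))) - 1 := by
    rw [filter_ne', ← add_sum_erase univ _ (mem_univ 0), zero_mul, AddChar.map_zero_eq_one,
      add_sub_cancel_left]
  rw [hsum, AddChar.sum_mulShift _ hψ, centeredKernel]
  simp only [sub_eq_zero]
  split_ifs <;> simp

theorem sum_support_eq_mulShift (hψ : ψ.IsPrimitive) (S : Finset ι) (x y : ι → K) :
    ∑ a : ι → K with ({i | a i ≠ 0} : Finset ι) = S, ψ (a ⬝ᵥ (x - y))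
      = ∏ i ∈ S, centeredKernel (x i) (y i) := by
  have hpi : ({a | ({i | a i ≠ 0} : Finset ι) = S} : Finset (ι → K))
      = Fintype.piFinset fun i ↦ {v | v ≠ 0 ↔ i ∈ S} := by
    ext a
    simp [Finset.ext_iff]
  have hfactor : ∀ i, ∑ v : K with (v ≠ 0 ↔ i ∈ S), ψ (v * (x i - y i))
      = if i ∈ S then (centeredKernel (x i) (y i) : ℂ) else 1 := fun i ↦ by
    split_ifs with hi
    · simp only [hi, iff_true, sum_ne_zero_mulShift hψ]
    · simp [hi, filter_eq']
  have hprod : ∀ a : ι → K, ψ (a ⬝ᵥ (x - y)) = ∏ i, ψ (a i * (x i - y i)) := fun a ↦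
    map_prod ψ.toMonoidHom (fun i ↦ Multiplicative.ofAdd (a i * (x i - y i))) univ
  simp only [hpi, hprod]
  rw [← prod_univ_sum _ fun i v ↦ ψ (v * (x i - y i))]
  simp only [hfactor, prod_ite_mem, univ_inter, Complex.ofReal_prod]

theorem sum_norm_fourierCoeff_sq (hψ : ψ.IsPrimitive) (S : Finset ι) (f : (ι → K) → ℝ) :
    ∑ a with ({i | a i ≠ 0} : Finset ι) = S, ‖fourierCoeff ψ f a‖ ^ 2 = weight S f := by
  rw [← Complex.ofReal_inj, ← expect_mul_efronStein_self]
  simp only [efronStein_apply]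
  push_cast
  simp only [norm_fourierCoeff_sq, ← expect_sum_comm, ← mul_sum, sum_support_eq_mulShift hψ]
  simp only [mul_expect, Complex.ofReal_prod]
  refine expect_congr rfl fun x _ ↦ expect_congr rfl fun y _ ↦ ?_
  ring

theorem influence_eq_sum_norm_fourierCoeff_sq (hψ : ψ.IsPrimitive) (k : ℕ) (f : (ι → K) → ℝ)
    (i : ι) :
    influence k f i = ∑ a with a i ≠ 0 ∧ #{j | a j ≠ 0} ≤ k, ‖fourierCoeff ψ f a‖ ^ 2 := by
  simp only [influence, ← sum_norm_fourierCoeff_sq hψ]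
  rw [← sum_fiberwise_of_maps_to (t := {S | i ∈ S ∧ #S ≤ k})
    (g := fun a : ι → K ↦ ({j | a j ≠ 0} : Finset ι)) fun a ha ↦ by simpa using ha]
  refine sum_congr rfl fun S hS ↦ sum_congr ?_ fun _ _ ↦ rfl
  ext a
  simp only [mem_filter, mem_univ, true_and, iff_and_self] at hS ⊢
  rintro rfl
  simpa using hS

end Fourier

section F3

variable {R : ℕ}

theorem omega_pow_val (v : F3) : ω ^ v.val = ZMod.stdAddChar v := by
  rw [ZMod.stdAddChar_apply, ZMod.toCircle_apply, ω, ← Complex.exp_nat_mul]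
  congr 1
  push_cast
  ring

theorem expV_eq_expect (A : (Fin R → F3) → ℝ) : expV A = 𝔼 f, A f := by
  rw [expV, Fintype.expect_eq_sum_div_card]
  simp

theorem fourierV_eq_fourierCoeff (A : (Fin R → F3) → ℝ) (a : Fin R → F3) :
    fourierV (fun f ↦ (A f : ℂ)) a = fourierCoeff ZMod.stdAddChar A a := by
  simp only [fourierV, chiV, omega_pow_val, fourierCoeff, Fintype.expect_eq_sum_div_card,
    AddChar.map_neg_eq_conj, dotProduct]
  simp

theorem infV_eq_influence (k : ℕ) (A : (Fin R → F3) → ℝ) (x : Fin R) :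
    infV k A x = influence k A x := by
  simp only [infV, suppV, fourierV_eq_fourierCoeff,
    influence_eq_sum_norm_fourierCoeff_sq (ZMod.isPrimitive_stdAddChar 3)]
  congr!

theorem sum_sum_add_div_eq_expect_expect_ne (A B : (Fin R → F3) → ℝ) :
    (∑ f, ∑ g : Fin R → F3 with ∀ i, g i ≠ 0, A f * B (f + g)) / (3 ^ R * 2 ^ R)
      = 𝔼 f, 𝔼 g with ∀ i, g i ≠ f i, A f * B g := by
  have hshift : ∀ f, 𝔼 g with ∀ i, g i ≠ f i, A f * B g
      = 𝔼 g : Fin R → F3 with ∀ i, g i ≠ 0, A f * B (f + g) := fun f ↦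
    (expect_equiv (Equiv.addLeft f) (by simp) fun _ _ ↦ rfl).symm
  have hcard : #{g : Fin R → F3 | ∀ i, g i ≠ 0} = 2 ^ R := by
    have hpi : ({g | ∀ i, g i ≠ 0} : Finset (Fin R → F3)) = Fintype.piFinset fun _ ↦ {0}ᶜ := by
      ext g
      simp
    rw [hpi, Fintype.card_piFinset]
    simp [card_compl]
  simp only [hshift, expect_eq_sum_div_card, hcard, ← sum_div]
  simp [div_div, mul_comm]

end F3

end

end MajorityStablest

theorem stmt4_general {α : Type*} [Fintype α] [DecidableEq α] (hα : 3 ≤ Fintype.card α) :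
    ∃ C : ℝ, 0 < C ∧ ∀ μ : ℝ, 0 < μ → μ < 1 →
      ∀ (ι : Type*) [Fintype ι] [DecidableEq ι] (A B : (ι → α) → ℝ),
        (∀ x, 0 ≤ A x ∧ A x ≤ 1) → (∀ x, 0 ≤ B x ∧ B x ≤ 1) →
        μ < 𝔼 x, A x → μ < 𝔼 x, B x →
        𝔼 x, 𝔼 y with ∀ i, y i ≠ x i, A x * B y ≤ μ ^ C →
        ∃ i, μ ^ C ≤ MajorityStablest.influence ⌈C * Real.log (1 / μ)⌉₊ A i ∧
          μ ^ C ≤ MajorityStablest.influence ⌈C * Real.log (1 / μ)⌉₊ B i := by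
  refine ⟨(14000 * Fintype.card α : ℕ), by positivity,
    fun μ hμ hμ1 ι _ _ A B hA hB hμA hμB hAB ↦ ?_⟩
  rw [Real.rpow_natCast] at hAB ⊢
  obtain ⟨i, hAi, hBi⟩ := MajorityStablest.exists_pow_le_influence hα hμ hμ1 hA hB hμA hμB hAB
  have hdegree : ⌈750 * Real.log (1 / μ)⌉₊
      ≤ ⌈((14000 * Fintype.card α : ℕ) : ℝ) * Real.log (1 / μ)⌉₊ := by
    gcongr
    · exact Real.log_nonneg ((one_le_div hμ).2 hμ1.le)
    · exact_mod_cast (by omega : 750 ≤ 14000 * Fintype.card α)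
  exact ⟨i, hAi.trans (MajorityStablest.influence_mono hdegree A i),
    hBi.trans (MajorityStablest.influence_mono hdegree B i)⟩

/-- Derandomized-free "majority is stablest" (Dinur–Shinkar): there is a universal `C > 0`
such that for `μ ∈ (0,1)`, `δ := μ^C`, `k := ⌈C·log(1/μ)⌉`, and any `R ≥ 1`: if
`A, B : F₃^R → [0,1]` satisfy `E[A] > μ`, `E[B] > μ` and
`E[A(f)B(f+g)] ≤ δ` (with `f` uniform and `g` uniform among vectors with all
coordinates nonzero), then some coordinate `x` has `Inf_x^{≤k}(A) ≥ δ` and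
`Inf_x^{≤k}(B) ≥ δ`. -/
theorem stmt4 :
    ∃ C : ℝ, 0 < C ∧
      ∀ μ : ℝ, 0 < μ → μ < 1 →
        ∀ R : ℕ, 1 ≤ R →
          ∀ A B : (Fin R → F3) → ℝ,
            (∀ f, 0 ≤ A f ∧ A f ≤ 1) → (∀ f, 0 ≤ B f ∧ B f ≤ 1) →
            μ < expV A → μ < expV B →
            (∑ f : Fin R → F3,
                ∑ g ∈ Finset.univ.filter (fun g : Fin R → F3 => ∀ i, g i ≠ 0),
                  A f * B (f + g)) / (3 ^ R * 2 ^ R) ≤ μ ^ C →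
            ∃ x : Fin R,
              μ ^ C ≤ infV ⌈C * Real.log (1 / μ)⌉₊ A x ∧
              μ ^ C ≤ infV ⌈C * Real.log (1 / μ)⌉₊ B x := by
  obtain ⟨C, hC, hgeneral⟩ := stmt4_general (α := F3) (ZMod.card 3).ge
  refine ⟨C, hC, fun μ hμ hμ1 R _ A B hA hB ↦ ?_⟩
  simp only [MajorityStablest.expV_eq_expect, MajorityStablest.infV_eq_influence,
    MajorityStablest.sum_sum_add_div_eq_expect_expect_ne]
  convert hgeneral μ hμ hμ1 (Fin R) A B hA hB
end

section
/- Let f ∈ F₃[x₁,…,x_r] be a non-zero polynomial of total degree at most d in which every variable has individual degree at most 2. Then Pr_{a ∈ F₃^r}[f(a) ≠ 0] ≥ 3^{−d/2}, where a is uniform on F₃^r. -/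
open scoped BigOperators

/-!
Over an integral domain, consider a grid with `q` values for each variable. Peel off one variable
at a time: if `x₀` occurs in `f` to the highest power `k`, with coefficient `g` a polynomial in the
other variables, then above each point where `g` does not vanish, `f` restricts to a univariate
polynomial of degree `k`, which is non-zero at all but at most `k` of the `q` values of `x₀`.
Iterating yields a single monomial `m` of `f`, the lexicographically leading one, such that `f` is
non-zero on at least a fraction `∏ i, (1 - m i / q)` of the grid. By Bernoulli's inequality
`q ^ (-k / (q - 1)) ≤ 1 - k / q` for `0 ≤ k ≤ q - 1`, so that fraction is at least
`q ^ (-(∑ i, m i) / (q - 1))`.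
-/

section AlonFuredi

open Finset
open Fintype (piFinset)

theorem card_sub_natDegree_le_card_eval_ne_zero {R : Type*} [CommRing R] [IsDomain R]
    [DecidableEq R] (S : Finset R) {p : Polynomial R} (hp : p ≠ 0) :
    #S - p.natDegree ≤ #{a ∈ S | p.eval a ≠ 0} := by
  have hroots : #{a ∈ S | p.eval a = 0} ≤ p.natDegree :=
    Polynomial.card_le_degree_of_subset_roots fun a ha =>
      (Polynomial.mem_roots hp).2 (mem_filter.1 ha).2
  have hsplit := card_filter_add_card_filter_not (s := S) fun a => p.eval a = 0
  lia

theorem card_mul_le_card_filter_piFinset {n m : ℕ} {α : Fin (n + 1) → Type*}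
    (S : ∀ i, Finset (α i)) (p : (∀ i, α i) → Prop) [DecidablePred p]
    {T : Finset (∀ i, α (Fin.succ i))} (hT : T ⊆ piFinset (Fin.tail S))
    (hm : ∀ t ∈ T, m ≤ #{a ∈ S 0 | p (Fin.cons a t)}) :
    #T * m ≤ #{x ∈ piFinset S | p x} := by
  calc
    #T * m ≤ #(T.sigma fun t => {a ∈ S 0 | p (Fin.cons a t)}) := by
      rw [card_sigma, ← smul_eq_mul]
      exact card_nsmul_le_sum _ _ _ hm
    _ ≤ #{x ∈ piFinset S | p x} := by
      refine card_le_card_of_injOn (fun y => (Fin.cons y.2 y.1 : ∀ i, α i)) ?_ ?_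
      · rintro ⟨t, a⟩ hta
        obtain ⟨ht, ha, hp⟩ : t ∈ T ∧ a ∈ S 0 ∧ p (Fin.cons a t) := by simpa using hta
        exact mem_filter.2 ⟨Fin.mem_piFinset_iff_zero_tail.2 ⟨ha, hT ht⟩, hp⟩
      · rintro ⟨t, a⟩ _ ⟨t', a'⟩ _ heq
        obtain ⟨rfl, rfl⟩ := Fin.cons_injective2 heq
        rfl

variable {R : Type*} [CommRing R] [IsDomain R] [DecidableEq R] {n : ℕ}

open MvPolynomial

theorem card_eval_leadingCoeff_ne_zero_mul_le (S : Fin (n + 1) → Finset R)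
    (f : MvPolynomial (Fin (n + 1)) R) :
    #{t ∈ piFinset (Fin.tail S) | eval t (finSuccEquiv R n f).leadingCoeff ≠ 0} *
        (#(S 0) - (finSuccEquiv R n f).natDegree) ≤
      #{x ∈ piFinset S | eval x f ≠ 0} := by
  refine card_mul_le_card_filter_piFinset S _ (filter_subset _ _) fun t ht => ?_
  have hlead := (mem_filter.1 ht).2
  have hne : (finSuccEquiv R n f).map (eval t) ≠ 0 := fun h =>
    hlead <| by rw [Polynomial.leadingCoeff, ← Polynomial.coeff_map, h, Polynomial.coeff_zero]
  simpa only [eval_eq_eval_mv_eval', Polynomial.natDegree_map_of_leadingCoeff_ne_zero _ hlead]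
    using card_sub_natDegree_le_card_eval_ne_zero (S 0) hne

theorem exists_mem_support_prod_card_sub_le_card_eval_ne_zero (S : Fin n → Finset R)
    {f : MvPolynomial (Fin n) R} (hf : f ≠ 0) :
    ∃ m ∈ f.support, ∏ i, (#(S i) - m i) ≤ #{x ∈ piFinset S | eval x f ≠ 0} := by
  induction n with
  | zero =>
    obtain ⟨c, rfl⟩ := C_surjective (Fin 0) f
    have hc : c ≠ 0 := by simpa using hf
    exact ⟨0, by simp [hc], by simp [hc]⟩
  | succ n ih =>
    have hlead : (finSuccEquiv R n f).leadingCoeff ≠ 0 := by simpa using hf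
    obtain ⟨m, hm, hcard⟩ := ih (Fin.tail S) hlead
    refine ⟨m.cons (finSuccEquiv R n f).natDegree, mem_support_coeff_finSuccEquiv.1 hm, ?_⟩
    rw [Fin.prod_univ_succ, mul_comm]
    simp only [Finsupp.cons_zero, Finsupp.cons_succ]
    exact (Nat.mul_le_mul_right _ hcard).trans (card_eval_leadingCoeff_ne_zero_mul_le S f)

theorem rpow_neg_div_sub_one_le_one_sub_div {q k : ℝ} (hq : 1 < q) (hk₀ : 0 ≤ k)
    (hk : k ≤ q - 1) : q ^ (-k / (q - 1)) ≤ 1 - k / q := by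
  have hq₁ : 0 < q - 1 := sub_pos.2 hq
  have hq₀ : 0 < q := one_pos.trans hq
  have bernoulli : q ^ (1 + -k / (q - 1)) ≤ q - k := calc
    q ^ (1 + -k / (q - 1)) = (1 + (q - 1)) ^ (1 - k / (q - 1)) := by ring_nf
    _ ≤ 1 + (1 - k / (q - 1)) * (q - 1) := by
      refine rpow_one_add_le_one_add_mul_self (by linarith) ?_ ?_
      · exact sub_nonneg.2 ((div_le_one hq₁).2 hk)
      · exact sub_le_self _ (by positivity)
    _ = q - k := by field_simp; ring
  rw [Real.rpow_add hq₀, Real.rpow_one] at bernoulli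
  rw [one_sub_div hq₀.ne']
  exact (le_div_iff₀' hq₀).2 bernoulli

theorem rpow_neg_sum_div_sub_one_le_prod_one_sub_div {ι : Type*} {q : ℝ} (hq : 1 < q)
    (s : Finset ι) {k : ι → ℝ} (hk₀ : ∀ i ∈ s, 0 ≤ k i) (hk : ∀ i ∈ s, k i ≤ q - 1) :
    q ^ (-(∑ i ∈ s, k i) / (q - 1)) ≤ ∏ i ∈ s, (1 - k i / q) := by
  have hq₀ : 0 < q := one_pos.trans hq
  rw [← sum_neg_distrib, sum_div, Real.rpow_sum_of_pos hq₀]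
  exact prod_le_prod (fun i _ => by positivity) fun i hi =>
    rpow_neg_div_sub_one_le_one_sub_div hq (hk₀ i hi) (hk i hi)

theorem stmt7_general {q d : ℕ} (hq : 1 < q) (S : Fin n → Finset R) (hS : ∀ i, #(S i) = q)
    {f : MvPolynomial (Fin n) R} (hf : f ≠ 0) (hdeg : f.totalDegree ≤ d)
    (hind : ∀ i, f.degreeOf i < q) :
    (q : ℝ) ^ (-(d : ℝ) / (q - 1)) ≤ #{x ∈ piFinset S | eval x f ≠ 0} / (q : ℝ) ^ n := by
  obtain ⟨m, hm, hcard⟩ := exists_mem_support_prod_card_sub_le_card_eval_ne_zero S hf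
  have hq₁ : (1 : ℝ) < q := by exact_mod_cast hq
  have hm_lt (i : Fin n) : m i < q := (monomial_le_degreeOf i hm).trans_lt (hind i)
  have hm_sum : ∑ i, (m i : ℝ) ≤ d := by
    have hm_deg := (le_totalDegree hm).trans hdeg
    rw [Finsupp.sum_fintype _ _ fun _ => rfl] at hm_deg
    exact_mod_cast hm_deg
  calc
    (q : ℝ) ^ (-(d : ℝ) / (q - 1)) ≤ (q : ℝ) ^ (-(∑ i, (m i : ℝ)) / (q - 1)) :=
      Real.rpow_le_rpow_of_exponent_le hq₁.le <|
        div_le_div_of_nonneg_right (neg_le_neg hm_sum) (sub_pos.2 hq₁).le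
    _ ≤ ∏ i, (1 - (m i : ℝ) / q) :=
      rpow_neg_sum_div_sub_one_le_prod_one_sub_div hq₁ _ (fun i _ => (m i).cast_nonneg)
        fun i _ => le_sub_iff_add_le.2 (by exact_mod_cast hm_lt i)
    _ = ((∏ i, (#(S i) - m i) : ℕ) : ℝ) / (q : ℝ) ^ n := by
      have hfactor (i : Fin n) : 1 - (m i : ℝ) / q = ((#(S i) - m i : ℕ) : ℝ) / q := by
        rw [hS, Nat.cast_sub (hm_lt i).le, sub_div, div_self (by positivity)]
      simp only [hfactor, prod_div_distrib, prod_const, card_univ, Fintype.card_fin,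
        Nat.cast_prod]
    _ ≤ #{x ∈ piFinset S | eval x f ≠ 0} / (q : ℝ) ^ n := by gcongr

end AlonFuredi

/-- Schwartz–Zippel over `F₃` for polynomials with individual degrees at most 2:
a nonzero such polynomial of total degree at most `d` is nonzero on at least a
`3^{−d/2}` fraction of points. -/
theorem stmt7 (r d : ℕ) (f : MvPolynomial (Fin r) F3) (hf : f ≠ 0)
    (hdeg : f.totalDegree ≤ d) (hind : ∀ i, f.degreeOf i ≤ 2) :
    (3 : ℝ) ^ (-(d : ℝ) / 2) ≤
      ((Finset.univ.filter (fun a : Fin r → F3 => MvPolynomial.eval a f ≠ 0)).card : ℝ)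
        / 3 ^ r := by
  have h := stmt7_general (q := 3) (by norm_num) (fun _ => Finset.univ) (fun _ => ZMod.card 3) hf
    hdeg fun i => Nat.lt_succ_of_le (hind i)
  simpa [show (3 : ℝ) - 1 = 2 by norm_num] using h
end

section
/- For all r, d ∈ ℕ and every t ∈ ℕ with t < 3^{(d+1)/2}: for any t distinct points x₁,…,x_t ∈ F₃^r and any values b₁,…,b_t ∈ F₃, Pr_{p}[p(x_i) = b_i for all i ∈ {1,…,t}] = 3^{−t}, where p is uniform on P_{r,d}. (That is, a uniformly random element of P_{r,d}, viewed as a string of length 3^r over F₃, is t-wise independent.) -/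
open scoped BigOperators

abbrev Pt (r : ℕ) := Fin r → F3
abbrev Fn (r : ℕ) := Pt r → F3

/-- The set of functions `F₃^r → F₃` computed by polynomials of total degree at most `d`
with individual degrees at most `2`. -/
def PolySet (r d : ℕ) : Set (Fn r) :=
  {g | ∃ P : MvPolynomial (Fin r) F3,
        P.totalDegree ≤ d ∧ (∀ i, P.degreeOf i ≤ 2) ∧
        ∀ x, g x = MvPolynomial.eval x P}

noncomputable def polyFinset (r d : ℕ) : Finset (Fn r) :=
  (Set.toFinite (PolySet r d)).toFinset

/-- Support size `|β|`. -/
def supp {r : ℕ} (β : Fn r) : ℕ := (Finset.univ.filter fun x => β x ≠ 0).card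

/-- Dot product `⟨β, f⟩ = Σ_x β(x) f(x)` in `F₃`. -/
def dotF {r : ℕ} (β f : Fn r) : F3 := ∑ x, β x * f x

/-- The character `χ_β(f) = ω^{⟨β,f⟩}`. -/
noncomputable def chi {r : ℕ} (β f : Fn r) : ℂ := ω ^ (dotF β f).val

/-- The dual `S^⊥` of a set of functions. -/
def dualSet (r : ℕ) (S : Set (Fn r)) : Set (Fn r) := {g | ∀ h ∈ S, dotF g h = 0}

/-- `Λ` contains exactly one representative, of minimal support size, from each coset
of `𝔉_r` modulo `P_{r,d}^⊥`. -/
def IsMinRepSet (r d : ℕ) (Λ : Finset (Fn r)) : Prop :=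
  (∀ β : Fn r, ∃! β', β' ∈ Λ ∧ β - β' ∈ dualSet r (PolySet r d)) ∧
  (∀ β' ∈ Λ, ∀ γ : Fn r, β' - γ ∈ dualSet r (PolySet r d) → supp β' ≤ supp γ)

/-- The noise `a·(p² + 1)` (pointwise). -/
def shift {r : ℕ} (p : Fn r) (a : F3) : Fn r := fun x => a * (p x ^ 2 + 1)

/-- Fourier coefficient `Â(β)` of a function on `P_{r,d}`. -/
noncomputable def fourierP (r d : ℕ) (A : Fn r → ℂ) (β : Fn r) : ℂ :=
  (∑ g ∈ polyFinset r d, A g * (starRingEnd ℂ) (chi β g)) / ((polyFinset r d).card : ℂ)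

/-- Expectation `E_{f ∈ P_{r,d}}[A(f)]`. -/
noncomputable def expP (r d : ℕ) (A : Fn r → ℝ) : ℝ :=
  (∑ f ∈ polyFinset r d, A f) / ((polyFinset r d).card : ℝ)

/-- Degree-`k` influence `Inf_x^{≤k}(A)` with respect to a set `Λ` of minimal-support
coset representatives. -/
noncomputable def infP (r d k : ℕ) (Λ : Finset (Fn r)) (A : Fn r → ℝ) (x : Pt r) : ℝ :=
  ∑ β ∈ Λ.filter (fun β => β x ≠ 0 ∧ supp β ≤ k),
    ‖fourierP r d (fun g => (A g : ℂ)) β‖ ^ 2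

/-!
Over a field with `q` elements, the polynomials vanishing at `t` given points form an ideal whose
quotient has dimension at most `t`. Its standard monomials `X^m` are closed under division and
linearly independent modulo the ideal, so the `∏ (m_i + 1)` divisors of any of them number at most
`t`; and each `m_i` is less than `q` because `X_i^q - X_i` vanishes everywhere. By Bernoulli's
inequality `q^(m_i / (q - 1)) ≤ m_i + 1`, hence `q^(deg m / (q - 1)) ≤ t < q^((d + 1) / (q - 1))`
and `deg m ≤ d`. Every function on the points is a combination of standard monomials, so evaluation
at the points maps the reduced polynomials of degree at most `d` onto all `t`-tuples of values;
all fibres of a surjective linear map have the same size.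
-/

section StandardMonomials

open MvPolynomial

variable {σ K : Type*} [Field K] {ord : MonomialOrder σ} {I : Ideal (MvPolynomial σ K)}

/-- The standard monomials of an ideal `I` with respect to a monomial order: the exponents not
divisible by the leading exponent of any nonzero element of `I`. They span a complement of `I`. -/
def standardMonomials (ord : MonomialOrder σ) (I : Ideal (MvPolynomial σ K)) : Set (σ →₀ ℕ) :=
  {m | ∀ P ∈ I, P ≠ 0 → ¬ ord.degree P ≤ m}

theorem isLowerSet_standardMonomials : IsLowerSet (standardMonomials ord I) :=
  fun _ _ hle hm P hP hP0 hdeg => hm P hP hP0 (hdeg.trans hle)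

theorem disjoint_restrictSupport_standardMonomials :
    Disjoint (restrictSupport K (standardMonomials ord I)) (I.restrictScalars K) := by
  refine Submodule.disjoint_def.2 fun P hP hPI => ?_
  by_contra hP0
  exact hP (ord.degree_mem_support hP0) P hPI hP0 le_rfl

theorem codisjoint_restrictSupport_standardMonomials :
    Codisjoint (restrictSupport K (standardMonomials ord I)) (I.restrictScalars K) := by
  refine codisjoint_iff.2 (eq_top_iff.2 fun P _ => ?_)
  obtain ⟨g, R, hP, -, hR⟩ := ord.div_set (B := {b | b ∈ I ∧ b ≠ 0})
    (fun b hb => (ord.leadingCoeff_ne_zero_iff.2 hb.2).isUnit) P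
  have hg : Finsupp.linearCombination _ Subtype.val g ∈ I :=
    I.sum_mem fun b _ => I.mul_mem_left _ b.2.1
  rw [hP, add_comm]
  exact Submodule.add_mem_sup (fun m hm Q hQ hQ0 => hR m hm Q ⟨hQ, hQ0⟩) hg

theorem lt_natDegree_of_mem_standardMonomials {m : σ →₀ ℕ} (hm : m ∈ standardMonomials ord I)
    {i : σ} {p : Polynomial K} (hp : p ≠ 0) (hpI : p.toMvPolynomial i ∈ I) :
    m i < p.natDegree := by
  by_contra! hle
  have hsupp : p.toMvPolynomial i ∈ restrictSupport K (standardMonomials ord I) := by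
    rw [Polynomial.toMvPolynomial, Polynomial.aeval_eq_sum_range]
    refine Submodule.sum_mem _ fun k hk => Submodule.smul_mem _ _ ?_
    rw [X_pow_eq_monomial, monomial_mem_restrictSupport]
    refine .inl (isLowerSet_standardMonomials ?_ hm)
    rw [Finsupp.single_le_iff]
    exact (Finset.mem_range_succ_iff.1 hk).trans hle
  have hzero := Submodule.disjoint_def.1 disjoint_restrictSupport_standardMonomials _ hsupp hpI
  exact hp (Polynomial.toMvPolynomial_injective i (by rw [hzero, map_zero]))

theorem prod_add_one_le_finrank_of_mem_standardMonomials_ker {A : Type*} [Ring A] [Algebra K A]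
    [Module.Finite K A] {φ : MvPolynomial σ K →ₐ[K] A} {m : σ →₀ ℕ}
    (hm : m ∈ standardMonomials ord (RingHom.ker φ)) :
    ∏ i ∈ m.support, (m i + 1) ≤ Module.finrank K A := by
  classical
  have hsub : restrictSupport K (Set.Iic m) ≤
      restrictSupport K (standardMonomials ord (RingHom.ker φ)) :=
    restrictSupport_mono K fun n hn => isLowerSet_standardMonomials hn hm
  have hinj : Function.Injective (φ.toLinearMap.domRestrict (restrictSupport K (Set.Iic m))) := by
    refine (injective_iff_map_eq_zero _).2 fun P hP => Subtype.ext ?_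
    exact Submodule.disjoint_def.1 disjoint_restrictSupport_standardMonomials _ (hsub P.2) hP
  calc ∏ i ∈ m.support, (m i + 1) = (Finset.Iic m).card := by
        simp only [Finsupp.card_Iic, Nat.card_Iic]
    _ = Module.finrank K (restrictSupport K (Set.Iic m)) := by
        rw [Module.finrank_eq_nat_card_basis (basisRestrictSupport K (Set.Iic m)),
          Nat.card_coe_set_eq, ← Finset.coe_Iic, Set.ncard_coe_finset]
    _ ≤ Module.finrank K A := LinearMap.finrank_le_finrank_of_injective hinj

end StandardMonomials

section Bernoulli

variable {q : ℝ}

theorem rpow_div_sub_one_le_add_one {a : ℝ} (ha : 0 ≤ a) (haq : a ≤ q - 1) :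
    q ^ (a / (q - 1)) ≤ a + 1 := by
  have hbern := rpow_one_add_le_one_add_mul_self (s := q - 1) (p := a / (q - 1))
    (by linarith) (div_nonneg ha (ha.trans haq)) (div_le_one_of_le₀ haq (ha.trans haq))
  rwa [div_mul_cancel_of_imp fun h => by linarith, add_sub_cancel, add_comm 1] at hbern

theorem rpow_degree_div_sub_one_le_prod_add_one {σ : Type*} {m : σ →₀ ℕ} (hq : 0 < q)
    (hm : ∀ i, (m i : ℝ) ≤ q - 1) :
    q ^ ((m.degree : ℝ) / (q - 1)) ≤ ∏ i ∈ m.support, ((m i : ℝ) + 1) := by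
  rw [Finsupp.degree_apply, Nat.cast_sum, Finset.sum_div, Real.rpow_sum_of_pos hq]
  exact Finset.prod_le_prod (fun i _ => by positivity)
    fun i _ => rpow_div_sub_one_le_add_one (Nat.cast_nonneg _) (hm i)

end Bernoulli

theorem card_fiber_mul_card_of_surjective {V W : Type*} [AddGroup V] [AddGroup W] {f : V →+ W}
    (hf : Function.Surjective f) (w : W) :
    Nat.card {v // f v = w} * Nat.card W = Nat.card V := by
  rw [← f.ker.card_mul_index, AddSubgroup.index_ker, AddMonoidHom.range_eq_top.2 hf,
    AddSubgroup.card_top]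
  congr 1
  exact Nat.card_congr (f.fiberEquivKerOfSurjective hf w)

section FiniteField

open MvPolynomial

variable {σ K ι : Type*} [Field K]

/-- Simultaneous evaluation at the points `x i`, a homomorphism from polynomials to the algebra
`ι → K`; its kernel is the ideal of polynomials vanishing at all these points. -/
noncomputable def evalPoints (x : ι → σ → K) : MvPolynomial σ K →ₐ[K] ι → K :=
  AlgHom.pi fun i => aeval (x i)

theorem evalPoints_apply (x : ι → σ → K) (P : MvPolynomial σ K) (i : ι) :
    evalPoints x P i = eval (x i) P := by
  rw [← coe_aeval_eq_eval]; rfl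

theorem evalPoints_surjective [Finite K] [Finite σ] {x : ι → σ → K} (hx : Function.Injective x) :
    Function.Surjective (evalPoints x) := by
  intro b
  cases nonempty_fintype K
  obtain ⟨P, -, hP⟩ := (map_restrict_dom_evalₗ K σ).ge (Submodule.mem_top (x := x.extend b 0))
  refine ⟨P, funext fun i => ?_⟩
  rw [evalPoints_apply, ← evalₗ_apply, hP, hx.extend_apply]

variable [Fintype K]

theorem lt_card_of_mem_standardMonomials_ker {ord : MonomialOrder σ} {x : ι → σ → K} {m : σ →₀ ℕ}
    (hm : m ∈ standardMonomials ord (RingHom.ker (evalPoints x))) (i : σ) :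
    m i < Fintype.card K := by
  have hcard := Fintype.one_lt_card (α := K)
  rw [← FiniteField.X_pow_card_sub_X_natDegree_eq K hcard]
  refine lt_natDegree_of_mem_standardMonomials hm (FiniteField.X_pow_card_sub_X_ne_zero K hcard) ?_
  refine RingHom.mem_ker.2 (funext fun j => ?_)
  simp [evalPoints_apply, FiniteField.pow_card]

variable [Fintype ι]

theorem degree_le_of_mem_standardMonomials_ker {ord : MonomialOrder σ} {x : ι → σ → K} {d : ℕ}
    (hι : (Fintype.card ι : ℝ) < (Fintype.card K : ℝ) ^ (((d : ℝ) + 1) / (Fintype.card K - 1)))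
    {m : σ →₀ ℕ} (hm : m ∈ standardMonomials ord (RingHom.ker (evalPoints x))) :
    m.degree ≤ d := by
  have hcard : (1 : ℝ) < Fintype.card K := mod_cast Fintype.one_lt_card
  have hind (i : σ) : (m i : ℝ) ≤ Fintype.card K - 1 :=
    le_sub_iff_add_le.2 (mod_cast lt_card_of_mem_standardMonomials_ker hm i)
  have hprod : ∏ i ∈ m.support, ((m i : ℝ) + 1) ≤ Fintype.card ι := by
    rw [← Module.finrank_fintype_fun_eq_card K]
    exact_mod_cast prod_add_one_le_finrank_of_mem_standardMonomials_ker hm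
  have hlt : (m.degree : ℝ) / (Fintype.card K - 1) < ((d : ℝ) + 1) / (Fintype.card K - 1) :=
    (Real.rpow_lt_rpow_left_iff hcard).1 <|
      (rpow_degree_div_sub_one_le_prod_add_one (by linarith) hind).trans_lt (hprod.trans_lt hι)
  have hlt_succ : (m.degree : ℝ) < d + 1 := (div_lt_div_iff_of_pos_right (sub_pos.2 hcard)).1 hlt
  exact Nat.lt_succ_iff.1 (mod_cast hlt_succ)

/-- The space `P_{r,d}` over an arbitrary finite field `K`, with variables indexed by `σ`:
functions given by polynomials of total degree at most `d` and individual degrees at most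
`|K| - 1`. -/
noncomputable def reducedPolyFun (σ K : Type*) [Field K] [Fintype K] (d : ℕ) :
    Submodule K ((σ → K) → K) :=
  (restrictTotalDegree σ K d ⊓ restrictDegree σ K (Fintype.card K - 1)).map (evalₗ K σ)

theorem exists_mem_reducedPolyFun_forall_eq [Finite σ] {d : ℕ}
    (hι : (Fintype.card ι : ℝ) < (Fintype.card K : ℝ) ^ (((d : ℝ) + 1) / (Fintype.card K - 1)))
    {x : ι → σ → K} (hx : Function.Injective x) (b : ι → K) :
    ∃ p ∈ reducedPolyFun σ K d, ∀ i, p (x i) = b i := by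
  classical
  let : LinearOrder σ := linearOrderOfSTO WellOrderingRel
  obtain ⟨P, hP⟩ := evalPoints_surjective hx b
  obtain ⟨R, Q, hR, hQ, rfl⟩ := Submodule.codisjoint_iff_exists_add_eq.1
    (codisjoint_restrictSupport_standardMonomials
      (ord := .lex) (I := RingHom.ker (evalPoints x))) P
  have hRb : evalPoints x R = b := by
    rw [← hP, map_add, RingHom.mem_ker.1 hQ, add_zero]
  refine ⟨evalₗ K σ R, Submodule.mem_map_of_mem ⟨?_, ?_⟩, fun i => ?_⟩
  · exact fun m hm => degree_le_of_mem_standardMonomials_ker hι (hR hm)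
  · exact fun m hm i => Nat.le_sub_one_of_lt (lt_card_of_mem_standardMonomials_ker (hR hm) i)
  · rw [evalₗ_apply, ← evalPoints_apply, hRb]

theorem mem_polyFinset_iff_mem_reducedPolyFun {r d : ℕ} {p : Fn r} :
    p ∈ polyFinset r d ↔ p ∈ reducedPolyFun (Fin r) F3 d := by
  classical
  simp only [polyFinset, PolySet, reducedPolyFun, Set.Finite.mem_toFinset, Set.mem_ofPred_eq,
    Submodule.mem_map, Submodule.mem_inf, mem_restrictTotalDegree, mem_restrictDegree_iff_sup,
    degreeOf_def, ZMod.card, and_assoc, funext_iff, evalₗ_apply, eq_comm]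

theorem card_polyFinset (r d : ℕ) :
    (polyFinset r d).card = Nat.card (reducedPolyFun (Fin r) F3 d) :=
  (Nat.subtype_card _ fun _ => mem_polyFinset_iff_mem_reducedPolyFun).symm

theorem card_filter_polyFinset (r d : ℕ) (P : Fn r → Prop) [DecidablePred P] :
    ((polyFinset r d).filter P).card = {p ∈ reducedPolyFun (Fin r) F3 d | P p}.ncard := by
  simp only [← Set.ncard_coe_finset, Finset.coe_filter, mem_polyFinset_iff_mem_reducedPolyFun]

end FiniteField

theorem stmt8_general {σ K ι : Type*} [Finite σ] [Field K] [Fintype K] [Fintype ι] (d : ℕ)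
    (hι : (Fintype.card ι : ℝ) < (Fintype.card K : ℝ) ^ (((d : ℝ) + 1) / (Fintype.card K - 1)))
    (x : ι → σ → K) (hx : Function.Injective x) (b : ι → K) :
    ({p ∈ reducedPolyFun σ K d | ∀ i, p (x i) = b i}.ncard : ℝ) /
      Nat.card (reducedPolyFun σ K d) = 1 / (Fintype.card K : ℝ) ^ Fintype.card ι := by
  let restrict : reducedPolyFun σ K d →ₗ[K] ι → K := (LinearMap.funLeft K K x).domRestrict _
  have hsurj : Function.Surjective restrict := fun c =>
    let ⟨p, hp, hpc⟩ := exists_mem_reducedPolyFun_forall_eq hι hx c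
    ⟨⟨p, hp⟩, funext hpc⟩
  have hfiber : {p ∈ reducedPolyFun σ K d | ∀ i, p (x i) = b i}.ncard =
      Nat.card {p // restrict p = b} := by
    simp only [funext_iff]
    exact (Nat.card_congr (Equiv.subtypeSubtypeEquivSubtypeInter _ _)).symm
  have hcard : Nat.card {p // restrict p = b} * Fintype.card K ^ Fintype.card ι =
      Nat.card (reducedPolyFun σ K d) := by
    rw [← Nat.card_eq_fintype_card, ← Nat.card_eq_fintype_card, ← Nat.card_fun]
    exact card_fiber_mul_card_of_surjective (f := restrict.toAddMonoidHom) hsurj b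
  have hne : Nat.card (reducedPolyFun σ K d) ≠ 0 := Nat.card_pos.ne'
  rw [div_eq_div_iff (mod_cast hne) (by positivity), one_mul, hfiber]
  exact_mod_cast hcard

/-- A uniformly random polynomial in `P_{r,d}` is `t`-wise independent for
`t < 3^{(d+1)/2}`: its values at any `t` distinct points are uniform in `F₃^t`. -/
theorem stmt8 (r d t : ℕ) (ht : (t : ℝ) < (3 : ℝ) ^ (((d : ℝ) + 1) / 2))
    (x : Fin t → Pt r) (hx : Function.Injective x) (b : Fin t → F3) :
    (((polyFinset r d).filter (fun p => ∀ i, p (x i) = b i)).card : ℝ)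
        / ((polyFinset r d).card : ℝ) = 1 / 3 ^ t := by
  rw [card_filter_polyFinset, card_polyFinset]
  simpa using stmt8_general d (by norm_num [ht]) x hx b
end

section
/- There exist a universal constant c > 0 and d₀ ∈ ℕ such that for all d ≥ d₀, all r ∈ ℕ and every α : F₃^r → F₃ with Δ(α, P_{r,2d}^⊥) > 3^{d/2}: |E_{p ∈ P_{r,d}}[ω^{⟨α, p²⟩}]| ≤ 3^{−c·3^{d/9}}, where p is uniform on P_{r,d} and p² denotes the pointwise square of p. -/
open scoped BigOperators

/-- Hamming distance between two functions `F₃^r → F₃`. -/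
def hammingD {r : ℕ} (f g : Fn r) : ℕ := (Finset.univ.filter fun x => f x ≠ g x).card

/-! Squaring the exponential sum shows that `|𝔼 ω^⟨α, p²⟩|² = q^(-ρ)`, where `ρ` is the rank of the
Hankel form `(p, q) ↦ ⟨α, p q⟩` on functions of degree at most `d`, so a large bias means a small
`ρ`. A monomial of degree about `2d/9` has more divisors than such a rank allows, which makes the
Hankel form flat: modulo its kernel every function reduces to degree at most `s ≈ 2d/9`. On the
reduced functions, multiplication by the coordinates gives commuting operators `Xᵢ` with `Xᵢ^q =
Xᵢ`. Their joint eigenvalues are points of the grid, which produces `β` with at most `ρ` nonzero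
values that agrees with `α` on all functions of degree at most `d - s`. The Hankel form of `α - β`
has rank at most `2ρ`. If `α - β` did not vanish on degree at most `2d`, the first monomial on which
it is nonzero would have so many divisors of half its degree that this rank would be exceeded. Hence
`α` lies within distance `ρ` of the dual code in degree `2d`. -/

namespace ReedMuller

section Monomials

/-- The `i`-th coordinate function on the grid `σ → F`. -/
def coordFun (F : Type*) {σ : Type*} (i : σ) : (σ → F) → F := fun x ↦ x i

lemma coordFun_pow_card {F σ : Type*} [Field F] [Fintype F] (i : σ) :
    coordFun F i ^ Fintype.card F = coordFun F i :=
  funext fun x ↦ FiniteField.pow_card (x i)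

variable {F σ : Type*} [Field F] [Fintype σ]

/-- The function on the grid `σ → F` given by the monomial with exponent vector `e`. -/
def monomialFun (F : Type*) [Field F] (e : σ →₀ ℕ) : (σ → F) → F := fun x ↦ ∏ i, x i ^ e i

@[simp]
lemma monomialFun_zero : monomialFun F (0 : σ →₀ ℕ) = 1 := by
  ext x
  simp [monomialFun]

lemma monomialFun_add (e f : σ →₀ ℕ) :
    monomialFun F (e + f) = monomialFun F e * monomialFun F f := by
  ext x
  simp [monomialFun, pow_add, Finset.prod_mul_distrib]

lemma monomialFun_single (i : σ) (k : ℕ) :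
    monomialFun F (Finsupp.single i k) = coordFun F i ^ k := by
  classical
  ext x
  refine (Finset.prod_eq_single i (fun j _ hj ↦ ?_) (by simp)).trans (by simp [coordFun])
  rw [Finsupp.single_eq_of_ne hj, pow_zero]

lemma eval_monomial_eq (e : σ →₀ ℕ) (c : F) (x : σ → F) :
    MvPolynomial.eval x (MvPolynomial.monomial e c) = c * monomialFun F e x := by
  rw [MvPolynomial.eval_monomial, Finsupp.prod_fintype _ _ (fun _ ↦ pow_zero _)]
  rfl

/-- The generalized Reed–Muller code: the space of functions on the grid `σ → F` that are
polynomial of total degree at most `d`. -/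
def lowDegree (F σ : Type*) [Field F] [Fintype σ] (d : ℕ) : Submodule F ((σ → F) → F) :=
  Submodule.span F (monomialFun F '' {e | e.degree ≤ d})

lemma monomialFun_mem_lowDegree {d : ℕ} {e : σ →₀ ℕ} (h : e.degree ≤ d) :
    monomialFun F e ∈ lowDegree F σ d :=
  Submodule.subset_span ⟨e, h, rfl⟩

lemma lowDegree_le_iff {d : ℕ} {S : Submodule F ((σ → F) → F)} :
    lowDegree F σ d ≤ S ↔ ∀ e : σ →₀ ℕ, e.degree ≤ d → monomialFun F e ∈ S := by
  simp [lowDegree, Submodule.span_le, Set.subset_def]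

instance (d : ℕ) : FiniteDimensional F (lowDegree F σ d) :=
  FiniteDimensional.span_of_finite F ((Finsupp.finite_of_degree_le d).image _)

@[gcongr]
lemma lowDegree_mono {a b : ℕ} (h : a ≤ b) : lowDegree F σ a ≤ lowDegree F σ b :=
  lowDegree_le_iff.2 fun _ he ↦ monomialFun_mem_lowDegree (he.trans h)

lemma one_mem_lowDegree (d : ℕ) : (1 : (σ → F) → F) ∈ lowDegree F σ d :=
  monomialFun_zero (F := F) (σ := σ) ▸ monomialFun_mem_lowDegree (by simp)

lemma mul_mem_lowDegree {a b : ℕ} {p q : (σ → F) → F} (hp : p ∈ lowDegree F σ a)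
    (hq : q ∈ lowDegree F σ b) : p * q ∈ lowDegree F σ (a + b) := by
  suffices h : lowDegree F σ a * lowDegree F σ b ≤ lowDegree F σ (a + b) from
    h (Submodule.mul_mem_mul hp hq)
  rw [lowDegree, lowDegree, Submodule.span_mul_span, Submodule.span_le]
  rintro _ ⟨_, ⟨e, he, rfl⟩, _, ⟨f, hf, rfl⟩, rfl⟩
  rw [SetLike.mem_coe]
  beta_reduce
  rw [← monomialFun_add]
  exact monomialFun_mem_lowDegree (by simpa using add_le_add he hf)

lemma coordFun_pow_mem_lowDegree (i : σ) (k : ℕ) : coordFun F i ^ k ∈ lowDegree F σ k :=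
  monomialFun_single (F := F) i k ▸ monomialFun_mem_lowDegree (by simp)

lemma coordFun_mem_lowDegree (i : σ) : coordFun F i ∈ lowDegree F σ 1 :=
  pow_one (coordFun F i) ▸ coordFun_pow_mem_lowDegree i 1

section FiniteField

variable [Fintype F]

lemma exists_monomialFun_eq_of_card_le {e : σ →₀ ℕ} {i : σ} (hi : Fintype.card F ≤ e i) :
    ∃ f : σ →₀ ℕ, f.degree < e.degree ∧ monomialFun F f = monomialFun F e := by
  classical
  have hq : 1 < Fintype.card F := Fintype.one_lt_card
  obtain ⟨g, rfl⟩ : ∃ g, e = g + Finsupp.single i (Fintype.card F) :=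
    ⟨_, (tsub_add_cancel_of_le (Finsupp.single_le_iff.2 hi)).symm⟩
  refine ⟨g + Finsupp.single i 1, by simpa using hq, ?_⟩
  rw [monomialFun_add, monomialFun_add, monomialFun_single, monomialFun_single, pow_one,
    coordFun_pow_card]

lemma exists_reduced_monomialFun_eq (e : σ →₀ ℕ) :
    ∃ f : σ →₀ ℕ, f.degree ≤ e.degree ∧ (∀ i, f i < Fintype.card F) ∧
      monomialFun F f = monomialFun F e := by
  induction hn : e.degree using Nat.strong_induction_on generalizing e with
  | _ n ih =>
    subst hn
    by_cases he : ∀ i, e i < Fintype.card F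
    · exact ⟨e, le_rfl, he, rfl⟩
    · obtain ⟨i, hi⟩ := not_forall.1 he
      obtain ⟨f, hfe, hf⟩ := exists_monomialFun_eq_of_card_le (not_lt.1 hi)
      obtain ⟨g, hgf, hg, hgm⟩ := ih _ hfe f rfl
      exact ⟨g, hgf.trans hfe.le, hg, hgm.trans hf⟩

lemma mem_lowDegree_iff_exists_mvPolynomial {d : ℕ} {g : (σ → F) → F} :
    g ∈ lowDegree F σ d ↔ ∃ P : MvPolynomial σ F, P.totalDegree ≤ d ∧
      (∀ i, P.degreeOf i ≤ Fintype.card F - 1) ∧ ∀ x, g x = MvPolynomial.eval x P := by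
  constructor
  · intro hg
    induction hg using Submodule.span_induction with
    | mem _ h =>
      obtain ⟨e, he, rfl⟩ := h
      obtain ⟨f, hfe, hf, hfm⟩ := exists_reduced_monomialFun_eq (F := F) e
      refine ⟨.monomial f 1, ?_, fun i ↦ ?_, fun x ↦ ?_⟩
      · exact (MvPolynomial.totalDegree_monomial_le f (1 : F)).trans (hfe.trans he)
      · rw [MvPolynomial.degreeOf_monomial_eq f i one_ne_zero]
        exact Nat.le_sub_one_of_lt (hf i)
      · rw [eval_monomial_eq, one_mul, hfm]
    | zero => exact ⟨0, by simp⟩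
    | add g h _ _ hg hh =>
      obtain ⟨P, hPd, hPi, hP⟩ := hg
      obtain ⟨Q, hQd, hQi, hQ⟩ := hh
      refine ⟨P + Q, (MvPolynomial.totalDegree_add P Q).trans (max_le hPd hQd), fun i ↦ ?_,
        fun x ↦ by simp [hP, hQ]⟩
      exact (MvPolynomial.degreeOf_add_le i P Q).trans (max_le (hPi i) (hQi i))
    | smul c g _ hg =>
      obtain ⟨P, hPd, hPi, hP⟩ := hg
      refine ⟨MvPolynomial.C c * P, ?_,
        fun i ↦ (MvPolynomial.degreeOf_C_mul_le P i c).trans (hPi i),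
        fun x ↦ ?_⟩
      · refine (MvPolynomial.totalDegree_mul (MvPolynomial.C c) P).trans ?_
        rwa [MvPolynomial.totalDegree_C, zero_add]
      · rw [Pi.smul_apply, smul_eq_mul, hP x, map_mul, MvPolynomial.eval_C]
  · rintro ⟨P, hPd, -, hP⟩
    have hg : g = ∑ e ∈ P.support, P.coeff e • monomialFun F e := by
      ext x
      rw [hP x, MvPolynomial.eval_eq', Finset.sum_apply]
      rfl
    rw [hg]
    refine Submodule.sum_mem _ fun e he ↦ Submodule.smul_mem _ _ (monomialFun_mem_lowDegree ?_)
    exact (MvPolynomial.le_totalDegree he).trans hPd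

end FiniteField

end Monomials

section LinearAlgebra

variable {K V W W' : Type*} [Field K] [AddCommGroup V] [Module K V] [AddCommGroup W] [Module K W]
  [AddCommGroup W'] [Module K W']

lemma finrank_range_le_of_ker_le [FiniteDimensional K V] {f : V →ₗ[K] W} {g : V →ₗ[K] W'}
    (h : f.ker ≤ g.ker) : Module.finrank K g.range ≤ Module.finrank K f.range := by
  have hf := f.finrank_range_add_finrank_ker
  have hg := g.finrank_range_add_finrank_ker
  have := Submodule.finrank_mono h
  lia

lemma finrank_range_sub_le [FiniteDimensional K V] (f g : V →ₗ[K] W) :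
    Module.finrank K (f - g).range ≤ Module.finrank K f.range + Module.finrank K g.range := by
  have hle : (f - g).range ≤ f.range ⊔ g.range := by
    rintro _ ⟨v, rfl⟩
    exact sub_mem (Submodule.mem_sup_left ⟨v, rfl⟩) (Submodule.mem_sup_right ⟨v, rfl⟩)
  exact (Submodule.finrank_mono hle).trans (Submodule.finrank_add_le_finrank_add_finrank _ _)

end LinearAlgebra

section Hankel

variable {F σ : Type*} [Field F] [Fintype σ]

/-- The Hankel form of a functional `φ` on functions: the bilinear form `(p, q) ↦ φ (p * q)` on
the functions of degree at most `d`. -/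
def hankelForm (φ : Module.Dual F ((σ → F) → F)) (d : ℕ) :
    LinearMap.BilinForm F (lowDegree F σ d) :=
  ((LinearMap.mul F ((σ → F) → F)).compr₂ φ).domRestrict₁₂ _ _

@[simp]
lemma hankelForm_apply (φ : Module.Dual F ((σ → F) → F)) {d : ℕ} (p q : lowDegree F σ d) :
    hankelForm φ d p q = φ (p * q) :=
  rfl

/-- The rank of the Hankel form of `φ` in degree `d`. -/
noncomputable def hankelRank (φ : Module.Dual F ((σ → F) → F)) (d : ℕ) : ℕ :=
  Module.finrank F (hankelForm φ d).range

/-- The functions of degree at most `a` that `φ` pairs to zero with all functions of degree at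
most `b`: the kernel of the rectangular Hankel form. -/
def hankelKer (φ : Module.Dual F ((σ → F) → F)) (a b : ℕ) : Submodule F ((σ → F) → F) :=
  lowDegree F σ a ⊓
    (lowDegree F σ b).orthogonalBilin ((LinearMap.mul F ((σ → F) → F)).compr₂ φ)

variable {φ : Module.Dual F ((σ → F) → F)}

lemma mem_hankelKer {a b : ℕ} {p : (σ → F) → F} :
    p ∈ hankelKer φ a b ↔ p ∈ lowDegree F σ a ∧ ∀ q ∈ lowDegree F σ b, φ (q * p) = 0 :=
  Iff.rfl

@[gcongr]
lemma hankelKer_mono {a a' b b' : ℕ} (ha : a ≤ a') (hb : b' ≤ b) :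
    hankelKer φ a b ≤ hankelKer φ a' b' := by
  unfold hankelKer
  gcongr

lemma hankelKer_le_ker {a b : ℕ} : hankelKer φ a b ≤ φ.ker := fun p hp ↦ by
  simpa using (mem_hankelKer.1 hp).2 1 (one_mem_lowDegree b)

lemma mul_mem_hankelKer {a b k : ℕ} {m p : (σ → F) → F} (hm : m ∈ lowDegree F σ k)
    (hp : p ∈ hankelKer φ a (b + k)) : m * p ∈ hankelKer φ (k + a) b := by
  refine ⟨mul_mem_lowDegree hm hp.1, fun q hq ↦ ?_⟩
  rw [LinearMap.compr₂_apply, LinearMap.mul_apply', ← mul_assoc]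
  exact hp.2 _ (mul_mem_lowDegree hq hm)

lemma mem_hankelKer_of_hankelForm_eq_zero {d : ℕ} {p : lowDegree F σ d}
    (h : hankelForm φ d p = 0) : (p : (σ → F) → F) ∈ hankelKer φ d d :=
  mem_hankelKer.2 ⟨p.2, fun q hq ↦ by
    rw [mul_comm]
    exact LinearMap.congr_fun h ⟨q, hq⟩⟩

lemma hankelForm_isSymm (φ : Module.Dual F ((σ → F) → F)) (d : ℕ) : (hankelForm φ d).IsSymm :=
  ⟨fun p q ↦ by simp [mul_comm]⟩

lemma hankelRank_sub_le (φ ψ : Module.Dual F ((σ → F) → F)) (d : ℕ) :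
    hankelRank (φ - ψ) d ≤ hankelRank φ d + hankelRank ψ d := by
  have h : hankelForm (φ - ψ) d = hankelForm φ d - hankelForm ψ d := rfl
  rw [hankelRank, h]
  exact finrank_range_sub_le _ _

lemma hankelRank_dotProductBilin_le [Fintype F] [DecidableEq F] [DecidableEq σ]
    (β : (σ → F) → F) (d : ℕ) : hankelRank (dotProductBilin F F β) d ≤ hammingNorm β := by
  let restr : lowDegree F σ d →ₗ[F] {x // β x ≠ 0} → F :=
    LinearMap.funLeft F F Subtype.val ∘ₗ (lowDegree F σ d).subtype
  have hker : restr.ker ≤ (hankelForm (dotProductBilin F F β) d).ker := by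
    intro p hp
    refine LinearMap.ext fun q ↦ Finset.sum_eq_zero fun x _ ↦ ?_
    by_cases hx : β x = 0
    · rw [hx, zero_mul]
    · have hpx : (p : (σ → F) → F) x = 0 := congrFun hp ⟨x, hx⟩
      simp [hpx]
  calc hankelRank (dotProductBilin F F β) d
      ≤ Module.finrank F restr.range := finrank_range_le_of_ker_le hker
    _ ≤ Module.finrank F ({x // β x ≠ 0} → F) := Submodule.finrank_le _
    _ = hammingNorm β := by rw [Module.finrank_pi, Fintype.card_subtype, hammingNorm]

lemma finrank_le_hankelRank_of_disjoint {C : Submodule F ((σ → F) → F)} {d : ℕ}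
    (hC : C ≤ lowDegree F σ d) (hdisj : Disjoint (hankelKer φ d d) C) :
    Module.finrank F C ≤ hankelRank φ d := by
  refine LinearMap.finrank_le_finrank_of_injective
    (f := (hankelForm φ d).rangeRestrict ∘ₗ Submodule.inclusion hC) ?_
  refine (injective_iff_map_eq_zero _).2 fun c hc ↦ Subtype.ext ?_
  refine Submodule.disjoint_def.1 hdisj _ ?_ c.2
  exact mem_hankelKer_of_hankelForm_eq_zero (congrArg Subtype.val hc)

lemma finrank_map_mkQ_hankelKer_le (φ : Module.Dual F ((σ → F) → F)) (d : ℕ) :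
    Module.finrank F ((lowDegree F σ d).map (hankelKer φ d d).mkQ) ≤ hankelRank φ d := by
  rw [← LinearMap.range_domRestrict]
  refine finrank_range_le_of_ker_le fun p hp ↦ ?_
  simpa using mem_hankelKer_of_hankelForm_eq_zero hp

end Hankel

section LeadingMonomials

variable {F σ : Type*} [Field F] [Fintype σ] [LinearOrder σ]

/-- The span of the monomials that precede `e` in the degree-lexicographic order. -/
def lowerSpan (F : Type*) [Field F] (e : σ →₀ ℕ) : Submodule F ((σ → F) → F) :=
  Submodule.span F (monomialFun F '' {f | toDegLex f < toDegLex e})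

lemma monomialFun_mem_lowerSpan {e f : σ →₀ ℕ} (h : toDegLex f < toDegLex e) :
    monomialFun F f ∈ lowerSpan F e :=
  Submodule.subset_span ⟨f, h, rfl⟩

lemma monomialFun_mem_lowerSpan_of_degree_lt {e f : σ →₀ ℕ} (h : f.degree < e.degree) :
    monomialFun F f ∈ lowerSpan F e :=
  monomialFun_mem_lowerSpan (Finsupp.DegLex.lt_iff.2 (Or.inl h))

lemma lowerSpan_le_lowDegree (e : σ →₀ ℕ) : lowerSpan F e ≤ lowDegree F σ e.degree :=
  Submodule.span_mono (Set.image_mono fun _ hf ↦ Finsupp.DegLex.monotone_degree (le_of_lt hf))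

lemma lowDegree_le_of_lowerSpan_le {d : ℕ} {S : Submodule F ((σ → F) → F)}
    (h : ∀ e : σ →₀ ℕ, e.degree ≤ d → lowerSpan F e ≤ S → monomialFun F e ∈ S) :
    lowDegree F σ d ≤ S := by
  refine lowDegree_le_iff.2 fun e he ↦ ?_
  induction hx : toDegLex e using WellFoundedLT.induction generalizing e with
  | _ x ih =>
    subst hx
    refine h e he (Submodule.span_le.2 ?_)
    rintro _ ⟨f, hf, rfl⟩
    exact ih _ hf f ((Finsupp.DegLex.monotone_degree (le_of_lt hf)).trans he) rfl

lemma monomialFun_mul_mem_lowerSpan (g : σ →₀ ℕ) {f : σ →₀ ℕ} {w : (σ → F) → F}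
    (hw : w ∈ lowerSpan F f) : monomialFun F g * w ∈ lowerSpan F (g + f) := by
  suffices h : lowerSpan F f ≤ (lowerSpan F (g + f)).comap (LinearMap.mulLeft F (monomialFun F g))
    from h hw
  rw [lowerSpan, Submodule.span_le]
  rintro _ ⟨e, he, rfl⟩
  rw [SetLike.mem_coe, Submodule.mem_comap, LinearMap.mulLeft_apply, ← monomialFun_add]
  refine monomialFun_mem_lowerSpan ?_
  rw [toDegLex_add, toDegLex_add]
  exact add_lt_add_right he _

lemma lt_card_of_monomialFun_notMem_lowerSpan [Fintype F] {e : σ →₀ ℕ}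
    (h : monomialFun F e ∉ lowerSpan F e) (i : σ) : e i < Fintype.card F := by
  by_contra! hi
  obtain ⟨f, hfe, hf⟩ := exists_monomialFun_eq_of_card_le hi
  exact h (hf ▸ monomialFun_mem_lowerSpan_of_degree_lt hfe)

variable {φ : Module.Dual F ((σ → F) → F)}

lemma card_le_hankelRank_of_notMem {d : ℕ} (D : Finset (σ →₀ ℕ)) (hD : ∀ f ∈ D, f.degree ≤ d)
    (h : ∀ f ∈ D, monomialFun F f ∉ lowerSpan F f ⊔ hankelKer φ d d) :
    D.card ≤ hankelRank φ d := by
  classical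
  let v := (hankelKer φ d d).mkQ ∘ monomialFun F
  have hv : LinearIndepOn F v D := by
    clear hD
    induction D using Finset.induction_on_max_value (ι := σ →₀ ℕ) toDegLex with
    | empty => simp
    | insert a s has hmax ih =>
      rw [Finset.coe_insert, linearIndepOn_insert (mod_cast has)]
      refine ⟨ih fun f hf ↦ h f (Finset.mem_insert_of_mem hf), fun hspan ↦ ?_⟩
      rw [Set.image_comp, Submodule.span_image] at hspan
      have hmem := Submodule.mem_comap.2 hspan
      rw [Submodule.comap_map_mkQ, sup_comm] at hmem
      have hlower : Submodule.span F (monomialFun F '' s) ≤ lowerSpan F a :=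
        Submodule.span_mono (Set.image_mono fun f hf ↦
          (hmax f hf).lt_of_ne fun hfa ↦ has (toDegLex_injective hfa ▸ hf))
      exact h a (Finset.mem_insert_self a s) (sup_le_sup_right hlower _ hmem)
  calc D.card = Fintype.card D := (Fintype.card_coe D).symm
    _ = Module.finrank F (Submodule.span F (Set.range fun f : D ↦ v f)) :=
        (finrank_span_eq_card hv).symm
    _ ≤ Module.finrank F ((lowDegree F σ d).map (hankelKer φ d d).mkQ) := by
        refine Submodule.finrank_mono (Submodule.span_le.2 ?_)
        rintro _ ⟨f, rfl⟩
        exact ⟨_, monomialFun_mem_lowDegree (hD f f.2), rfl⟩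
    _ ≤ hankelRank φ d := finrank_map_mkQ_hankelKer_le φ d

lemma monomialFun_add_mem_lowerSpan_sup_hankelKer {a b : ℕ} {f : σ →₀ ℕ} (g : σ →₀ ℕ)
    (hf : monomialFun F f ∈ lowerSpan F f ⊔ hankelKer φ a (b + g.degree)) :
    monomialFun F (g + f) ∈ lowerSpan F (g + f) ⊔ hankelKer φ (g + f).degree b := by
  obtain ⟨w, hw, p, hp, hwp⟩ := Submodule.mem_sup.1 hf
  have hpf : p ∈ hankelKer φ f.degree (b + g.degree) := by
    refine ⟨?_, hp.2⟩
    rw [eq_sub_of_add_eq' hwp]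
    exact sub_mem (monomialFun_mem_lowDegree le_rfl) (lowerSpan_le_lowDegree f hw)
  rw [monomialFun_add, ← hwp, mul_add, map_add]
  exact Submodule.add_mem_sup (monomialFun_mul_mem_lowerSpan g hw)
    (mul_mem_hankelKer (monomialFun_mem_lowDegree le_rfl) hpf)

end LeadingMonomials

section DivisorCount

lemma one_add_pow_le_one_add_pow {m k : ℕ} (h : m ≤ k) : (1 + k) ^ m ≤ (1 + m) ^ k := by
  rcases Nat.eq_zero_or_pos m with rfl | hm
  · simp
  have hk : (0 : ℝ) < k := mod_cast hm.trans_le h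
  have hbern : (1 + (k : ℝ)) ^ ((m : ℝ) / k) ≤ 1 + m := by
    have := rpow_one_add_le_one_add_mul_self (s := (k : ℝ)) (p := (m : ℝ) / k) (by linarith)
      (by positivity) (by rw [div_le_one hk]; exact_mod_cast h)
    rwa [div_mul_cancel₀ _ hk.ne'] at this
  have hpow : (1 + (k : ℝ)) ^ m ≤ (1 + (m : ℝ)) ^ k := by
    calc (1 + (k : ℝ)) ^ m = ((1 + (k : ℝ)) ^ ((m : ℝ) / k)) ^ k := by
          rw [← Real.rpow_mul_natCast (by positivity), div_mul_cancel₀ _ hk.ne', Real.rpow_natCast]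
      _ ≤ (1 + (m : ℝ)) ^ k := by gcongr
  exact_mod_cast hpow

lemma pow_degree_le_card_Iic_pow {σ : Type*} [DecidableEq σ] {q : ℕ} {e : σ →₀ ℕ}
    (he : ∀ i, e i < q) : q ^ e.degree ≤ (Finset.Iic e).card ^ (q - 1) := by
  rw [Finsupp.card_Iic, ← Finset.prod_pow, Finsupp.degree_apply, ← Finset.prod_pow_eq_pow_sum]
  refine Finset.prod_le_prod' fun i _ ↦ ?_
  rw [Nat.card_Iic, add_comm (e i)]
  have := one_add_pow_le_one_add_pow (Nat.le_sub_one_of_lt (he i))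
  rwa [Nat.add_sub_cancel' (by have := he i; lia)] at this

end DivisorCount

section Flatness

variable {F σ : Type*} [Field F] [Fintype F] [Fintype σ] {φ : Module.Dual F ((σ → F) → F)}
  {d s : ℕ}

-- The divisors of a monomial avoiding the leading terms of the kernel avoid them too, and they
-- are too many for the rank.
lemma monomialFun_mem_lowerSpan_sup_hankelKer [LinearOrder σ]
    (hrk : hankelRank φ d ^ (Fintype.card F - 1) < Fintype.card F ^ (s + 1)) {e : σ →₀ ℕ} {b : ℕ}
    (hse : s < e.degree) (heb : e.degree + b ≤ d) :
    monomialFun F e ∈ lowerSpan F e ⊔ hankelKer φ e.degree b := by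
  by_contra he
  have hdiv : ∀ f ∈ Finset.Iic e, monomialFun F f ∉ lowerSpan F f ⊔ hankelKer φ d d := by
    intro f hf hmem
    obtain ⟨g, rfl⟩ := le_iff_exists_add'.1 (Finset.mem_Iic.1 hf)
    have hker : hankelKer φ d d ≤ hankelKer φ d (b + g.degree) :=
      hankelKer_mono le_rfl (by rw [map_add] at heb; lia)
    exact he (monomialFun_add_mem_lowerSpan_sup_hankelKer g (sup_le_sup_left hker _ hmem))
  have hdeg : ∀ f ∈ Finset.Iic e, f.degree ≤ d := fun f hf ↦
    (Finsupp.degree_mono (Finset.mem_Iic.1 hf)).trans (le_of_add_le_left heb)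
  have hq : ∀ i, e i < Fintype.card F :=
    lt_card_of_monomialFun_notMem_lowerSpan fun h ↦ he (Submodule.mem_sup_left h)
  refine hrk.not_ge ?_
  calc Fintype.card F ^ (s + 1)
      ≤ Fintype.card F ^ e.degree := Nat.pow_le_pow_right Fintype.card_pos hse
    _ ≤ (Finset.Iic e).card ^ (Fintype.card F - 1) := pow_degree_le_card_Iic_pow hq
    _ ≤ hankelRank φ d ^ (Fintype.card F - 1) :=
        Nat.pow_le_pow_left (card_le_hankelRank_of_notMem _ hdeg hdiv) _

lemma lowDegree_succ_le_lowDegree_sup_hankelKer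
    (hrk : hankelRank φ d ^ (Fintype.card F - 1) < Fintype.card F ^ (s + 1)) {a b : ℕ}
    (hsa : s ≤ a) (hab : a + 1 + b ≤ d) :
    lowDegree F σ (a + 1) ≤ lowDegree F σ a ⊔ hankelKer φ (a + 1) b := by
  classical
  obtain ⟨_⟩ : Nonempty (LinearOrder σ) := ⟨linearOrderOfSTO WellOrderingRel⟩
  refine lowDegree_le_of_lowerSpan_le fun e he hlower ↦ ?_
  rcases he.lt_or_eq with hlt | heq
  · exact Submodule.mem_sup_left (monomialFun_mem_lowDegree (Nat.lt_succ_iff.1 hlt))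
  · have hmem := monomialFun_mem_lowerSpan_sup_hankelKer hrk (e := e) (b := b) (by lia) (by lia)
    rw [heq] at hmem
    exact sup_le hlower le_sup_right hmem

lemma hankelKer_le_hankelKer
    (hrk : hankelRank φ d ^ (Fintype.card F - 1) < Fintype.card F ^ (s + 1)) {a b b' : ℕ}
    (hsb : s ≤ b) (hbb' : b ≤ b') (hab : a + b' ≤ d) : hankelKer φ a b ≤ hankelKer φ a b' := by
  induction b', hbb' using Nat.le_induction with
  | base => exact le_rfl
  | succ b' hbb' ih =>
    refine (ih (by lia)).trans fun p hp ↦ ⟨hp.1, fun m hm ↦ ?_⟩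
    obtain ⟨m₀, hm₀, k, hk, rfl⟩ := Submodule.mem_sup.1
      (lowDegree_succ_le_lowDegree_sup_hankelKer hrk (b := a) (hsb.trans hbb') (by lia) hm)
    have hkp : φ (p * k) = 0 := hk.2 p hp.1
    rw [map_add, LinearMap.add_apply, hp.2 m₀ hm₀, zero_add, LinearMap.compr₂_apply,
      LinearMap.mul_apply', mul_comm, hkp]

lemma lowDegree_le_lowDegree_sup_hankelKer
    (hrk : hankelRank φ d ^ (Fintype.card F - 1) < Fintype.card F ^ (s + 1)) {a b : ℕ}
    (hsa : s ≤ a) (hab : a + b ≤ d) : lowDegree F σ a ≤ lowDegree F σ s ⊔ hankelKer φ a b := by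
  induction a, hsa using Nat.le_induction with
  | base => exact le_sup_left
  | succ a hsa ih =>
    refine (lowDegree_succ_le_lowDegree_sup_hankelKer hrk hsa hab).trans
      (sup_le ((ih (by lia)).trans ?_) le_sup_right)
    gcongr
    lia

end Flatness

section Layers

variable {σ : Type*} {q : ℕ}

lemma exists_add_eq_of_le_degree (hq : 2 ≤ q) {e : σ →₀ ℕ} (he : ∀ i, e i < q) {k : ℕ}
    (hk : k ≤ e.degree) : ∃ v w : σ →₀ ℕ, v + w = e ∧ (∀ i, v i = 0 ∨ w i = 0) ∧
      v.degree ≤ k ∧ k + 1 ≤ v.degree + (q - 1) := by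
  classical
  induction e using Finsupp.induction with
  | zero => exact ⟨0, 0, by simp, by simp, by simp, by simp_all; lia⟩
  | single_add a b f ha _ ih =>
    have hfa : f a = 0 := Finsupp.notMem_support_iff.1 ha
    have hbq : b < q := by simpa [hfa] using he a
    have hfq (i : σ) : f i < q := lt_of_le_of_lt (by simp) (he i)
    rw [map_add, Finsupp.degree_single] at hk
    rcases hk.lt_or_eq with hlt | rfl
    · rcases le_or_gt k f.degree with hkf | hkf
      · obtain ⟨v, w, rfl, hvw, hv, hkv⟩ := ih hfq hkf
        refine ⟨v, Finsupp.single a b + w, add_left_comm .., fun i ↦ ?_, hv, hkv⟩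
        rcases eq_or_ne i a with rfl | hia
        · exact Or.inl (Nat.eq_zero_of_add_eq_zero_right hfa)
        · simpa [Finsupp.single_eq_of_ne hia] using hvw i
      · refine ⟨f, Finsupp.single a b, add_comm .., fun i ↦ ?_, hkf.le, by lia⟩
        rcases eq_or_ne i a with rfl | hia
        · exact Or.inl hfa
        · exact Or.inr (Finsupp.single_eq_of_ne hia)
    · exact ⟨Finsupp.single a b + f, 0, by simp, by simp, by simp, by simp; lia⟩

lemma exists_layer (hq : 2 ≤ q) {e : σ →₀ ℕ} (he : ∀ i, e i < q) {k : ℕ}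
    (hk : 2 * k ≤ e.degree) :
    ∃ D : Finset (σ →₀ ℕ), (∀ f ∈ D, f ≤ e ∧ f.degree = k) ∧
      q ^ (k + 1) ≤ D.card ^ (q - 1) * q ^ (q - 1) := by
  classical
  obtain ⟨v, w, rfl, hvw, hvk, hkv⟩ := exists_add_eq_of_le_degree hq he (k := k) (by lia)
  rw [map_add] at hk
  have hcompl (n : σ →₀ ℕ) : ∃ m ≤ w, m.degree = k - n.degree :=
    Finsupp.exists_le_degree_eq w _ (by lia)
  choose m hmw hm using hcompl
  have hinj : Set.InjOn (fun n ↦ n + m n) (Finset.Iic v) := by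
    intro n hn n' hn' heq
    ext i
    have hi : n i + m n i = n' i + m n' i := DFunLike.congr_fun heq i
    have := (Finset.mem_Iic.1 hn) i
    have := (Finset.mem_Iic.1 hn') i
    have := hmw n i
    have := hmw n' i
    rcases hvw i with h | h <;> lia
  refine ⟨(Finset.Iic v).image fun n ↦ n + m n, ?_, ?_⟩
  · rw [Finset.forall_mem_image]
    intro n hn
    rw [Finset.mem_Iic] at hn
    have hnk : n.degree ≤ k := (Finsupp.degree_mono hn).trans hvk
    exact ⟨add_le_add hn (hmw n), by rw [map_add, hm, Nat.add_sub_cancel' hnk]⟩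
  · rw [Finset.card_image_of_injOn hinj]
    calc q ^ (k + 1) ≤ q ^ (v.degree + (q - 1)) := Nat.pow_le_pow_right (by lia) hkv
      _ = q ^ v.degree * q ^ (q - 1) := pow_add ..
      _ ≤ _ := Nat.mul_le_mul_right _
          (pow_degree_le_card_Iic_pow fun i ↦ lt_of_le_of_lt (by simp) (he i))

end Layers

section Vanishing

variable {F σ : Type*} [Field F] [Fintype F] [Fintype σ] {φ : Module.Dual F ((σ → F) → F)} {d : ℕ}

lemma map_monomialFun_eq_zero [LinearOrder σ] {e : σ →₀ ℕ} (hlower : lowerSpan F e ≤ φ.ker)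
    (hed : e.degree ≤ 2 * d)
    (hrk : hankelRank φ d ^ (Fintype.card F - 1) * Fintype.card F ^ (Fintype.card F - 1) <
      Fintype.card F ^ (e.degree / 2 + 1)) :
    φ (monomialFun F e) = 0 := by
  by_contra hne
  have hq : ∀ i, e i < Fintype.card F :=
    lt_card_of_monomialFun_notMem_lowerSpan fun h ↦ hne (hlower h)
  obtain ⟨D, hD, hcard⟩ := exists_layer Fintype.one_lt_card hq (k := e.degree / 2) (by lia)
  have hlead : ∀ f ∈ D, monomialFun F f ∉ lowerSpan F f ⊔ hankelKer φ d d := by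
    intro f hf hmem
    obtain ⟨hfe, hfdeg⟩ := hD f hf
    obtain ⟨g, rfl⟩ := le_iff_exists_add'.1 hfe
    have hker : hankelKer φ d d ≤ hankelKer φ d (0 + g.degree) :=
      hankelKer_mono le_rfl (by rw [map_add] at *; lia)
    exact hne (sup_le hlower hankelKer_le_ker
      (monomialFun_add_mem_lowerSpan_sup_hankelKer g (sup_le_sup_left hker _ hmem)))
  have hle : D.card ≤ hankelRank φ d :=
    card_le_hankelRank_of_notMem D (fun f hf ↦ by rw [(hD f hf).2]; lia) hlead
  exact hrk.not_ge (hcard.trans (by gcongr))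

lemma lowDegree_two_mul_le_ker {T : ℕ} (hT : lowDegree F σ T ≤ φ.ker)
    (hrk : hankelRank φ d ^ (Fintype.card F - 1) * Fintype.card F ^ (Fintype.card F - 1) <
      Fintype.card F ^ ((T + 1) / 2 + 1)) :
    lowDegree F σ (2 * d) ≤ φ.ker := by
  classical
  obtain ⟨_⟩ : Nonempty (LinearOrder σ) := ⟨linearOrderOfSTO WellOrderingRel⟩
  refine lowDegree_le_of_lowerSpan_le fun e he hlower ↦ ?_
  rcases le_or_gt e.degree T with heT | heT
  · exact hT (monomialFun_mem_lowDegree heT)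
  · refine map_monomialFun_eq_zero hlower he (hrk.trans_le (Nat.pow_le_pow_right ?_ ?_))
    · exact Fintype.card_pos
    · lia

end Vanishing

section JointEigenspaces

open Module Module.End Polynomial

variable {F σ V : Type*} [Field F] [Fintype F] [AddCommGroup V] [Module F V]

lemma nodal_univ_eq_X_pow_card_sub_X :
    Lagrange.nodal Finset.univ (id : F → F) = X ^ Fintype.card F - X := by
  have hmonic : (X ^ Fintype.card F - X : F[X]).Monic :=
    monic_X_pow_sub (by rw [degree_X]; exact_mod_cast Fintype.one_lt_card)
  have hcard : (X ^ Fintype.card F - X : F[X]).roots.card =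
      (X ^ Fintype.card F - X : F[X]).natDegree := by
    rw [FiniteField.roots_X_pow_card_sub_X, FiniteField.X_pow_card_sub_X_natDegree_eq _
      Fintype.one_lt_card]
    rfl
  rw [← prod_multiset_X_sub_C_of_monic_of_roots_card_eq hmonic hcard,
    FiniteField.roots_X_pow_card_sub_X]
  rfl

lemma iSup_eigenspace_eq_top {f : End F V} (hf : f ^ Fintype.card F = f) :
    ⨆ c, f.eigenspace c = ⊤ := by
  classical
  have hnodal : aeval f (Lagrange.nodal Finset.univ (id : F → F)) = 0 := by
    rw [nodal_univ_eq_X_pow_card_sub_X, map_sub, map_pow, aeval_X, hf, sub_self]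
  refine eq_top_iff.2 fun v _ ↦ ?_
  have hv : v = ∑ c : F, aeval f (Lagrange.basis Finset.univ id c) v := by
    rw [← LinearMap.sum_apply, ← map_sum (aeval f), Lagrange.sum_basis Function.injective_id.injOn
      Finset.univ_nonempty, map_one, Module.End.one_apply]
  rw [hv]
  refine Submodule.sum_mem _ fun c _ ↦ Submodule.mem_iSup_of_mem c ?_
  have hc : (X - C c) * Lagrange.basis Finset.univ id c =
      C (Lagrange.nodalWeight Finset.univ id c) * Lagrange.nodal Finset.univ id := by
    rw [Lagrange.basis_eq_prod_sub_inv_mul_nodal_div (Finset.mem_univ c), mul_left_comm, id,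
      EuclideanDomain.mul_div_cancel' (X_sub_C_ne_zero c)
      (Lagrange.X_sub_C_dvd_nodal id (Finset.mem_univ c))]
  have := congrArg (aeval f) hc
  simp only [map_mul, hnodal, mul_zero, map_sub, aeval_X, aeval_C] at this
  rw [mem_eigenspace_iff, ← sub_eq_zero]
  simpa using LinearMap.congr_fun this v

lemma maxGenEigenspace_eq_eigenspace_of_pow_card_eq [FiniteDimensional F V] {f : End F V}
    (hf : f ^ Fintype.card F = f) (c : F) : f.maxGenEigenspace c = f.eigenspace c := by
  have hsep : (X ^ Fintype.card F - X : F[X]).Separable :=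
    galois_poly_separable (ringChar F) _ (ringChar.dvd (FiniteField.cast_card_eq_zero F))
  have haeval : aeval f (X ^ Fintype.card F - X : F[X]) = 0 := by simp [hf]
  exact (isSemisimple_of_squarefree_aeval_eq_zero hsep.squarefree
    haeval).isFinitelySemisimple.maxGenEigenspace_eq_eigenspace c

variable [FiniteDimensional F V] {X : σ → End F V}

lemma iSup_iInf_eigenspace_eq_top (hcomm : Pairwise fun i j ↦ Commute (X i) (X j))
    (hX : ∀ i, X i ^ Fintype.card F = X i) :
    ⨆ x : σ → F, ⨅ i, (X i).eigenspace (x i) = ⊤ := by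
  simp_rw [← maxGenEigenspace_eq_eigenspace_of_pow_card_eq (hX _)]
  refine iSup_iInf_maxGenEigenspace_eq_top_of_iSup_maxGenEigenspace_eq_top_of_commute X hcomm
    fun i ↦ ?_
  simp_rw [maxGenEigenspace_eq_eigenspace_of_pow_card_eq (hX _)]
  exact iSup_eigenspace_eq_top (hX i)

lemma iSupIndep_iInf_eigenspace (hcomm : Pairwise fun i j ↦ Commute (X i) (X j))
    (hX : ∀ i, X i ^ Fintype.card F = X i) :
    iSupIndep fun x : σ → F ↦ ⨅ i, (X i).eigenspace (x i) := by
  simp_rw [← maxGenEigenspace_eq_eigenspace_of_pow_card_eq (hX _)]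
  refine independent_iInf_maxGenEigenspace_of_forall_mapsTo X fun i j c ↦
    mapsTo_maxGenEigenspace_of_comm ?_ c
  rcases eq_or_ne j i with rfl | hij
  · exact Commute.refl _
  · exact hcomm hij

end JointEigenspaces

section SparseRepresentation

variable {F σ V : Type*} [Field F] [AddCommGroup V] [Module F V] [Fintype σ]
  {X : σ → Module.End F V} {T : ℕ} {ν : (σ →₀ ℕ) → V}

lemma eq_sum_monomialFun_smul
    (hν : ∀ e i, e.degree < T → ν (e + Finsupp.single i 1) = X i (ν e)) {w : (σ → F) →₀ V}
    (hw : ∀ x, w x ∈ ⨅ i, (X i).eigenspace (x i)) (hw0 : (w.sum fun _ v ↦ v) = ν 0)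
    (e : σ →₀ ℕ) (he : e.degree ≤ T) : ν e = w.sum fun x v ↦ monomialFun F e x • v := by
  induction hn : e.degree generalizing e with
  | zero =>
    obtain rfl := (Finsupp.degree_eq_zero_iff e).1 hn
    simpa using hw0.symm
  | succ n ih =>
    obtain ⟨i, hi⟩ : ∃ i, e i ≠ 0 := by
      by_contra! h
      simp [show e = 0 from Finsupp.ext h] at hn
    obtain ⟨f, rfl⟩ : ∃ f, e = f + Finsupp.single i 1 :=
      ⟨_, (tsub_add_cancel_of_le (Finsupp.single_le_iff.2 (Nat.one_le_iff_ne_zero.2 hi))).symm⟩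
    have hf : f.degree = n := by simpa using hn
    rw [hν f i (by lia), ih f (by lia) hf, map_finsuppSum]
    refine Finsupp.sum_congr fun x _ ↦ ?_
    have hx : X i (w x) = x i • w x :=
      Module.End.mem_eigenspace_iff.1 ((Submodule.mem_iInf _).1 (hw x) i)
    rw [map_smul, hx, smul_smul, monomialFun_add, monomialFun_single, pow_one]
    rfl

lemma exists_dotProduct_monomialFun_eq [Fintype F] [DecidableEq F] [DecidableEq σ]
    [FiniteDimensional F V] (hcomm : Pairwise fun i j ↦ Commute (X i) (X j))
    (hX : ∀ i, X i ^ Fintype.card F = X i)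
    (hν : ∀ e i, e.degree < T → ν (e + Finsupp.single i 1) = X i (ν e)) (l : Module.Dual F V) :
    ∃ β : (σ → F) → F, hammingNorm β ≤ Module.finrank F V ∧
      ∀ e : σ →₀ ℕ, e.degree ≤ T → β ⬝ᵥ monomialFun F e = l (ν e) := by
  obtain ⟨w, hw, hw0⟩ := (Submodule.mem_iSup_iff_exists_finsupp _ (ν 0)).1
    (iSup_iInf_eigenspace_eq_top hcomm hX ▸ Submodule.mem_top)
  refine ⟨fun x ↦ l (w x), ?_, fun e he ↦ ?_⟩
  · have hind := iSupIndep_iInf_eigenspace hcomm hX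
    have := hind.fintypeNeBotOfFiniteDimensional
    refine le_trans ?_ hind.subtype_ne_bot_le_finrank
    rw [hammingNorm, ← Fintype.card_subtype]
    refine Fintype.card_subtype_mono _ _ fun x hx hbot ↦ hx ?_
    rw [(Submodule.eq_bot_iff _).1 hbot _ (hw x), map_zero]
  · rw [eq_sum_monomialFun_smul hν hw hw0 e he, map_finsuppSum,
      Finsupp.sum_fintype _ _ (by simp), dotProduct]
    simp [mul_comm]

end SparseRepresentation

section FlatExtension

lemma exists_projection_onto_complement {K V : Type*} [Field K] [AddCommGroup V] [Module K V]
    (P Q : Submodule K V) : ∃ C ≤ Q, ∃ N : V →ₗ[K] C, P ≤ N.ker ∧ (∀ c : C, N c = c) ∧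
      ∀ v ∈ Q ⊔ P, v - N v ∈ P := by
  obtain ⟨C, hdisj, hsup⟩ := IsModularLattice.exists_disjoint_and_sup_eq (inf_le_left : Q ⊓ P ≤ Q)
  have hCQ : C ≤ Q := hsup ▸ le_sup_right
  have hPC : Disjoint P C := Submodule.disjoint_def.2 fun v hvP hvC ↦
    Submodule.disjoint_def.1 hdisj v ⟨hCQ hvC, hvP⟩ hvC
  obtain ⟨P', hPP', hcompl⟩ : ∃ P', P ≤ P' ∧ IsCompl C P' :=
    hPC.exists_isCompl.imp fun _ h ↦ ⟨h.1, h.2.symm⟩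
  refine ⟨C, hCQ, C.projectionOnto P' hcompl, ?_, Submodule.projectionOnto_apply_left hcompl, ?_⟩
  · exact fun v hv ↦ Submodule.projectionOnto_apply_of_mem_right hcompl (hPP' hv)
  · have hQP : Q ⊔ P ≤ C ⊔ P := by
      rw [← hsup]
      exact sup_le (sup_le (inf_le_right.trans le_sup_right) le_sup_left) le_sup_right
    intro v hv
    obtain ⟨c, hc, p, hp, rfl⟩ := Submodule.mem_sup.1 (hQP hv)
    rw [map_add, Submodule.projectionOnto_apply_of_mem_left hcompl hc,
      Submodule.projectionOnto_apply_of_mem_right hcompl (hPP' hp)]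
    simpa using hp

variable {F σ : Type*} [Field F] {C : Submodule F ((σ → F) → F)}

/-- Multiplication by the `i`-th coordinate function on a space `C` of functions, followed by a
reduction `N` of all functions to `C`: a finite-dimensional model of the multiplication operator. -/
def compressedMul (N : ((σ → F) → F) →ₗ[F] C) (i : σ) : Module.End F C :=
  N ∘ₗ LinearMap.mulLeft F (coordFun F i) ∘ₗ C.subtype

lemma compressedMul_apply (N : ((σ → F) → F) →ₗ[F] C) (i : σ) (c : C) :
    compressedMul N i c = N (coordFun F i * c) :=
  rfl

/-- `N` is a normal form map for the functional `φ`: it maps functions into a space `C` of functions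
of degree at most `s`, fixes `C`, factors through the quotient by `hankelKer φ T s`, and changes
functions of degree at most `T` only by elements of that kernel. -/
structure IsNormalForm [Fintype σ] (φ : Module.Dual F ((σ → F) → F)) (s T : ℕ)
    (N : ((σ → F) → F) →ₗ[F] C) : Prop where
  le_lowDegree : C ≤ lowDegree F σ s
  apply_coe (c : C) : N c = c
  hankelKer_le_ker : hankelKer φ T s ≤ N.ker
  sub_apply_mem {p : (σ → F) → F} (hp : p ∈ lowDegree F σ T) : p - N p ∈ hankelKer φ T s

variable [Fintype σ] {φ : Module.Dual F ((σ → F) → F)} {d s T : ℕ}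
  {N : ((σ → F) → F) →ₗ[F] C}

lemma exists_isNormalForm [Fintype F]
    (hrk : hankelRank φ d ^ (Fintype.card F - 1) < Fintype.card F ^ (s + 1)) (hsT : s ≤ T)
    (hTd : T + s ≤ d) : ∃ (C : Submodule F ((σ → F) → F)) (N : ((σ → F) → F) →ₗ[F] C),
      IsNormalForm φ s T N := by
  obtain ⟨C, hC, N, hker, hN, hsub⟩ :=
    exists_projection_onto_complement (hankelKer φ T s) (lowDegree F σ s)
  exact ⟨C, N, hC, hN, hker, fun hp ↦
    hsub _ (lowDegree_le_lowDegree_sup_hankelKer hrk hsT hTd hp)⟩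

namespace IsNormalForm

lemma finrank_le (hN : IsNormalForm φ s T N) (hsT : s ≤ T) (hTd : T ≤ d) :
    Module.finrank F C ≤ hankelRank φ d := by
  have hsd : s ≤ d := hsT.trans hTd
  refine finrank_le_hankelRank_of_disjoint (hN.le_lowDegree.trans (lowDegree_mono hsd)) ?_
  refine Submodule.disjoint_def.2 fun c hc hcC ↦ ?_
  have hcT : c ∈ hankelKer φ T s :=
    ⟨lowDegree_mono hsT (hN.le_lowDegree hcC), (hankelKer_mono le_rfl hsd hc).2⟩
  exact congrArg Subtype.val ((hN.apply_coe ⟨c, hcC⟩).symm.trans (hN.hankelKer_le_ker hcT))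

variable [Fintype F]

lemma compressedMul_map (hN : IsNormalForm φ s T N)
    (hrk : hankelRank φ d ^ (Fintype.card F - 1) < Fintype.card F ^ (s + 1)) (hTd : T + s ≤ d)
    {a : ℕ} (hsa : s ≤ a) (haT : a < T) (i : σ) {p : (σ → F) → F} (hp : p ∈ lowDegree F σ a) :
    compressedMul N i (N p) = N (coordFun F i * p) := by
  have hmem : p - N p ∈ hankelKer φ a (s + 1) :=
    hankelKer_le_hankelKer hrk le_rfl (Nat.le_succ s) (by lia)
      ⟨sub_mem hp (lowDegree_mono hsa (hN.le_lowDegree (N p).2)),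
        (hN.sub_apply_mem (lowDegree_mono haT.le hp)).2⟩
  have hmul : coordFun F i * (p - N p) ∈ hankelKer φ T s :=
    hankelKer_mono (by lia) le_rfl (mul_mem_hankelKer (coordFun_mem_lowDegree i) hmem)
  rw [compressedMul_apply, eq_comm, ← sub_eq_zero, ← map_sub, ← mul_sub]
  exact hN.hankelKer_le_ker hmul

lemma compressedMul_pow_apply (hN : IsNormalForm φ s T N)
    (hrk : hankelRank φ d ^ (Fintype.card F - 1) < Fintype.card F ^ (s + 1)) (hTd : T + s ≤ d)
    {k : ℕ} (hk : s + k ≤ T) (i : σ) (c : C) :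
    (compressedMul N i ^ k) c = N (coordFun F i ^ k * c) := by
  induction k with
  | zero => simp [hN.apply_coe]
  | succ k ih =>
    have hmem : coordFun F i ^ k * c ∈ lowDegree F σ (k + s) :=
      mul_mem_lowDegree (coordFun_pow_mem_lowDegree i k) (hN.le_lowDegree c.2)
    rw [pow_succ', Module.End.mul_apply, ih (by lia),
      hN.compressedMul_map hrk hTd (by lia) (by lia) i hmem, ← mul_assoc, ← pow_succ']

lemma compressedMul_pow_card (hN : IsNormalForm φ s T N)
    (hrk : hankelRank φ d ^ (Fintype.card F - 1) < Fintype.card F ^ (s + 1)) (hTd : T + s ≤ d)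
    (hsT : s + Fintype.card F ≤ T) (i : σ) :
    compressedMul N i ^ Fintype.card F = compressedMul N i := by
  ext1 c
  rw [hN.compressedMul_pow_apply hrk hTd hsT, coordFun_pow_card, compressedMul_apply]

lemma commute_compressedMul (hN : IsNormalForm φ s T N)
    (hrk : hankelRank φ d ^ (Fintype.card F - 1) < Fintype.card F ^ (s + 1)) (hTd : T + s ≤ d)
    (hsT : s + 2 ≤ T) (i j : σ) : Commute (compressedMul N i) (compressedMul N j) := by
  have hmul (i j : σ) (c : C) :
      compressedMul N i (compressedMul N j c) = N (coordFun F i * (coordFun F j * c)) :=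
    hN.compressedMul_map hrk hTd (a := 1 + s) (by lia) (by lia) i
      (mul_mem_lowDegree (coordFun_mem_lowDegree j) (hN.le_lowDegree c.2))
  refine LinearMap.ext fun c ↦ ?_
  rw [Module.End.mul_apply, Module.End.mul_apply, hmul, hmul, mul_left_comm]

end IsNormalForm

lemma exists_lowDegree_le_ker_sub [Fintype F] [DecidableEq F] [DecidableEq σ]
    (hrk : hankelRank φ d ^ (Fintype.card F - 1) < Fintype.card F ^ (s + 1)) (hTd : T + s ≤ d)
    (hsT : s + Fintype.card F ≤ T) : ∃ β : (σ → F) → F, hammingNorm β ≤ hankelRank φ d ∧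
      lowDegree F σ T ≤ (φ - dotProductBilin F F β).ker := by
  have hq : 1 < Fintype.card F := Fintype.one_lt_card
  obtain ⟨C, N, hN⟩ := exists_isNormalForm hrk (by lia) hTd
  obtain ⟨β, hβ, hmon⟩ := exists_dotProduct_monomialFun_eq (T := T)
    (ν := fun e ↦ N (monomialFun F e)) (l := φ ∘ₗ C.subtype)
    (fun i j _ ↦ hN.commute_compressedMul hrk hTd (by lia) i j)
    (hN.compressedMul_pow_card hrk hTd hsT) fun e i he ↦ by
      rw [hN.compressedMul_map hrk hTd (le_max_left s e.degree) (by lia) i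
        (monomialFun_mem_lowDegree (le_max_right _ _)), monomialFun_add, monomialFun_single,
        pow_one, mul_comm]
  refine ⟨β, hβ.trans (hN.finrank_le (by lia) (by lia)), lowDegree_le_iff.2 fun e he ↦ ?_⟩
  have hφ : φ (monomialFun F e - N (monomialFun F e)) = 0 :=
    hankelKer_le_ker (hN.sub_apply_mem (monomialFun_mem_lowDegree he))
  rw [map_sub, sub_eq_zero] at hφ
  simp [hmon e he, hφ]

end FlatExtension

section Structure

variable {F σ : Type*} [Field F] [Fintype F] [DecidableEq F] [Fintype σ] [DecidableEq σ]
  {d s : ℕ}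

lemma exists_lowDegree_two_mul_le_ker_sub {φ : Module.Dual F ((σ → F) → F)}
    (hrk : hankelRank φ d ^ (Fintype.card F - 1) < Fintype.card F ^ (s + 1))
    (hsd : 3 * s + 4 * Fintype.card F ≤ d + 5) : ∃ β : (σ → F) → F,
      hammingNorm β ≤ hankelRank φ d ∧
        lowDegree F σ (2 * d) ≤ (φ - dotProductBilin F F β).ker := by
  have hq : 1 < Fintype.card F := Fintype.one_lt_card
  obtain ⟨T, rfl⟩ : ∃ T, d = T + s := ⟨d - s, by lia⟩
  obtain ⟨β, hβ, hT⟩ := exists_lowDegree_le_ker_sub hrk le_rfl (by lia)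
  refine ⟨β, hβ, lowDegree_two_mul_le_ker hT ?_⟩
  set q := Fintype.card F
  set ρ := hankelRank φ (T + s)
  have hdouble : hankelRank (φ - dotProductBilin F F β) (T + s) ≤ q * ρ :=
    calc hankelRank (φ - dotProductBilin F F β) (T + s)
        ≤ ρ + hankelRank (dotProductBilin F F β) (T + s) := hankelRank_sub_le _ _ _
      _ ≤ ρ + ρ := by gcongr; exact (hankelRank_dotProductBilin_le β _).trans hβ
      _ ≤ q * ρ := by rw [← two_mul]; gcongr; exact hq
  calc hankelRank (φ - dotProductBilin F F β) (T + s) ^ (q - 1) * q ^ (q - 1)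
      ≤ (q * ρ) ^ (q - 1) * q ^ (q - 1) := by gcongr
    _ = q ^ (2 * (q - 1)) * ρ ^ (q - 1) := by ring
    _ < q ^ (2 * (q - 1)) * q ^ (s + 1) := by gcongr
    _ = q ^ (2 * (q - 1) + (s + 1)) := (pow_add ..).symm
    _ ≤ q ^ ((T + 1) / 2 + 1) := Nat.pow_le_pow_right (by lia) (by lia)

lemma exists_hammingDist_le_hankelRank {α : (σ → F) → F}
    (hrk : hankelRank (dotProductBilin F F α) d ^ (Fintype.card F - 1) < Fintype.card F ^ (s + 1))
    (hsd : 3 * s + 4 * Fintype.card F ≤ d + 5) : ∃ g : (σ → F) → F,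
      (∀ h ∈ lowDegree F σ (2 * d), g ⬝ᵥ h = 0) ∧
        hammingDist α g ≤ hankelRank (dotProductBilin F F α) d := by
  obtain ⟨β, hβ, hker⟩ := exists_lowDegree_two_mul_le_ker_sub hrk hsd
  refine ⟨α - β, fun h hh ↦ ?_, ?_⟩
  · simpa [sub_dotProduct] using hker hh
  · rwa [hammingDist_comm, hammingDist_eq_hammingNorm, neg_sub, sub_add_cancel]

end Structure

section GaussSum

variable {F V : Type*} [Field F] [AddCommGroup V] [Module F V] [Fintype V]

lemma expect_addChar_dual [DecidableEq (Module.Dual F V)] {ψ : AddChar F ℂ} (hψ : ψ ≠ 1)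
    (f : Module.Dual F V) : 𝔼 v, ψ (f v) = if f = 0 then 1 else 0 := by
  classical
  have htriv : ψ.compAddMonoidHom f.toAddMonoidHom = 0 ↔ f = 0 := by
    refine ⟨fun h ↦ ?_, fun h ↦ by ext; simp [h]⟩
    by_contra hf
    obtain ⟨a, ha⟩ := AddChar.ne_one_iff.1 hψ
    obtain ⟨v, rfl⟩ := LinearMap.surjective hf a
    exact ha (DFunLike.congr_fun h v)
  calc 𝔼 v, ψ (f v) = 𝔼 v, ψ.compAddMonoidHom f.toAddMonoidHom v := rfl
    _ = if f = 0 then 1 else 0 := by rw [AddChar.expect_eq_ite]; simp only [htriv]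

variable [Fintype F]

lemma expect_ite_map_eq_zero {W : Type*} [AddCommGroup W] [Module F W] [DecidableEq W]
    (f : V →ₗ[F] W) : 𝔼 v, (if f v = 0 then 1 else 0 : ℂ) =
      ((Fintype.card F : ℂ) ^ Module.finrank F f.range)⁻¹ := by
  have hker : (Finset.univ.filter fun v ↦ f v = 0).card =
      Fintype.card F ^ Module.finrank F f.ker := by
    rw [← Nat.card_eq_fintype_card, ← Module.natCard_eq_pow_finrank, ← Fintype.card_subtype,
      ← Nat.card_eq_fintype_card]
    rfl
  have hq : (Fintype.card F : ℂ) ≠ 0 := by simp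
  rw [Fintype.expect_eq_sum_div_card, Finset.sum_boole, hker,
    Module.card_eq_pow_finrank (K := F) (V := V), ← f.finrank_range_add_finrank_ker, pow_add]
  push_cast
  field_simp

/-- Squaring and substituting `v = h + w` makes the phase linear in `w`. -/
lemma norm_expect_addChar_sq (hF : ringChar F ≠ 2) {ψ : AddChar F ℂ} (hψ : ψ ≠ 1)
    {B : LinearMap.BilinForm F V} (hB : B.IsSymm) :
    ‖𝔼 v, ψ (B v v)‖ ^ 2 = ((Fintype.card F : ℝ) ^ Module.finrank F B.range)⁻¹ := by
  classical
  have h2 : (2 : F) ≠ 0 := Ring.two_ne_zero hF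
  have hshift (h w : V) :
      ψ (B (h + w) (h + w)) * (starRingEnd ℂ) (ψ (B w w)) = ψ (B h h) * ψ (((2 : F) • B h) w) := by
    rw [← AddChar.map_neg_eq_conj, ← AddChar.map_add_eq_mul, ← AddChar.map_add_eq_mul]
    congr 1
    simp only [map_add, LinearMap.add_apply, LinearMap.smul_apply, smul_eq_mul, hB.eq w h]
    ring
  have hphase (h : V) : ψ (B h h) * 𝔼 w, ψ (((2 : F) • B h) w) = if B h = 0 then 1 else 0 := by
    simp only [expect_addChar_dual hψ, smul_eq_zero_iff_right h2]
    split_ifs with h0 <;> simp [h0]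
  have hsq : (𝔼 v, ψ (B v v)) * (starRingEnd ℂ) (𝔼 v, ψ (B v v)) =
      ((Fintype.card F : ℂ) ^ Module.finrank F B.range)⁻¹ :=
    calc (𝔼 v, ψ (B v v)) * (starRingEnd ℂ) (𝔼 v, ψ (B v v))
        = 𝔼 w, 𝔼 v, ψ (B v v) * (starRingEnd ℂ) (ψ (B w w)) := by
          rw [map_expect, Finset.expect_mul_expect, Finset.expect_comm]
      _ = 𝔼 w, 𝔼 h, ψ (B (h + w) (h + w)) * (starRingEnd ℂ) (ψ (B w w)) :=
          Finset.expect_congr rfl fun w _ ↦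
            (Fintype.expect_equiv (Equiv.addRight w) _ _ fun _ ↦ rfl).symm
      _ = 𝔼 h, ψ (B h h) * 𝔼 w, ψ (((2 : F) • B h) w) := by
          simp_rw [hshift, Finset.mul_expect]
          exact Finset.expect_comm ..
      _ = ((Fintype.card F : ℂ) ^ Module.finrank F B.range)⁻¹ := by
          simp_rw [hphase, expect_ite_map_eq_zero B]
  rw [Complex.mul_conj'] at hsq
  apply Complex.ofReal_injective
  push_cast
  exact hsq

end GaussSum

section Expectation

variable {F σ : Type*} [Field F] [Fintype F] [Fintype σ] [DecidableEq σ]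

noncomputable instance (d : ℕ) : Fintype (lowDegree F σ d) := Fintype.ofFinite _

lemma norm_expect_addChar_sq_eq (hF : ringChar F ≠ 2) {ψ : AddChar F ℂ} (hψ : ψ ≠ 1)
    (α : (σ → F) → F) (d : ℕ) :
    ‖𝔼 p : lowDegree F σ d, ψ (α ⬝ᵥ (p : (σ → F) → F) ^ 2)‖ ^ 2 =
      ((Fintype.card F : ℝ) ^ hankelRank (dotProductBilin F F α) d)⁻¹ := by
  simpa [pow_two, hankelRank] using
    norm_expect_addChar_sq hF hψ (hankelForm_isSymm (dotProductBilin F F α) d)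

end Expectation

section LargeDistance

variable {F σ : Type*} [Field F] [Fintype F] [DecidableEq F] [Fintype σ] [DecidableEq σ]
  {d : ℕ} {α : (σ → F) → F}

lemma rpow_le_hankelRank (hd : 12 * Fintype.card F ≤ d)
    (hα : ∀ g, (∀ h ∈ lowDegree F σ (2 * d), g ⬝ᵥ h = 0) →
      (Fintype.card F : ℝ) ^ (2 * d / (9 * (Fintype.card F - 1 : ℝ))) ≤ hammingDist α g) :
    (Fintype.card F : ℝ) ^ (2 * d / (9 * (Fintype.card F - 1 : ℝ))) ≤
      hankelRank (dotProductBilin F F α) d := by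
  by_contra! hlt
  have hq : 1 < Fintype.card F := Fintype.one_lt_card
  set q := Fintype.card F
  set ρ := hankelRank (dotProductBilin F F α) d
  obtain ⟨s, hs⟩ : ∃ s, (2 * d + 8) / 9 = s + 1 := ⟨(2 * d + 8) / 9 - 1, by lia⟩
  have hsR : 2 * (d : ℝ) ≤ 9 * ((s + 1 : ℕ) : ℝ) := by exact_mod_cast (by lia : 2 * d ≤ 9 * (s + 1))
  have hq' : ((q - 1 : ℕ) : ℝ) = q - 1 := by push_cast [hq.le]; ring
  have hq0 : (q : ℝ) - 1 ≠ 0 := sub_ne_zero.2 (by exact_mod_cast hq.ne')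
  have hρ : (ρ : ℝ) ^ (q - 1) < (q : ℝ) ^ (s + 1) :=
    calc (ρ : ℝ) ^ (q - 1)
        < ((q : ℝ) ^ (2 * d / (9 * (q - 1 : ℝ)))) ^ (q - 1) := by
          gcongr
          lia
      _ = (q : ℝ) ^ (2 * d / 9 : ℝ) := by
          rw [← Real.rpow_mul_natCast q.cast_nonneg, hq']
          congr 1
          field_simp
      _ ≤ (q : ℝ) ^ ((s + 1 : ℕ) : ℝ) :=
          Real.rpow_le_rpow_of_exponent_le (by exact_mod_cast hq.le) (by linarith)
      _ = (q : ℝ) ^ (s + 1) := Real.rpow_natCast _ _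
  obtain ⟨g, hg, hdist⟩ := exists_hammingDist_le_hankelRank (α := α) (d := d) (s := s)
    (by exact_mod_cast hρ) (by lia)
  exact hlt.not_ge ((hα g hg).trans (by exact_mod_cast hdist))

end LargeDistance

end ReedMuller

open ReedMuller in
theorem stmt9_general {F σ : Type*} [Field F] [Fintype F] [DecidableEq F] [Fintype σ]
    [DecidableEq σ] {d : ℕ} {α : (σ → F) → F} (hF : ringChar F ≠ 2) {ψ : AddChar F ℂ} (hψ : ψ ≠ 1)
    (hd : 12 * Fintype.card F ≤ d)
    (hα : ∀ g, (∀ h ∈ lowDegree F σ (2 * d), g ⬝ᵥ h = 0) →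
      (Fintype.card F : ℝ) ^ (2 * d / (9 * (Fintype.card F - 1 : ℝ))) ≤ hammingDist α g) :
    ‖𝔼 p : lowDegree F σ d, ψ (α ⬝ᵥ (p : (σ → F) → F) ^ 2)‖ ≤
      (Fintype.card F : ℝ) ^
        (-(1 / 2 * (Fintype.card F : ℝ) ^ (2 * d / (9 * (Fintype.card F - 1 : ℝ))))) := by
  have hq : (1 : ℝ) ≤ Fintype.card F := by exact_mod_cast Fintype.card_pos
  rw [← sq_le_sq₀ (norm_nonneg _) (by positivity), norm_expect_addChar_sq_eq hF hψ,
    ← Real.rpow_natCast, ← Real.rpow_neg (by positivity), ← Real.rpow_mul_natCast (by positivity)]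
  refine Real.rpow_le_rpow_of_exponent_le hq ?_
  have := rpow_le_hankelRank hd hα
  push_cast
  linarith

section TernaryGrid

open ReedMuller

variable {r d : ℕ}

lemma mem_polySet_iff_mem_lowDegree {g : Fn r} : g ∈ PolySet r d ↔ g ∈ lowDegree F3 (Fin r) d := by
  rw [mem_lowDegree_iff_exists_mvPolynomial, ZMod.card]
  rfl

lemma sum_polyFinset_div_card (f : Fn r → ℂ) :
    (∑ p ∈ polyFinset r d, f p) / ((polyFinset r d).card : ℂ) =
      𝔼 p : lowDegree F3 (Fin r) d, f p := by
  have hmem (p : Fn r) : p ∈ polyFinset r d ↔ p ∈ lowDegree F3 (Fin r) d :=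
    (Set.Finite.mem_toFinset _).trans mem_polySet_iff_mem_lowDegree
  rw [Fintype.expect_eq_sum_div_card, Finset.sum_subtype _ hmem, Fintype.card_of_subtype _ hmem]

lemma omega_isPrimitiveRoot : IsPrimitiveRoot ω 3 := by
  simpa [ω] using Complex.isPrimitiveRoot_exp 3 (by norm_num)

/-- The additive character `a ↦ ω ^ a` of `F3`. -/
noncomputable def omegaChar : AddChar F3 ℂ :=
  AddChar.zmodChar 3 omega_isPrimitiveRoot.pow_eq_one

lemma omegaChar_apply (a : F3) : omegaChar a = ω ^ a.val :=
  AddChar.zmodChar_apply _ a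

lemma omegaChar_ne_one : omegaChar ≠ 1 :=
  AddChar.ne_one_iff.2 ⟨1, by
    rw [omegaChar_apply, ZMod.val_one, pow_one]
    exact omega_isPrimitiveRoot.ne_one (by norm_num)⟩

lemma norm_expect_omegaChar_le (hd : 36 ≤ d) {α : Fn r}
    (hα : ∀ g ∈ dualSet r (PolySet r (2 * d)), (3 : ℝ) ^ ((d : ℝ) / 9) ≤ hammingD α g) :
    ‖𝔼 p : lowDegree F3 (Fin r) d, omegaChar (α ⬝ᵥ (p : Fn r) ^ 2)‖ ≤
      (3 : ℝ) ^ (-(1 / 2 * (3 : ℝ) ^ ((d : ℝ) / 9))) := by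
  have hcard : (Fintype.card F3 : ℝ) = 3 := by simp [ZMod.card]
  have hexp : 2 * (d : ℝ) / (9 * (3 - 1)) = d / 9 := by ring
  have hbound := stmt9_general (F := F3) (σ := Fin r) (d := d) (α := α)
    (by rw [ZMod.ringChar_zmod_n]; norm_num) omegaChar_ne_one (by rwa [ZMod.card])
  rw [hcard, hexp] at hbound
  exact hbound fun g hg ↦ hα g fun h hh ↦ hg h (mem_polySet_iff_mem_lowDegree.1 hh)

end TernaryGrid

/-- There exist `c > 0` and `d₀` such that for all `d ≥ d₀`, `r`, and `α : F₃^r → F₃`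
with `Δ(α, P_{r,2d}^⊥) > 3^{d/2}`, one has `|E_{p ∈ P_{r,d}}[ω^{⟨α,p²⟩}]| ≤ 3^{−c·3^{d/9}}`. -/
theorem stmt9 :
    ∃ (c : ℝ) (d₀ : ℕ), 0 < c ∧
      ∀ d : ℕ, d₀ ≤ d → ∀ r : ℕ, ∀ α : Fn r,
        (∀ g ∈ dualSet r (PolySet r (2 * d)), (3 : ℝ) ^ ((d : ℝ) / 2) < (hammingD α g : ℝ)) →
        ‖(∑ p ∈ polyFinset r d, ω ^ (dotF α (fun x => p x ^ 2)).val) /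
            ((polyFinset r d).card : ℂ)‖
          ≤ (3 : ℝ) ^ (-(c * (3 : ℝ) ^ ((d : ℝ) / 9))) := by
  refine ⟨1 / 2, 36, by norm_num, fun d hd r α hα ↦ ?_⟩
  rw [sum_polyFinset_div_card (fun p ↦ ω ^ (dotF α (fun x => p x ^ 2)).val)]
  simp_rw [← omegaChar_apply]
  refine norm_expect_omegaChar_le hd fun g hg ↦ le_trans ?_ (hα g hg).le
  gcongr <;> norm_num
end
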